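/- Let d ↦ n(d) be a function with n(d) → ∞ and d/n(d) → 0 as d → ∞. For each d, let X_1, …, X_{n(d)} be i.i.d. d-dimensional standard normal random vectors N_d(0, I). Let T_d be Tyler's M-estimator of the sample and T*_d = √(n(d)/d)(T_d − I). Then for every fixed integer m ≥ 1, (1/d)·tr((T*_d)^m) converges in probability to the m-th moment ∫ x^m dw(x) of the semicircle law as d → ∞ (which equals 0 for m odd and the Catalan number C_{m/2} for m even). -/

import Mathlib

open MeasureTheory ProbabilityTheory Filter Matrix

/-- The eigenvalues of a real symmetric `d × d` matrix, sorted in increasing order,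
so that `sortedEigs A i` is `λ_{i+1}(A)` with `λ_1(A) ≤ … ≤ λ_d(A)`
(junk value `0` if the matrix is not symmetric). -/
noncomputable def sortedEigs {d : ℕ} (A : Matrix (Fin d) (Fin d) ℝ) : Fin d → ℝ :=
  if h : A.IsHermitian then h.eigenvalues ∘ Tuple.sort h.eigenvalues else 0

/-- The spectral norm `‖A‖₂ = max (|λ_1(A)|, |λ_d(A)|)` of a symmetric matrix,
i.e. the largest absolute value of an eigenvalue. -/
noncomputable def specNorm {d : ℕ} (A : Matrix (Fin d) (Fin d) ℝ) : ℝ :=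
  ⨆ i : Fin d, |sortedEigs A i|

/-- `IsTyler X T` says that `T` is Tyler's M-estimator of the sample
`X : Fin n → (Fin d → ℝ)`: it is symmetric positive definite, normalized by
`tr T = d`, and satisfies Tyler's fixed-point equation
`T = (d/n) ∑_j (X_j X_jᵗ) / (X_jᵗ T⁻¹ X_j)`. -/
def IsTyler {d n : ℕ} (X : Fin n → Fin d → ℝ) (T : Matrix (Fin d) (Fin d) ℝ) : Prop :=
  T.PosDef ∧ T.trace = d ∧
    T = ((d : ℝ) / (n : ℝ)) •
      ∑ j : Fin n, (X j ⬝ᵥ T⁻¹ *ᵥ X j)⁻¹ • vecMulVec (X j) (X j)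

/-- Density of the semicircle law: `(1/(2π))·√(4 − x²)` on `[-2, 2]`, `0` elsewhere. -/
noncomputable def semicircleDensity (x : ℝ) : ℝ :=
  if x ∈ Set.Icc (-2 : ℝ) 2 then Real.sqrt (4 - x ^ 2) / (2 * Real.pi) else 0

/-!
Write `u_j = X_j / ‖X_j‖`, `Z = √(n/d) ((d/n) ∑_j u_j u_jᵗ - I)`, `T* = √(n/d) (T - I)`, and let
`W = (nd)^{-1/2} ∑_j X_j X_jᵗ - √(n/d) I` be the recentred Wishart matrix.

Gaussian integration by parts gives a recursion for the mixed moments `E ∏_k d⁻¹ tr W^k` that in the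
limit becomes the Catalan recursion and factorizes, so that `d⁻¹ tr W^m` converges in probability to
the semicircle moment.

Tyler's estimator depends only on the directions `u_j`. Expanding its equation around the identity
shows that `T - I` is the deviation of the scatter of the `u_j` from `I`, up to a quadratic error
and the term `(d/n) ∑_j (u_jᵗ (T - I) u_j) u_j u_jᵗ`. Since `tr (T - I) = 0`, the coefficients of
this term are centred, and nets in the spaces of vectors and of matrices bound its spectral norm by
`ε ‖T - I‖`, uniformly in `T`. Hence `T*` is bounded and `T* - Z` tends to zero in spectral norm.

Finally `W - Z = (nd)^{-1/2} ∑_j (‖X_j‖² - d) u_j u_jᵗ` has centred independent summands, as the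
length and the direction of a Gaussian vector are independent, so its Frobenius norm is bounded in
mean square, that is, `o(√d)`. Two symmetric matrices at Frobenius distance `o(√d)`, one of them of
bounded spectral norm and the other with bounded moments, have the same limiting moments.
-/

/-! ### Quadratic forms of real symmetric matrices -/

section QuadFormBound

variable {ι : Type*} [Fintype ι] {A : Matrix ι ι ℝ} {c c' : ℝ}

/-- `A` is bounded by `c` in the sense of quadratic forms. For a symmetric matrix and `0 ≤ c` this
says that the spectral norm is at most `c`; it is stated with the dot product because vectors
here are plain functions `ι → ℝ`, which carry the supremum norm. -/
def QuadFormBound (A : Matrix ι ι ℝ) (c : ℝ) : Prop :=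
  ∀ v : ι → ℝ, |v ⬝ᵥ A *ᵥ v| ≤ c * (v ⬝ᵥ v)

lemma dotProduct_self_nonneg_real (v : ι → ℝ) : 0 ≤ v ⬝ᵥ v := by
  simpa using dotProduct_star_self_nonneg v

lemma dotProduct_sq_le (v w : ι → ℝ) : (v ⬝ᵥ w) ^ 2 ≤ (v ⬝ᵥ v) * (w ⬝ᵥ w) := by
  simpa only [dotProduct, sq] using Finset.sum_mul_sq_le_sq_mul_sq Finset.univ v w

lemma QuadFormBound.mono (h : QuadFormBound A c) (hc : c ≤ c') : QuadFormBound A c' := fun v =>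
  (h v).trans (mul_le_mul_of_nonneg_right hc (dotProduct_self_nonneg_real v))

lemma QuadFormBound.smul (h : QuadFormBound A c) (s : ℝ) : QuadFormBound (s • A) (|s| * c) := by
  intro v
  rw [smul_mulVec, dotProduct_smul, smul_eq_mul, abs_mul, mul_assoc]
  exact mul_le_mul_of_nonneg_left (h v) (abs_nonneg s)

end QuadFormBound

section Diagonalization

variable {ι : Type*} [Fintype ι] [DecidableEq ι] {A : Matrix ι ι ℝ} {c : ℝ}

lemma dotProduct_sub_one_mulVec (v : ι → ℝ) (A : Matrix ι ι ℝ) :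
    v ⬝ᵥ (A - 1) *ᵥ v = v ⬝ᵥ A *ᵥ v - v ⬝ᵥ v := by
  rw [sub_mulVec, dotProduct_sub, one_mulVec]

lemma exists_orthogonal_diagonalization (hA : A.IsHermitian) :
    ∃ U ∈ orthogonalGroup ι ℝ, A = U * diagonal hA.eigenvalues * Uᵀ := by
  refine ⟨hA.eigenvectorUnitary, hA.eigenvectorUnitary.2, ?_⟩
  simpa [Unitary.conjStarAlgAut_apply, star_eq_conjTranspose, Function.comp_def]
    using hA.spectral_theorem

variable {U : Matrix ι ι ℝ}

lemma dotProduct_conj_diagonal_mulVec (U : Matrix ι ι ℝ) (a v : ι → ℝ) :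
    v ⬝ᵥ (U * diagonal a * Uᵀ) *ᵥ v = ∑ k, a k * (Uᵀ *ᵥ v) k ^ 2 := by
  rw [← mulVec_mulVec, ← mulVec_mulVec, dotProduct_mulVec, ← mulVec_transpose]
  simp only [dotProduct, mulVec_diagonal]
  exact Finset.sum_congr rfl fun k _ => by ring

lemma dotProduct_self_eq_sum_sq_transpose_mulVec (hU : U ∈ orthogonalGroup ι ℝ) (v : ι → ℝ) :
    v ⬝ᵥ v = ∑ k, (Uᵀ *ᵥ v) k ^ 2 := by
  have h := dotProduct_conj_diagonal_mulVec U 1 v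
  simpa [(mem_orthogonalGroup_iff ι ℝ).1 hU] using h

lemma conj_diagonal_mul_conj_diagonal (hU : U ∈ orthogonalGroup ι ℝ) (a b : ι → ℝ) :
    U * diagonal a * Uᵀ * (U * diagonal b * Uᵀ) = U * diagonal (a * b) * Uᵀ := by
  calc U * diagonal a * Uᵀ * (U * diagonal b * Uᵀ)
      = U * diagonal a * (Uᵀ * U) * diagonal b * Uᵀ := by simp only [Matrix.mul_assoc]
    _ = U * diagonal (a * b) * Uᵀ := by
        rw [(mem_orthogonalGroup_iff' ι ℝ).1 hU, Matrix.mul_one, Matrix.mul_assoc U,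
          diagonal_mul_diagonal]
        rfl

lemma inv_conj_diagonal (hU : U ∈ orthogonalGroup ι ℝ) {a : ι → ℝ}
    (ha : ∀ k, a k ≠ 0) :
    (U * diagonal a * Uᵀ)⁻¹ = U * diagonal (fun k => (a k)⁻¹) * Uᵀ := by
  apply Matrix.inv_eq_right_inv
  have h_one : (a * fun k => (a k)⁻¹) = 1 := funext fun k => mul_inv_cancel₀ (ha k)
  rw [conj_diagonal_mul_conj_diagonal hU, h_one]
  simpa using (mem_orthogonalGroup_iff ι ℝ).1 hU

lemma dotProduct_conj_diagonal_mulVec_column (hU : U ∈ orthogonalGroup ι ℝ) (a : ι → ℝ)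
    (k : ι) :
    (U *ᵥ Pi.single k 1) ⬝ᵥ (U * diagonal a * Uᵀ) *ᵥ (U *ᵥ Pi.single k 1) = a k := by
  rw [dotProduct_conj_diagonal_mulVec, mulVec_mulVec, (mem_orthogonalGroup_iff' ι ℝ).1 hU,
    one_mulVec]
  simp [Pi.single_apply]

lemma dotProduct_self_column (hU : U ∈ orthogonalGroup ι ℝ) (k : ι) :
    (U *ᵥ Pi.single k 1) ⬝ᵥ (U *ᵥ Pi.single k 1) = 1 := by
  have h := dotProduct_conj_diagonal_mulVec_column hU 1 k
  simpa [(mem_orthogonalGroup_iff ι ℝ).1 hU] using h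

lemma quadFormBound_conj_diagonal_iff (hU : U ∈ orthogonalGroup ι ℝ) {a : ι → ℝ} :
    QuadFormBound (U * diagonal a * Uᵀ) c ↔ ∀ k, |a k| ≤ c := by
  refine ⟨fun h k => ?_, fun h v => ?_⟩
  · simpa only [dotProduct_conj_diagonal_mulVec_column hU, dotProduct_self_column hU, mul_one]
      using h (U *ᵥ Pi.single k 1)
  · rw [dotProduct_conj_diagonal_mulVec, dotProduct_self_eq_sum_sq_transpose_mulVec hU,
      Finset.mul_sum]
    refine (Finset.abs_sum_le_sum_abs _ _).trans (Finset.sum_le_sum fun k _ => ?_)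
    rw [abs_mul, abs_of_nonneg (sq_nonneg ((Uᵀ *ᵥ v) k))]
    exact mul_le_mul_of_nonneg_right (h k) (sq_nonneg _)

end Diagonalization

section Bounds

variable {ι : Type*} [Fintype ι] {A : Matrix ι ι ℝ} {c : ℝ}

lemma QuadFormBound.dotProduct_mulVec_self_le (hA : A.IsHermitian) (h : QuadFormBound A c)
    (v : ι → ℝ) : (A *ᵥ v) ⬝ᵥ (A *ᵥ v) ≤ c ^ 2 * (v ⬝ᵥ v) := by
  classical
  obtain ⟨U, hU, hdiag⟩ := exists_orthogonal_diagonalization hA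
  have h_eig : ∀ k, |hA.eigenvalues k| ≤ c := (quadFormBound_conj_diagonal_iff hU).1 (hdiag ▸ h)
  have h_sq : QuadFormBound (A * A) (c ^ 2) := by
    rw [hdiag, conj_diagonal_mul_conj_diagonal hU, quadFormBound_conj_diagonal_iff hU]
    intro k
    rw [Pi.mul_apply, abs_mul, ← sq]
    exact pow_le_pow_left₀ (abs_nonneg _) (h_eig k) 2
  have hAt : Aᵀ = A := by simpa using hA.eq
  calc (A *ᵥ v) ⬝ᵥ (A *ᵥ v) = v ⬝ᵥ (A * A) *ᵥ v := by
        rw [dotProduct_mulVec, ← mulVec_transpose, hAt, mulVec_mulVec, dotProduct_comm]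
    _ ≤ c ^ 2 * (v ⬝ᵥ v) := (le_abs_self _).trans (h_sq v)

lemma exists_unit_quadFormBound_abs [Nonempty ι] (hA : A.IsHermitian) :
    ∃ v : ι → ℝ, v ⬝ᵥ v = 1 ∧ QuadFormBound A |v ⬝ᵥ A *ᵥ v| := by
  classical
  obtain ⟨U, hU, hdiag⟩ := exists_orthogonal_diagonalization hA
  obtain ⟨k, hk⟩ := Finite.exists_max fun k => |hA.eigenvalues k|
  refine ⟨U *ᵥ Pi.single k 1, dotProduct_self_column hU k, ?_⟩
  generalize hA.eigenvalues = e at hdiag hk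
  rw [hdiag, dotProduct_conj_diagonal_mulVec_column hU, quadFormBound_conj_diagonal_iff hU]
  exact hk

variable [DecidableEq ι] {T : Matrix ι ι ℝ}

lemma sq_dotProduct_self_le_mul_inv (hT : T.PosDef) (v : ι → ℝ) :
    (v ⬝ᵥ v) ^ 2 ≤ (v ⬝ᵥ T *ᵥ v) * (v ⬝ᵥ T⁻¹ *ᵥ v) := by
  obtain ⟨U, hU, hdiag⟩ := exists_orthogonal_diagonalization hT.1
  have he : ∀ k, 0 < hT.1.eigenvalues k := hT.eigenvalues_pos
  generalize hT.1.eigenvalues = e at hdiag he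
  rw [hdiag, inv_conj_diagonal hU fun k => (he k).ne', dotProduct_conj_diagonal_mulVec,
    dotProduct_conj_diagonal_mulVec, dotProduct_self_eq_sum_sq_transpose_mulVec hU]
  refine Finset.sum_sq_le_sum_mul_sum_of_sq_le_mul _
    (fun k _ => mul_nonneg (he k).le (sq_nonneg _))
    (fun k _ => mul_nonneg (inv_pos.2 (he k)).le (sq_nonneg _)) fun k _ => le_of_eq ?_
  field_simp [(he k).ne']

lemma one_sub_sq_mul_inv_quadForm_le (hT : T.PosDef) {δ : ℝ} (h : QuadFormBound (T - 1) δ)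
    (v : ι → ℝ) : (1 - δ ^ 2) * (v ⬝ᵥ T⁻¹ *ᵥ v) ≤ 2 * (v ⬝ᵥ v) - v ⬝ᵥ T *ᵥ v := by
  obtain ⟨U, hU, hdiag⟩ := exists_orthogonal_diagonalization hT.1
  have he : ∀ k, 0 < hT.1.eigenvalues k := hT.eigenvalues_pos
  generalize hT.1.eigenvalues = e at hdiag he
  have hsub : T - 1 = U * diagonal (fun k => e k - 1) * Uᵀ := by
    have h_one : U * diagonal 1 * Uᵀ = 1 := by simpa using (mem_orthogonalGroup_iff ι ℝ).1 hU
    rw [hdiag, ← h_one, ← Matrix.sub_mul, ← Matrix.mul_sub, diagonal_sub]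
    rfl
  have hle : ∀ k, |e k - 1| ≤ δ := (quadFormBound_conj_diagonal_iff hU).1 (hsub ▸ h)
  rw [hdiag, inv_conj_diagonal hU fun k => (he k).ne', dotProduct_conj_diagonal_mulVec,
    dotProduct_conj_diagonal_mulVec, dotProduct_self_eq_sum_sq_transpose_mulVec hU,
    Finset.mul_sum, Finset.mul_sum, ← Finset.sum_sub_distrib]
  refine Finset.sum_le_sum fun k _ => ?_
  have h_eig : (1 - δ ^ 2) * (e k)⁻¹ ≤ 2 - e k := by
    rw [← div_eq_mul_inv, div_le_iff₀ (he k)]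
    nlinarith [sq_le_sq' (abs_le.1 (hle k)).1 (abs_le.1 (hle k)).2]
  linarith [mul_le_mul_of_nonneg_right h_eig (sq_nonneg ((Uᵀ *ᵥ v) k))]

-- Kantorovich's inequality for a spectrum contained in `[1 - δ, 1 + δ]`.
lemma one_sub_sq_mul_quadForm_mul_inv_le (hT : T.PosDef) {δ : ℝ} (h : QuadFormBound (T - 1) δ)
    (v : ι → ℝ) : (1 - δ ^ 2) * ((v ⬝ᵥ T *ᵥ v) * (v ⬝ᵥ T⁻¹ *ᵥ v)) ≤ (v ⬝ᵥ v) ^ 2 := by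
  have h_nonneg : 0 ≤ v ⬝ᵥ T *ᵥ v := by
    simpa using hT.posSemidef.dotProduct_mulVec_nonneg v
  have h_mul := mul_le_mul_of_nonneg_left (one_sub_sq_mul_inv_quadForm_le hT h v) h_nonneg
  nlinarith [sq_nonneg (v ⬝ᵥ T *ᵥ v - v ⬝ᵥ v)]

end Bounds

/-! ### Tyler's estimator of unit vectors close to its first-order approximation -/

section Tyler

variable {d n : ℕ} {u : Fin n → Fin d → ℝ} {T : Matrix (Fin d) (Fin d) ℝ} {z ε δ : ℝ}

/-- The weighted scatter matrix `(d/n) ∑_j c_j u_j u_jᵗ` of a sample. Tyler's equation says that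
`T` is the scatter matrix with weights `(u_jᵗ T⁻¹ u_j)⁻¹`. -/
noncomputable def weightedScatter (c : Fin n → ℝ) (u : Fin n → Fin d → ℝ) :
    Matrix (Fin d) (Fin d) ℝ :=
  ((d : ℝ) / n) • ∑ j, c j • vecMulVec (u j) (u j)

lemma dotProduct_weightedScatter_mulVec (c : Fin n → ℝ) (u : Fin n → Fin d → ℝ)
    (v w : Fin d → ℝ) :
    v ⬝ᵥ weightedScatter c u *ᵥ w = (d : ℝ) / n * ∑ j, c j * ((u j ⬝ᵥ v) * (u j ⬝ᵥ w)) := by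
  rw [weightedScatter, smul_mulVec, dotProduct_smul, sum_mulVec, dotProduct_sum, smul_eq_mul]
  congr 1
  refine Finset.sum_congr rfl fun j _ => ?_
  rw [smul_mulVec, dotProduct_smul, vecMulVec_mulVec, smul_eq_mul, dotProduct_smul,
    op_smul_eq_mul, dotProduct_comm v]

lemma dotProduct_weightedScatter_mulVec_self (c : Fin n → ℝ) (u : Fin n → Fin d → ℝ)
    (v : Fin d → ℝ) :
    v ⬝ᵥ weightedScatter c u *ᵥ v = (d : ℝ) / n * ∑ j, c j * (u j ⬝ᵥ v) ^ 2 := by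
  simp only [dotProduct_weightedScatter_mulVec, sq]

lemma weightedScatter_isHermitian (c : Fin n → ℝ) (u : Fin n → Fin d → ℝ) :
    (weightedScatter c u).IsHermitian := by
  simp [IsHermitian, weightedScatter, transpose_sum, transpose_vecMulVec]

lemma weightedScatter_add (c c' : Fin n → ℝ) (u : Fin n → Fin d → ℝ) :
    weightedScatter (c + c') u = weightedScatter c u + weightedScatter c' u := by
  simp [weightedScatter, add_smul, Finset.sum_add_distrib]

lemma weightedScatter_smul (s : ℝ) (c : Fin n → ℝ) (u : Fin n → Fin d → ℝ) :
    weightedScatter (s • c) u = s • weightedScatter c u := by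
  simp [weightedScatter, mul_smul, Finset.smul_sum, smul_comm s]

lemma dotProduct_weightedScatter_mulVec_self_mono {c c' : Fin n → ℝ} (h : c ≤ c')
    (u : Fin n → Fin d → ℝ) (v : Fin d → ℝ) :
    v ⬝ᵥ weightedScatter c u *ᵥ v ≤ v ⬝ᵥ weightedScatter c' u *ᵥ v := by
  rw [dotProduct_weightedScatter_mulVec_self, dotProduct_weightedScatter_mulVec_self]
  gcongr with j
  exact h j

lemma QuadFormBound.weightedScatter_of_abs {c : Fin n → ℝ}
    (h : QuadFormBound (weightedScatter |c| u) ε) : QuadFormBound (weightedScatter c u) ε := by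
  intro v
  refine le_trans (abs_le.2 ⟨?_, ?_⟩) ((le_abs_self _).trans (h v))
  · have h_le : -|c| ≤ c := fun j => neg_abs_le (c j)
    have h_neg := dotProduct_weightedScatter_mulVec_self_mono h_le u v
    rwa [← neg_one_smul ℝ |c|, weightedScatter_smul, smul_mulVec, dotProduct_smul, neg_one_smul]
      at h_neg
  · exact dotProduct_weightedScatter_mulVec_self_mono (le_abs_self c) u v

/-- The first-order correction `E ↦ (d/n) ∑_j |u_jᵗ E u_j| u_j u_jᵗ` in Tyler's equation at `1 + E`
contracts the spectral norm of trace-free symmetric matrices by the factor `ε`. -/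
def ScatterContracts (u : Fin n → Fin d → ℝ) (ε : ℝ) : Prop :=
  ∀ (E : Matrix (Fin d) (Fin d) ℝ) (δ : ℝ), E.IsHermitian → E.trace = 0 → QuadFormBound E δ →
    QuadFormBound (weightedScatter |fun j => u j ⬝ᵥ E *ᵥ u j| u) (ε * δ)

lemma inv_quadForm_pos (hT : T.PosDef) {w : Fin d → ℝ} (hw : w ⬝ᵥ w = 1) :
    0 < w ⬝ᵥ T⁻¹ *ᵥ w := by
  have hw0 : w ≠ 0 := by
    rintro rfl
    simp at hw
  simpa using hT.inv.dotProduct_mulVec_pos hw0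

lemma weightedScatter_quadForm_eq (hu : ∀ j, u j ⬝ᵥ u j = 1) (T : Matrix (Fin d) (Fin d) ℝ) :
    weightedScatter (fun j => u j ⬝ᵥ T *ᵥ u j) u =
      weightedScatter 1 u + weightedScatter (fun j => u j ⬝ᵥ (T - 1) *ᵥ u j) u := by
  rw [← weightedScatter_add]
  congr 1
  funext j
  simp [dotProduct_sub_one_mulVec, hu j]

namespace IsTyler

lemma eq_weightedScatter (hT : IsTyler u T) :
    T = weightedScatter (fun j => (u j ⬝ᵥ T⁻¹ *ᵥ u j)⁻¹) u :=
  hT.2.2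

lemma trace_sub_one (hT : IsTyler u T) : (T - 1).trace = 0 := by
  simp [hT.2.1]

lemma isHermitian_sub_one (hT : IsTyler u T) : (T - 1).IsHermitian :=
  hT.1.1.sub isHermitian_one

lemma quadForm_le (hu : ∀ j, u j ⬝ᵥ u j = 1) (hT : IsTyler u T) (v : Fin d → ℝ) :
    v ⬝ᵥ T *ᵥ v ≤ v ⬝ᵥ weightedScatter (fun j => u j ⬝ᵥ T *ᵥ u j) u *ᵥ v := by
  conv_lhs => rw [hT.eq_weightedScatter]
  refine dotProduct_weightedScatter_mulVec_self_mono (fun j => ?_) u v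
  have h := sq_dotProduct_self_le_mul_inv hT.1 (u j)
  rw [hu j, one_pow] at h
  rwa [inv_le_iff_one_le_mul₀ (inv_quadForm_pos hT.1 (hu j))]

lemma one_sub_sq_mul_le_quadForm (hu : ∀ j, u j ⬝ᵥ u j = 1) (hT : IsTyler u T)
    (hδ : QuadFormBound (T - 1) δ) (v : Fin d → ℝ) :
    (1 - δ ^ 2) * (v ⬝ᵥ weightedScatter (fun j => u j ⬝ᵥ T *ᵥ u j) u *ᵥ v) ≤ v ⬝ᵥ T *ᵥ v := by
  conv_rhs => rw [hT.eq_weightedScatter]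
  rw [← smul_eq_mul, ← dotProduct_smul, ← smul_mulVec, ← weightedScatter_smul]
  refine dotProduct_weightedScatter_mulVec_self_mono (fun j => ?_) u v
  have h := one_sub_sq_mul_quadForm_mul_inv_le hT.1 hδ (u j)
  rw [hu j, one_pow, ← mul_assoc] at h
  rwa [Pi.smul_apply, smul_eq_mul, ← one_div, le_div_iff₀ (inv_quadForm_pos hT.1 (hu j))]

end IsTyler

-- `t` is an extremal eigenvalue of `T - 1`, and `a`, `l` are the values at its eigenvector of the
-- zeroth-order and first-order parts of Tyler's equation.
lemma abs_le_two_mul_of_perturbation {t a l : ℝ} (hzε : z + 2 * ε ≤ 1 / 2) (hε : 0 ≤ ε)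
    (ht : -1 < t) (ha : |a| ≤ z) (hl : |l| ≤ ε * |t|) (h_upper : 1 + t ≤ 1 + a + l)
    (h_lower : (1 - t ^ 2) * (1 + a + l) ≤ 1 + t) : |t| ≤ 2 * z := by
  obtain ⟨ha₁, ha₂⟩ := abs_le.1 ha
  obtain ⟨hl₁, hl₂⟩ := abs_le.1 hl
  have hz : 0 ≤ z := (abs_nonneg a).trans ha
  rcases le_total 0 t with h0 | h0
  · rw [abs_of_nonneg h0] at *
    nlinarith
  · rw [abs_of_nonpos h0] at *
    have h_cancel : (1 - t) * (1 + a + l) ≤ 1 := by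
      refine le_of_mul_le_mul_left ?_ (by linarith : 0 < 1 + t)
      linarith
    nlinarith [mul_nonneg hε (neg_nonneg.2 h0), mul_nonneg hz (neg_nonneg.2 h0)]

namespace IsTyler

lemma quadFormBound_first_order (hT : IsTyler u T) (hL : ScatterContracts u ε)
    (hδ : QuadFormBound (T - 1) δ) :
    QuadFormBound (weightedScatter (fun j => u j ⬝ᵥ (T - 1) *ᵥ u j) u) (ε * δ) :=
  (hL _ _ hT.isHermitian_sub_one hT.trace_sub_one hδ).weightedScatter_of_abs

lemma exists_quadFormBound_sub_one (hu : ∀ j, u j ⬝ᵥ u j = 1) (hT : IsTyler u T)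
    (hzε : z + 2 * ε ≤ 1 / 2) (hε : 0 ≤ ε) (hz : 0 ≤ z)
    (hS : QuadFormBound (weightedScatter 1 u - 1) z) (hL : ScatterContracts u ε) :
    ∃ δ, 0 ≤ δ ∧ δ ≤ 2 * z ∧ QuadFormBound (T - 1) δ := by
  rcases isEmpty_or_nonempty (Fin d) with h_empty | h_nonempty
  · exact ⟨0, le_rfl, by positivity, fun v => by simp [dotProduct]⟩
  obtain ⟨v, hv, hδ⟩ := exists_unit_quadFormBound_abs hT.isHermitian_sub_one
  have ha := hS v
  have hl := hT.quadFormBound_first_order hL hδ v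
  have h_upper := hT.quadForm_le hu v
  have h_lower := hT.one_sub_sq_mul_le_quadForm hu hδ v
  have h_pos : 0 < v ⬝ᵥ T *ᵥ v := by
    have hv0 : v ≠ 0 := by
      rintro rfl
      simp at hv
    simpa using hT.1.dotProduct_mulVec_pos hv0
  rw [weightedScatter_quadForm_eq hu, add_mulVec, dotProduct_add] at h_upper h_lower
  rw [sq_abs] at h_lower
  simp only [hv, mul_one] at ha hl
  refine ⟨_, abs_nonneg _, abs_le_two_mul_of_perturbation hzε hε ?_ ha hl ?_ ?_, hδ⟩
  all_goals simp only [dotProduct_sub_one_mulVec, hv] at *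
  all_goals linarith

lemma quadFormBound_sub_one (hu : ∀ j, u j ⬝ᵥ u j = 1) (hT : IsTyler u T)
    (hzε : z + 2 * ε ≤ 1 / 2) (hε : 0 ≤ ε) (hz : 0 ≤ z)
    (hS : QuadFormBound (weightedScatter 1 u - 1) z) (hL : ScatterContracts u ε) :
    QuadFormBound (T - 1) (2 * z) := by
  obtain ⟨δ, -, hδz, hδ⟩ := hT.exists_quadFormBound_sub_one hu hzε hε hz hS hL
  exact hδ.mono hδz

lemma quadFormBound_sub_weightedScatter (hu : ∀ j, u j ⬝ᵥ u j = 1) (hT : IsTyler u T)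
    (hzε : z + 2 * ε ≤ 1 / 2) (hε : 0 ≤ ε) (hz : 0 ≤ z)
    (hS : QuadFormBound (weightedScatter 1 u - 1) z) (hL : ScatterContracts u ε) :
    QuadFormBound (T - weightedScatter 1 u) (2 * ε * z + 8 * z ^ 2) := by
  obtain ⟨δ, hδ0, hδz, hδ⟩ := hT.exists_quadFormBound_sub_one hu hzε hε hz hS hL
  intro v
  have h_zeroth := abs_le.1 (hS v)
  have h_first := abs_le.1 (hT.quadFormBound_first_order hL hδ v)
  have h_upper := hT.quadForm_le hu v
  have h_lower := hT.one_sub_sq_mul_le_quadForm hu hδ v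
  have hv := dotProduct_self_nonneg_real v
  rw [weightedScatter_quadForm_eq hu, add_mulVec, dotProduct_add] at h_upper h_lower
  rw [dotProduct_sub_one_mulVec] at h_zeroth
  rw [sub_mulVec, dotProduct_sub, abs_le]
  set a := v ⬝ᵥ weightedScatter 1 u *ᵥ v
  set l := v ⬝ᵥ weightedScatter (fun j => u j ⬝ᵥ (T - 1) *ᵥ u j) u *ᵥ v
  set q := v ⬝ᵥ v
  have h_eps : ε * δ * q ≤ 2 * ε * z * q := by
    nlinarith [mul_le_mul_of_nonneg_left hδz (mul_nonneg hε hv)]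
  have h_second : δ ^ 2 * (a + l) ≤ 8 * z ^ 2 * q := by
    have h_al : a + l ≤ 2 * q := by nlinarith [mul_nonneg hε hδ0]
    calc δ ^ 2 * (a + l) ≤ δ ^ 2 * (2 * q) := by gcongr
      _ ≤ (2 * z) ^ 2 * (2 * q) := by gcongr
      _ = 8 * z ^ 2 * q := by ring
  constructor
  · linarith
  · linarith [mul_nonneg (sq_nonneg z) hv]

end IsTyler

end Tyler

/-! ### Gaussian integration by parts for polynomials -/

lemma integrable_pow_gaussianReal (a : ℕ) (μ : ℝ) (v : NNReal) :
    Integrable (fun x : ℝ => x ^ a) (gaussianReal μ v) := by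
  have hmem : MemLp (id : ℝ → ℝ) (a : ENNReal) (gaussianReal μ v) := by
    simpa using memLp_id_gaussianReal (μ := μ) (v := v) (a : NNReal)
  exact hmem.integrable_norm_pow'.mono' (by fun_prop) (ae_of_all _ fun x => by simp)

lemma integrable_pow_mul_gaussianPDFReal (a : ℕ) :
    Integrable fun x : ℝ => x ^ a * gaussianPDFReal 0 1 x := by
  have hint := integrable_pow_gaussianReal a 0 1
  rw [gaussianReal_of_var_ne_zero 0 one_ne_zero,
    integrable_withDensity_iff (measurable_gaussianPDF 0 1)
      (ae_of_all _ fun x => gaussianPDF_lt_top)] at hint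
  simpa [toReal_gaussianPDF] using hint

lemma hasDerivAt_gaussianPDFReal_zero_one (x : ℝ) :
    HasDerivAt (gaussianPDFReal 0 1) (-x * gaussianPDFReal 0 1 x) x := by
  unfold gaussianPDFReal
  have hexponent : HasDerivAt (fun x : ℝ => -(x - 0) ^ 2 / (2 * ((1 : NNReal) : ℝ))) (-x) x :=
    ((((hasDerivAt_id x).sub_const 0).pow 2).neg.div_const _).congr_deriv (by simp; ring)
  exact (hexponent.exp.const_mul _).congr_deriv (by ring)

lemma integral_pow_succ_gaussianReal (a : ℕ) :
    ∫ x, x ^ (a + 1) ∂(gaussianReal 0 1) = a * ∫ x, x ^ (a - 1) ∂(gaussianReal 0 1) := by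
  have hmoment (k : ℕ) :
      ∫ x, x ^ k ∂(gaussianReal 0 1) = ∫ x, x ^ k * gaussianPDFReal 0 1 x := by
    simp [integral_gaussianReal_eq_integral_smul, mul_comm]
  have hparts := integral_mul_deriv_eq_deriv_mul_of_integrable
    (fun x _ => hasDerivAt_pow a x) (fun x _ => hasDerivAt_gaussianPDFReal_zero_one x)
    ((integrable_pow_mul_gaussianPDFReal (a + 1)).neg.congr
      (ae_of_all _ fun x => by simp only [Pi.neg_apply, Pi.mul_apply]; ring))
    (((integrable_pow_mul_gaussianPDFReal (a - 1)).const_mul (a : ℝ)).congr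
      (ae_of_all _ fun x => by simp only [Pi.mul_apply]; ring))
    (integrable_pow_mul_gaussianPDFReal a)
  calc ∫ x, x ^ (a + 1) ∂(gaussianReal 0 1)
      = -∫ x, x ^ a * (-x * gaussianPDFReal 0 1 x) := by
        rw [hmoment, ← integral_neg]
        exact integral_congr_ae (ae_of_all _ fun x => by ring)
    _ = a * ∫ x, x ^ (a - 1) ∂(gaussianReal 0 1) := by
        rw [hparts, neg_neg, hmoment, ← integral_const_mul]
        exact integral_congr_ae (ae_of_all _ fun x => by ring)

/-- The standard Gaussian law on the coordinate space `ι → ℝ`. -/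
noncomputable abbrev piGaussian (ι : Type*) [Fintype ι] : Measure (ι → ℝ) :=
  Measure.pi fun _ => gaussianReal 0 1

/-- The law of a family of independent standard Gaussian vectors indexed by `κ`. -/
noncomputable abbrev gaussianSample (κ ι : Type*) [Fintype κ] [Fintype ι] :
    Measure (κ → ι → ℝ) :=
  Measure.pi fun _ => piGaussian ι

lemma measurePreserving_curry_piGaussian (κ ι : Type*) [Fintype κ] [Fintype ι] :
    MeasurePreserving (MeasurableEquiv.curry κ ι ℝ) (piGaussian (κ × ι)) (gaussianSample κ ι) where
  measurable := (MeasurableEquiv.curry κ ι ℝ).measurable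
  map_eq := by
    simpa only [Measure.infinitePi_eq_pi] using
      Measure.infinitePi_map_curry (ι := κ) (κ := ι) (fun _ _ => gaussianReal 0 1)

section Stein

variable {σ : Type*} [Fintype σ]

lemma integrable_eval_piGaussian (p : MvPolynomial σ ℝ) :
    Integrable (fun x => MvPolynomial.eval x p) (piGaussian σ) := by
  induction p using MvPolynomial.induction_on' with
  | monomial s a =>
    simp_rw [MvPolynomial.eval_monomial, Finsupp.prod_fintype _ _ (fun _ => pow_zero _)]
    exact (Integrable.fintype_prod (f := fun k (y : ℝ) => y ^ s k)
      fun k => integrable_pow_gaussianReal _ 0 1).const_mul a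
  | add p q hp hq => simp_rw [map_add]; exact hp.add hq

/-- The expectation of a polynomial in independent standard Gaussian variables. -/
noncomputable def gaussianExpectation (σ : Type*) [Fintype σ] : MvPolynomial σ ℝ →ₗ[ℝ] ℝ where
  toFun p := ∫ x, MvPolynomial.eval x p ∂(piGaussian σ)
  map_add' p q := by
    simp_rw [map_add]
    exact integral_add (integrable_eval_piGaussian p) (integrable_eval_piGaussian q)
  map_smul' c p := by
    simp_rw [MvPolynomial.smul_eval]
    exact integral_const_mul _ _

lemma gaussianExpectation_one : gaussianExpectation σ 1 = 1 := by
  simp [gaussianExpectation]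

lemma gaussianExpectation_monomial (s : σ →₀ ℕ) (a : ℝ) :
    gaussianExpectation σ (MvPolynomial.monomial s a) =
      a * ∏ k, ∫ x, x ^ s k ∂(gaussianReal 0 1) := by
  change ∫ x, MvPolynomial.eval x _ ∂(piGaussian σ) = _
  simp_rw [MvPolynomial.eval_monomial, Finsupp.prod_fintype _ _ (fun _ => pow_zero _)]
  rw [integral_const_mul, integral_fintype_prod_eq_prod (fun k (y : ℝ) => y ^ s k)]

lemma gaussianExpectation_X_mul (k : σ) (p : MvPolynomial σ ℝ) :
    gaussianExpectation σ (MvPolynomial.X k * p) =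
      gaussianExpectation σ (MvPolynomial.pderiv k p) := by
  classical
  induction p using MvPolynomial.induction_on' with
  | monomial s a =>
    rw [MvPolynomial.pderiv_monomial, MvPolynomial.X, MvPolynomial.monomial_mul,
      gaussianExpectation_monomial, gaussianExpectation_monomial, one_mul, mul_assoc]
    congr 1
    rw [← Finset.mul_prod_erase _ _ (Finset.mem_univ k),
      ← Finset.mul_prod_erase Finset.univ
        (fun i => ∫ x, x ^ (s - Finsupp.single k 1 : σ →₀ ℕ) i ∂(gaussianReal 0 1))
        (Finset.mem_univ k),
      ← mul_assoc]
    congr 1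
    · simp [add_comm 1, integral_pow_succ_gaussianReal]
    · refine Finset.prod_congr rfl fun i hi => ?_
      simp [(Finset.ne_of_mem_erase hi).symm]
  | add p q hp hq => rw [mul_add, map_add, hp, hq, map_add, map_add]

end Stein

/-! ### The Schwinger–Dyson equation of a shifted Wishart matrix -/

section ShiftedScatter

variable {R κ ι : Type*} [CommRing R] [Fintype ι]

lemma trace_vecMulVec_self_mul (v : ι → R) (A : Matrix ι ι R) :
    (vecMulVec v v * A).trace = v ⬝ᵥ A *ᵥ v := by
  rw [vecMulVec_mul, trace_vecMulVec, dotProduct_comm, dotProduct_mulVec]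

variable [Algebra ℝ R] [Fintype κ] [DecidableEq ι]

/-- The matrix `α ∑_j x_j x_jᵗ - β`. It is used both for real samples and for the sample of
polynomial indeterminates. -/
noncomputable def shiftedScatter (α β : ℝ) (x : κ → ι → R) : Matrix ι ι R :=
  α • ∑ j, vecMulVec (x j) (x j) - β • 1

/-- The sum `∑_j x_jᵗ A x_j` of the values of the quadratic form of `A` on a sample. -/
def sumQuadForm (x : κ → ι → R) (A : Matrix ι ι R) : R :=
  ∑ j, x j ⬝ᵥ A *ᵥ x j

lemma transpose_shiftedScatter_pow (α β : ℝ) (x : κ → ι → R) (m : ℕ) :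
    (shiftedScatter α β x ^ m)ᵀ = shiftedScatter α β x ^ m := by
  simp [shiftedScatter, transpose_pow, transpose_sum, transpose_vecMulVec]

lemma trace_shiftedScatter_mul (α β : ℝ) (x : κ → ι → R) (A : Matrix ι ι R) :
    (shiftedScatter α β x * A).trace = α • sumQuadForm x A - β • A.trace := by
  simp only [shiftedScatter, sumQuadForm, sub_mul, trace_sub, smul_mul_assoc, one_mul, trace_smul,
    Finset.sum_mul, trace_sum, trace_vecMulVec_self_mul]

lemma shiftedScatter_pow_mulVec_dotProduct (α β : ℝ) (x : κ → ι → R) (p q : ℕ) (v : ι → R) :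
    (shiftedScatter α β x ^ p *ᵥ v) ⬝ᵥ (shiftedScatter α β x ^ q *ᵥ v) =
      v ⬝ᵥ shiftedScatter α β x ^ (p + q) *ᵥ v := by
  rw [dotProduct_mulVec, ← mulVec_transpose, transpose_shiftedScatter_pow, mulVec_mulVec,
    ← pow_add, dotProduct_comm, add_comm]

end ShiftedScatter

section MatrixDerivation

variable {R A ι : Type*} [CommRing R] [CommRing A] [Algebra R A] [Fintype ι]

lemma matrix_mul_map_derivation (D : Derivation R A A) (M N : Matrix ι ι A) :
    (M * N).map D = M.map D * N + M * N.map D := by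
  ext i k
  simp only [Matrix.map_apply, Matrix.mul_apply, Matrix.add_apply, map_sum, Derivation.leibniz,
    smul_eq_mul, Finset.sum_add_distrib]
  rw [add_comm]
  simp only [mul_comm]

lemma matrix_pow_map_derivation [DecidableEq ι] (D : Derivation R A A) (M : Matrix ι ι A)
    (m : ℕ) :
    (M ^ m).map D = ∑ p ∈ Finset.range m, M ^ p * M.map D * M ^ (m - 1 - p) := by
  induction m with
  | zero =>
    ext i k
    by_cases h : i = k <;> simp [h]
  | succ m ih =>
    rw [pow_succ, matrix_mul_map_derivation, ih, Finset.sum_range_succ, Finset.sum_mul]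
    congr 1
    · refine Finset.sum_congr rfl fun p hp => ?_
      have hpm := Finset.mem_range.1 hp
      rw [mul_assoc, ← pow_succ, show m + 1 - 1 - p = m - 1 - p + 1 by omega]
    · simp

lemma mulVec_map_derivation (D : Derivation R A A) (M : Matrix ι ι A) (v : ι → A) (i : ι) :
    D ((M *ᵥ v) i) = (M *ᵥ fun k => D (v k)) i + (M.map D *ᵥ v) i := by
  simp only [mulVec, dotProduct, map_sum, Derivation.leibniz, smul_eq_mul, Finset.sum_add_distrib,
    Matrix.map_apply]
  simp only [mul_comm]

end MatrixDerivation

section SchwingerDyson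

variable {κ ι : Type*}

/-- The sample of indeterminates `x_j = (X_{j,i})_i`. -/
noncomputable def genericSample (κ ι : Type*) : κ → ι → MvPolynomial (κ × ι) ℝ :=
  fun j i => MvPolynomial.X (j, i)

lemma pderiv_genericSample_self [DecidableEq ι] (j : κ) (i : ι) :
    (fun k => MvPolynomial.pderiv (j, i) (genericSample κ ι j k)) = Pi.single i 1 := by
  classical
  ext1 k
  simp [genericSample, MvPolynomial.pderiv_X, Pi.single_apply]

variable [Fintype κ] [DecidableEq ι]

/-- The shifted Wishart matrix with polynomial entries. -/
noncomputable abbrev wishartPoly (κ ι : Type*) [Fintype κ] [DecidableEq ι] (α β : ℝ) :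
    Matrix ι ι (MvPolynomial (κ × ι) ℝ) :=
  shiftedScatter α β (genericSample κ ι)

lemma map_pderiv_wishartPoly (α β : ℝ) (j : κ) (i : ι) :
    (wishartPoly κ ι α β).map (MvPolynomial.pderiv (R := ℝ) (j, i)) =
      α • (vecMulVec (Pi.single i 1) (genericSample κ ι j) +
        vecMulVec (genericSample κ ι j) (Pi.single i 1)) := by
  classical
  ext a b : 2
  have hone : MvPolynomial.pderiv (R := ℝ) (j, i)
      ((1 : Matrix ι ι (MvPolynomial (κ × ι) ℝ)) a b) = 0 := by
    rw [one_apply]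
    split <;> simp
  simp only [wishartPoly, shiftedScatter, Matrix.map_apply, Matrix.sub_apply, Matrix.smul_apply,
    map_sub, Derivation.map_smul, Matrix.sum_apply, map_sum, vecMulVec_apply, Derivation.leibniz,
    smul_eq_mul, Matrix.add_apply, hone, smul_zero, sub_zero]
  congr 1
  rw [Finset.sum_eq_single_of_mem j (Finset.mem_univ j)]
  · simp only [genericSample, MvPolynomial.pderiv_X, Pi.single_apply, Prod.mk.injEq, true_and]
    rw [add_comm, mul_comm]
  · intro j' _ hj
    simp [genericSample, MvPolynomial.pderiv_X, hj]

variable [Fintype ι]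

lemma pderiv_wishartPoly_pow_mulVec (α β : ℝ) (m : ℕ) (j : κ) (i : ι) :
    MvPolynomial.pderiv (j, i) ((wishartPoly κ ι α β ^ m *ᵥ genericSample κ ι j) i) =
      (wishartPoly κ ι α β ^ m) i i + α • ∑ p ∈ Finset.range m,
        ((wishartPoly κ ι α β ^ p) i i *
            (genericSample κ ι j ⬝ᵥ wishartPoly κ ι α β ^ (m - 1 - p) *ᵥ genericSample κ ι j) +
          (wishartPoly κ ι α β ^ p *ᵥ genericSample κ ι j) i *
            (wishartPoly κ ι α β ^ (m - 1 - p) *ᵥ genericSample κ ι j) i) := by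
  rw [mulVec_map_derivation, pderiv_genericSample_self, mulVec_single_one, Matrix.col_apply,
    matrix_pow_map_derivation, map_pderiv_wishartPoly, sum_mulVec, Finset.sum_apply,
    Finset.smul_sum]
  congr 1
  refine Finset.sum_congr rfl fun p _ => ?_
  rw [mul_smul_comm, smul_mul_assoc, smul_mulVec, Pi.smul_apply, mul_add, add_mul, add_mulVec,
    Pi.add_apply, mul_vecMulVec, mul_vecMulVec, vecMulVec_mul, vecMulVec_mul, vecMulVec_mulVec,
    vecMulVec_mulVec]
  simp only [mulVec_single_one, Pi.smul_apply, single_one_vecMul, op_smul_eq_mul,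
    dotProduct_mulVec, Matrix.col_apply]
  rfl

/-- The derivation `∑_{j,i} (W^m x_j)_i ∂_{j,i}`: the derivative along the vector field
`x_j ↦ W^m x_j`, where `W` is the shifted Wishart matrix. -/
noncomputable def wishartDerivation (κ ι : Type*) [Fintype κ] [Fintype ι] [DecidableEq ι]
    (α β : ℝ) (m : ℕ) :
    Derivation ℝ (MvPolynomial (κ × ι) ℝ) (MvPolynomial (κ × ι) ℝ) :=
  ∑ j, ∑ i, (wishartPoly κ ι α β ^ m *ᵥ genericSample κ ι j) i • MvPolynomial.pderiv (j, i)

lemma wishartDerivation_apply (α β : ℝ) (m : ℕ) (F : MvPolynomial (κ × ι) ℝ) :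
    wishartDerivation κ ι α β m F =
      ∑ j, ∑ i, (wishartPoly κ ι α β ^ m *ᵥ genericSample κ ι j) i *
        MvPolynomial.pderiv (j, i) F := by
  change Derivation.coeFnAddMonoidHom (wishartDerivation κ ι α β m) F = _
  simp only [wishartDerivation, map_sum, Finset.sum_apply]
  rfl

lemma pderiv_trace_wishartPoly_pow (α β : ℝ) (a : ℕ) (j : κ) (i : ι) :
    MvPolynomial.pderiv (j, i) (wishartPoly κ ι α β ^ a).trace =
      (2 * a * α : ℝ) • (wishartPoly κ ι α β ^ (a - 1) *ᵥ genericSample κ ι j) i := by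
  have hsymm : (wishartPoly κ ι α β ^ (a - 1) *ᵥ Pi.single i 1) ⬝ᵥ genericSample κ ι j =
      (wishartPoly κ ι α β ^ (a - 1) *ᵥ genericSample κ ι j) i := by
    rw [dotProduct_comm, dotProduct_mulVec, ← mulVec_transpose, transpose_shiftedScatter_pow,
      dotProduct_single_one]
  have hterm : ∀ p ∈ Finset.range a, (wishartPoly κ ι α β ^ p *
        (wishartPoly κ ι α β).map (MvPolynomial.pderiv (j, i)) *
          wishartPoly κ ι α β ^ (a - 1 - p)).trace =
      (2 * α) • (wishartPoly κ ι α β ^ (a - 1) *ᵥ genericSample κ ι j) i := by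
    intro p hp
    have hpa := Finset.mem_range.1 hp
    rw [trace_mul_comm, ← mul_assoc, ← pow_add, map_pderiv_wishartPoly, mul_smul_comm, trace_smul,
      mul_add, trace_add, mul_vecMulVec, mul_vecMulVec, trace_vecMulVec, trace_vecMulVec,
      show a - 1 - p + p = a - 1 by omega, dotProduct_single_one, hsymm, ← two_smul ℝ, smul_smul,
      mul_comm]
  calc MvPolynomial.pderiv (j, i) (wishartPoly κ ι α β ^ a).trace
      = ((wishartPoly κ ι α β ^ a).map (MvPolynomial.pderiv (j, i))).trace := by
        simp [Matrix.trace]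
    _ = (2 * a * α : ℝ) • (wishartPoly κ ι α β ^ (a - 1) *ᵥ genericSample κ ι j) i := by
        rw [matrix_pow_map_derivation, trace_sum, Finset.sum_congr rfl hterm, Finset.sum_const,
          Finset.card_range, ← Nat.cast_smul_eq_nsmul ℝ, smul_smul]
        ring_nf

lemma wishartDerivation_trace_pow (α β : ℝ) (m a : ℕ) :
    wishartDerivation κ ι α β m (wishartPoly κ ι α β ^ a).trace =
      (2 * a * α : ℝ) •
        sumQuadForm (genericSample κ ι) (wishartPoly κ ι α β ^ (m + (a - 1))) := by
  simp only [wishartDerivation_apply, pderiv_trace_wishartPoly_pow, sumQuadForm, mul_smul_comm,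
    ← Finset.smul_sum, ← shiftedScatter_pow_mulVec_dotProduct]
  rfl

lemma divergence_wishartPoly_pow_mulVec (α β : ℝ) (m : ℕ) :
    ∑ j, ∑ i, MvPolynomial.pderiv (j, i)
        ((wishartPoly κ ι α β ^ m *ᵥ genericSample κ ι j) i) =
      (Fintype.card κ : ℝ) • (wishartPoly κ ι α β ^ m).trace +
        α • ∑ p ∈ Finset.range m,
          (sumQuadForm (genericSample κ ι) (wishartPoly κ ι α β ^ (m - 1)) +
            (wishartPoly κ ι α β ^ p).trace *
              sumQuadForm (genericSample κ ι) (wishartPoly κ ι α β ^ (m - 1 - p))) := by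
  have hswap (f : κ → ι → ℕ → MvPolynomial (κ × ι) ℝ) :
      ∑ j, ∑ i, ∑ p ∈ Finset.range m, f j i p = ∑ p ∈ Finset.range m, ∑ j, ∑ i, f j i p := by
    simp only [Finset.sum_comm (s := Finset.range m)]
  simp only [pderiv_wishartPoly_pow_mulVec, Finset.sum_add_distrib (s := Finset.univ),
    ← Finset.smul_sum, hswap]
  refine congrArg₂ (· + ·) (by simp [Matrix.trace, Nat.cast_smul_eq_nsmul])
    (congrArg (α • ·) (Finset.sum_congr rfl fun p hp => ?_))
  have hpm := Finset.mem_range.1 hp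
  rw [add_comm]
  refine congrArg₂ (· + ·) (Finset.sum_congr rfl fun j _ => ?_) ?_
  · rw [← dotProduct, shiftedScatter_pow_mulVec_dotProduct, show p + (m - 1 - p) = m - 1 by omega]
  · simp only [sumQuadForm, Finset.mul_sum, Matrix.trace, Finset.sum_mul, Matrix.diag_apply]

/-- Gaussian integration by parts applied to the vector field `x_j ↦ F W^m x_j`. -/
lemma gaussianExpectation_sumQuadForm_mul (α β : ℝ) (m : ℕ) (F : MvPolynomial (κ × ι) ℝ) :
    gaussianExpectation (κ × ι)
        (sumQuadForm (genericSample κ ι) (wishartPoly κ ι α β ^ m) * F) =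
      Fintype.card κ * gaussianExpectation (κ × ι) ((wishartPoly κ ι α β ^ m).trace * F) +
      α * ∑ p ∈ Finset.range m,
        (gaussianExpectation (κ × ι)
            (sumQuadForm (genericSample κ ι) (wishartPoly κ ι α β ^ (m - 1)) * F) +
          gaussianExpectation (κ × ι) ((wishartPoly κ ι α β ^ p).trace *
            sumQuadForm (genericSample κ ι) (wishartPoly κ ι α β ^ (m - 1 - p)) * F)) +
      gaussianExpectation (κ × ι) (wishartDerivation κ ι α β m F) := by
  have hexpand : sumQuadForm (genericSample κ ι) (wishartPoly κ ι α β ^ m) * F =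
      ∑ j, ∑ i, MvPolynomial.X (j, i) *
        ((wishartPoly κ ι α β ^ m *ᵥ genericSample κ ι j) i * F) := by
    simp only [sumQuadForm, dotProduct, Finset.sum_mul, genericSample, mul_assoc]
  have hleibniz : ∑ j, ∑ i, MvPolynomial.pderiv (j, i)
        ((wishartPoly κ ι α β ^ m *ᵥ genericSample κ ι j) i * F) =
      (∑ j, ∑ i, MvPolynomial.pderiv (j, i)
        ((wishartPoly κ ι α β ^ m *ᵥ genericSample κ ι j) i)) * F +
      wishartDerivation κ ι α β m F := by
    simp only [Derivation.leibniz, smul_eq_mul, wishartDerivation_apply, Finset.sum_mul,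
      Finset.sum_add_distrib, mul_comm F]
    exact add_comm _ _
  rw [hexpand]
  simp only [map_sum, gaussianExpectation_X_mul]
  simp only [← map_sum, hleibniz, divergence_wishartPoly_pow_mulVec]
  simp only [add_mul, smul_mul_assoc, Finset.sum_mul, map_add, map_smul, map_sum, smul_eq_mul]

end SchwingerDyson

/-! ### Semicircle limit of the shifted Wishart matrix -/

/-- The moments `0, C_{k/2}` of the semicircle law in combinatorial form. -/
noncomputable def catalanMoment (k : ℕ) : ℝ :=
  if Even k then (catalan (k / 2) : ℝ) else 0

lemma catalanMoment_zero : catalanMoment 0 = 1 := by simp [catalanMoment]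

lemma catalanMoment_two_mul (k : ℕ) : catalanMoment (2 * k) = catalan k := by
  simp [catalanMoment]

lemma catalanMoment_of_odd {k : ℕ} (hk : Odd k) : catalanMoment k = 0 :=
  if_neg (Nat.not_even_iff_odd.2 hk)

lemma sum_range_two_mul_add_one_of_odd {M : Type*} [AddCommMonoid M] {f : ℕ → M}
    (hf : ∀ p, Odd p → f p = 0) (k : ℕ) :
    ∑ p ∈ Finset.range (2 * k + 1), f p = ∑ i ∈ Finset.range (k + 1), f (2 * i) := by
  induction k with
  | zero => simp
  | succ k ih =>
    rw [Finset.sum_range_succ _ (k + 1), ← ih, show 2 * (k + 1) + 1 = 2 * k + 1 + 1 + 1 by ring,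
      Finset.sum_range_succ, Finset.sum_range_succ _ (2 * k + 1), hf _ ⟨k, rfl⟩, add_zero]
    rfl

lemma catalanMoment_succ (m : ℕ) :
    catalanMoment (m + 1) =
      ∑ p ∈ Finset.range m, catalanMoment p * catalanMoment (m - 1 - p) := by
  rcases m.even_or_odd with hm | ⟨k, rfl⟩
  · rw [catalanMoment_of_odd hm.add_one]
    refine (Finset.sum_eq_zero fun p hp => ?_).symm
    have hpm := Finset.mem_range.1 hp
    rcases p.even_or_odd with hpe | hpo
    · rw [catalanMoment_of_odd (k := m - 1 - p), mul_zero]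
      rw [Nat.odd_iff]
      rw [Nat.even_iff] at hm hpe
      omega
    · rw [catalanMoment_of_odd hpo, zero_mul]
  · rw [show 2 * k + 1 + 1 = 2 * (k + 1) by ring, catalanMoment_two_mul, catalan_succ,
      sum_range_two_mul_add_one_of_odd fun p hp => by rw [catalanMoment_of_odd hp, zero_mul],
      ← Fin.sum_univ_eq_sum_range]
    push_cast
    refine Finset.sum_congr rfl fun i _ => ?_
    rw [← Nat.mul_sub, catalanMoment_two_mul,
      catalanMoment_two_mul]

section TraceRecursion

variable {n d : ℕ} {α β : ℝ}

/-- The normalized trace `d⁻¹ tr W^k` of a power of the shifted Wishart matrix. -/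
noncomputable def tracePoly (n d : ℕ) (α β : ℝ) (k : ℕ) : MvPolynomial (Fin n × Fin d) ℝ :=
  (d : ℝ)⁻¹ • (wishartPoly (Fin n) (Fin d) α β ^ k).trace

lemma trace_wishartPoly_pow (hd : (d : ℝ) ≠ 0) (k : ℕ) :
    (wishartPoly (Fin n) (Fin d) α β ^ k).trace = (d : ℝ) • tracePoly n d α β k := by
  rw [tracePoly, smul_inv_smul₀ hd]

lemma tracePoly_zero (hd : (d : ℝ) ≠ 0) : tracePoly n d α β 0 = 1 := by
  rw [tracePoly, inv_smul_eq_iff₀ hd, pow_zero, trace_one, Fintype.card_fin,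
    Nat.cast_smul_eq_nsmul, nsmul_one]

lemma smul_sumQuadForm_wishartPoly_pow (hd : (d : ℝ) ≠ 0) (k : ℕ) :
    α • sumQuadForm (genericSample (Fin n) (Fin d)) (wishartPoly (Fin n) (Fin d) α β ^ k) =
      (d : ℝ) • (tracePoly n d α β (k + 1) + β • tracePoly n d α β k) := by
  have htrace := trace_shiftedScatter_mul α β (genericSample (Fin n) (Fin d))
    (wishartPoly (Fin n) (Fin d) α β ^ k)
  rw [← pow_succ', trace_wishartPoly_pow hd, trace_wishartPoly_pow hd] at htrace
  rw [smul_add, htrace, smul_comm β, sub_add_cancel]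

lemma mul_gaussianExpectation_sumQuadForm (hd : (d : ℝ) ≠ 0) (k : ℕ)
    (F : MvPolynomial (Fin n × Fin d) ℝ) :
    α * gaussianExpectation _ (sumQuadForm (genericSample (Fin n) (Fin d))
        (wishartPoly (Fin n) (Fin d) α β ^ k) * F) =
      d * (gaussianExpectation _ (tracePoly n d α β (k + 1) * F) +
        β * gaussianExpectation _ (tracePoly n d α β k * F)) := by
  rw [← smul_eq_mul α, ← map_smul, ← smul_mul_assoc, smul_sumQuadForm_wishartPoly_pow hd]
  simp only [add_mul, smul_mul_assoc, map_add, map_smul, smul_eq_mul]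

lemma mul_gaussianExpectation_trace_mul_sumQuadForm (hd : (d : ℝ) ≠ 0) (p k : ℕ)
    (F : MvPolynomial (Fin n × Fin d) ℝ) :
    α * gaussianExpectation _ ((wishartPoly (Fin n) (Fin d) α β ^ p).trace *
        sumQuadForm (genericSample (Fin n) (Fin d)) (wishartPoly (Fin n) (Fin d) α β ^ k) * F) =
      d * (d * gaussianExpectation _ (tracePoly n d α β p * (tracePoly n d α β (k + 1) * F)) +
        β * d * gaussianExpectation _ (tracePoly n d α β p * (tracePoly n d α β k * F))) := by
  rw [trace_wishartPoly_pow hd, smul_mul_assoc, smul_mul_assoc, map_smul, smul_eq_mul,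
    mul_assoc (tracePoly n d α β p), mul_left_comm (tracePoly n d α β p), mul_left_comm,
    mul_gaussianExpectation_sumQuadForm hd, mul_left_comm (tracePoly n d α β (k + 1)),
    mul_left_comm (tracePoly n d α β k)]
  ring

lemma gaussianExpectation_tracePoly_succ_mul (hd : (d : ℝ) ≠ 0) (hαn : α * n = β)
    (hαβ : α * β * d = 1) (m : ℕ) (F : MvPolynomial (Fin n × Fin d) ℝ) :
    gaussianExpectation _ (tracePoly n d α β (m + 1) * F) =
      ∑ p ∈ Finset.range m,
        (α * gaussianExpectation _ (tracePoly n d α β m * F) +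
          (d : ℝ)⁻¹ * gaussianExpectation _ (tracePoly n d α β (m - 1) * F) +
          α * d * gaussianExpectation _
            (tracePoly n d α β p * (tracePoly n d α β (m - 1 - p + 1) * F)) +
          gaussianExpectation _ (tracePoly n d α β p * (tracePoly n d α β (m - 1 - p) * F))) +
      α / d * gaussianExpectation _ (wishartDerivation (Fin n) (Fin d) α β m F) := by
  have hdyson := congrArg (α * ·)
    (gaussianExpectation_sumQuadForm_mul (κ := Fin n) (ι := Fin d) α β m F)
  simp only [mul_add α, Finset.mul_sum, mul_gaussianExpectation_sumQuadForm hd,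
    mul_gaussianExpectation_trace_mul_sumQuadForm hd, trace_wishartPoly_pow hd m,
    smul_mul_assoc, map_smul, smul_eq_mul, Fintype.card_fin] at hdyson
  have hterm : ∀ p ∈ Finset.range m,
      α * (d * (gaussianExpectation _ (tracePoly n d α β (m - 1 + 1) * F) +
          β * gaussianExpectation _ (tracePoly n d α β (m - 1) * F))) +
        α * (d * (d * gaussianExpectation _
            (tracePoly n d α β p * (tracePoly n d α β (m - 1 - p + 1) * F)) +
          β * d * gaussianExpectation _
            (tracePoly n d α β p * (tracePoly n d α β (m - 1 - p) * F)))) =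
      d * (α * gaussianExpectation _ (tracePoly n d α β m * F) +
          (d : ℝ)⁻¹ * gaussianExpectation _ (tracePoly n d α β (m - 1) * F) +
          α * d * gaussianExpectation _
            (tracePoly n d α β p * (tracePoly n d α β (m - 1 - p + 1) * F)) +
          gaussianExpectation _ (tracePoly n d α β p * (tracePoly n d α β (m - 1 - p) * F))) := by
    intro p hp
    rw [Nat.sub_add_cancel (Nat.one_le_of_lt (Finset.mem_range.1 hp)),
      inv_eq_of_mul_eq_one_left hαβ]
    linear_combination
      d * gaussianExpectation _ (tracePoly n d α β p * (tracePoly n d α β (m - 1 - p) * F)) * hαβ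
  rw [Finset.sum_congr rfl hterm, ← Finset.mul_sum] at hdyson
  rw [← mul_right_inj' hd, mul_add, ← mul_assoc (d : ℝ) (α / d), mul_div_cancel₀ _ hd]
  linear_combination
    hdyson + d * gaussianExpectation _ (tracePoly n d α β m * F) * hαn

lemma mul_gaussianExpectation_mul_wishartDerivation_tracePoly (hd : (d : ℝ) ≠ 0)
    (hαβ : α * β * d = 1) (m a : ℕ) (F : MvPolynomial (Fin n × Fin d) ℝ) :
    α / d * gaussianExpectation _
        (F * wishartDerivation (Fin n) (Fin d) α β m (tracePoly n d α β a)) =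
      (d : ℝ)⁻¹ * (2 * a) *
        (α * gaussianExpectation _ (tracePoly n d α β (m + (a - 1) + 1) * F) +
          (d : ℝ)⁻¹ * gaussianExpectation _ (tracePoly n d α β (m + (a - 1)) * F)) := by
  have hquad := mul_gaussianExpectation_sumQuadForm (n := n) (α := α) (β := β) hd (m + (a - 1)) F
  rw [tracePoly, Derivation.map_smul, wishartDerivation_trace_pow, mul_smul_comm, mul_smul_comm,
    map_smul, map_smul, smul_eq_mul, smul_eq_mul, mul_comm F, mul_assoc (2 * (a : ℝ)), hquad,
    div_eq_mul_inv, inv_eq_of_mul_eq_one_left hαβ]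
  linear_combination (α * β * (2 * a) * (α * gaussianExpectation _
    (tracePoly n d α β (m + (a - 1) + 1) * F) + α * β * gaussianExpectation _
    (tracePoly n d α β (m + (a - 1)) * F))) * hαβ

end TraceRecursion

section Scaling

variable {n d : ℕ}

/-- The factor `α = 1/√(nd)` for which `α ∑_j x_j x_jᵗ - √(n/d)` has a semicircle limit. -/
noncomputable def wishartScale (n d : ℕ) : ℝ := 1 / √(n * d)

lemma wishartScale_mul_left (hn : 0 < n) : wishartScale n d * n = √(n / d) := by
  have hn' : (0 : ℝ) < n := by exact_mod_cast hn
  rw [wishartScale, Real.sqrt_div hn'.le, Real.sqrt_mul hn'.le]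
  field_simp
  rw [Real.sq_sqrt hn'.le]

lemma wishartScale_mul_right (hd : 0 < d) : wishartScale n d * d = √(d / n) := by
  rw [← wishartScale_mul_left hd, wishartScale, wishartScale, mul_comm (d : ℝ) n]

lemma wishartScale_mul_sqrt_mul (hn : 0 < n) (hd : 0 < d) :
    wishartScale n d * √(n / d) * d = 1 := by
  rw [mul_right_comm, wishartScale_mul_right hd, ← Real.sqrt_mul (by positivity)]
  field_simp
  exact Real.sqrt_one

end Scaling

section TraceMoments

/-- The product of the normalized traces of the powers `W^k`, `k ∈ l`, of the shifted Wishart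
matrix. -/
noncomputable def traceProd (n d : ℕ) (l : List ℕ) : MvPolynomial (Fin n × Fin d) ℝ :=
  (l.map (tracePoly n d (wishartScale n d) √(n / d))).prod

/-- The mixed moment `E ∏_{k ∈ l} d⁻¹ tr W^k`. -/
noncomputable def traceMoment (n d : ℕ) (l : List ℕ) : ℝ :=
  gaussianExpectation _ (traceProd n d l)

/-- The correlation produced by integration by parts when the derivative falls on `∏_{k ∈ l}`,
while the factors indexed by `r` are left alone. -/
noncomputable def derivationMoment (n d m : ℕ) (l r : List ℕ) : ℝ :=
  wishartScale n d / d * gaussianExpectation _ (traceProd n d r *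
    wishartDerivation (Fin n) (Fin d) (wishartScale n d) √(n / d) m (traceProd n d l))

/-- The induction parameter for mixed moments: integration by parts strictly decreases it. -/
def listWeight (l : List ℕ) : ℕ := 2 * l.sum + l.length

lemma listWeight_nil : listWeight [] = 0 := rfl

lemma listWeight_cons (a : ℕ) (l : List ℕ) : listWeight (a :: l) = 2 * a + 1 + listWeight l := by
  simp only [listWeight, List.sum_cons, List.length_cons]
  ring

lemma listWeight_append (l r : List ℕ) : listWeight (l ++ r) = listWeight l + listWeight r := by
  simp only [listWeight, List.sum_append, List.length_append]
  ring

lemma traceProd_cons (n d a : ℕ) (l : List ℕ) :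
    traceProd n d (a :: l) = tracePoly n d (wishartScale n d) √(n / d) a * traceProd n d l := by
  simp [traceProd]

lemma traceProd_append (n d : ℕ) (l r : List ℕ) :
    traceProd n d (l ++ r) = traceProd n d l * traceProd n d r := by
  simp [traceProd]

variable {n d : ℕ}

lemma traceMoment_nil : traceMoment n d [] = 1 := by
  simp [traceMoment, traceProd, gaussianExpectation_one]

lemma traceMoment_zero_cons (hd : 0 < d) (l : List ℕ) :
    traceMoment n d (0 :: l) = traceMoment n d l := by
  rw [traceMoment, traceProd_cons, tracePoly_zero (by exact_mod_cast hd.ne'), one_mul, traceMoment]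

lemma traceMoment_succ_cons (hn : 0 < n) (hd : 0 < d) (m : ℕ) (l : List ℕ) :
    traceMoment n d ((m + 1) :: l) =
      ∑ p ∈ Finset.range m,
        (wishartScale n d * traceMoment n d (m :: l) +
          (d : ℝ)⁻¹ * traceMoment n d ((m - 1) :: l) +
          wishartScale n d * d * traceMoment n d (p :: (m - 1 - p + 1) :: l) +
          traceMoment n d (p :: (m - 1 - p) :: l)) +
      derivationMoment n d m l [] := by
  simp only [traceMoment, derivationMoment, traceProd_cons]
  rw [gaussianExpectation_tracePoly_succ_mul (by exact_mod_cast hd.ne')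
    (wishartScale_mul_left hn) (wishartScale_mul_sqrt_mul hn hd)]
  simp [traceProd]

lemma derivationMoment_nil (m : ℕ) (r : List ℕ) : derivationMoment n d m [] r = 0 := by
  simp [derivationMoment, traceProd]

lemma derivationMoment_cons (hn : 0 < n) (hd : 0 < d) (m a : ℕ) (l r : List ℕ) :
    derivationMoment n d m (a :: l) r =
      (d : ℝ)⁻¹ * (2 * a) *
        (wishartScale n d * traceMoment n d ((m + (a - 1) + 1) :: (l ++ r)) +
          (d : ℝ)⁻¹ * traceMoment n d ((m + (a - 1)) :: (l ++ r))) +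
      derivationMoment n d m l (a :: r) := by
  simp only [traceMoment, derivationMoment, traceProd_cons]
  rw [← mul_gaussianExpectation_mul_wishartDerivation_tracePoly (by exact_mod_cast hd.ne')
    (wishartScale_mul_sqrt_mul hn hd), ← mul_add, ← map_add, Derivation.leibniz, traceProd_append,
    smul_eq_mul, smul_eq_mul]
  ring_nf

end TraceMoments

section Limit

variable {n : ℕ → ℕ}

lemma eventually_dim_pos (hn : Tendsto n atTop atTop) : ∀ᶠ d in atTop, 0 < n d ∧ 0 < d :=
  (hn.eventually_gt_atTop 0).and (eventually_gt_atTop 0)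

lemma tendsto_wishartScale_mul (hdn : Tendsto (fun d : ℕ => (d : ℝ) / n d) atTop (nhds 0)) :
    Tendsto (fun d => wishartScale (n d) d * d) atTop (nhds 0) := by
  have hsqrt := hdn.sqrt
  rw [Real.sqrt_zero] at hsqrt
  refine hsqrt.congr' ?_
  filter_upwards [eventually_gt_atTop 0] with d hd
  rw [wishartScale_mul_right hd]

lemma tendsto_wishartScale (hdn : Tendsto (fun d : ℕ => (d : ℝ) / n d) atTop (nhds 0)) :
    Tendsto (fun d => wishartScale (n d) d) atTop (nhds 0) := by
  have hmul := (tendsto_wishartScale_mul hdn).mul tendsto_inv_atTop_nhds_zero_nat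
  rw [mul_zero] at hmul
  refine hmul.congr' ?_
  filter_upwards [eventually_gt_atTop 0] with d hd
  rw [mul_inv_cancel_right₀ (by exact_mod_cast hd.ne')]

lemma tendsto_derivationMoment_zero (hn : Tendsto n atTop atTop)
    (hdn : Tendsto (fun d : ℕ => (d : ℝ) / n d) atTop (nhds 0)) {m w : ℕ}
    (hmoment : ∀ l, listWeight l < w →
      Tendsto (fun d => traceMoment (n d) d l) atTop (nhds (l.map catalanMoment).prod))
    (l r : List ℕ) (hlr : 2 * m + 2 + listWeight l + listWeight r < w) :
    Tendsto (fun d => derivationMoment (n d) d m l r) atTop (nhds 0) := by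
  induction l generalizing r with
  | nil => simp only [derivationMoment_nil, tendsto_const_nhds]
  | cons a l ih =>
    rw [listWeight_cons] at hlr
    have hrest := ih (a :: r) (by rw [listWeight_cons]; omega)
    have hsucc := hmoment ((m + (a - 1) + 1) :: (l ++ r))
      (by rw [listWeight_cons, listWeight_append]; omega)
    have hself := hmoment ((m + (a - 1)) :: (l ++ r))
      (by rw [listWeight_cons, listWeight_append]; omega)
    have hinv : Tendsto (fun d : ℕ => (d : ℝ)⁻¹) atTop (nhds 0) := tendsto_inv_atTop_nhds_zero_nat
    have hsum := ((hinv.mul_const (2 * (a : ℝ))).mul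
      (((tendsto_wishartScale hdn).mul hsucc).add (hinv.mul hself))).add hrest
    simp only [zero_mul, add_zero] at hsum
    refine hsum.congr' ?_
    filter_upwards [eventually_dim_pos hn] with d hd
    rw [derivationMoment_cons hd.1 hd.2]

lemma tendsto_traceMoment_succ_cons (hn : Tendsto n atTop atTop)
    (hdn : Tendsto (fun d : ℕ => (d : ℝ) / n d) atTop (nhds 0)) (m : ℕ) (l : List ℕ)
    (hmoment : ∀ l', listWeight l' < listWeight ((m + 1) :: l) →
      Tendsto (fun d => traceMoment (n d) d l') atTop (nhds (l'.map catalanMoment).prod)) :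
    Tendsto (fun d => traceMoment (n d) d ((m + 1) :: l)) atTop
      (nhds (((m + 1) :: l).map catalanMoment).prod) := by
  have hinv : Tendsto (fun d : ℕ => (d : ℝ)⁻¹) atTop (nhds 0) := tendsto_inv_atTop_nhds_zero_nat
  have hderiv := tendsto_derivationMoment_zero hn hdn (m := m) hmoment l []
    (by rw [listWeight_cons, listWeight_nil]; omega)
  have hsum : Tendsto (fun d => ∑ p ∈ Finset.range m,
      (wishartScale (n d) d * traceMoment (n d) d (m :: l) +
        (d : ℝ)⁻¹ * traceMoment (n d) d ((m - 1) :: l) +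
        wishartScale (n d) d * d * traceMoment (n d) d (p :: (m - 1 - p + 1) :: l) +
        traceMoment (n d) d (p :: (m - 1 - p) :: l))) atTop
      (nhds (∑ p ∈ Finset.range m,
        catalanMoment p * (catalanMoment (m - 1 - p) * (l.map catalanMoment).prod))) := by
    refine tendsto_finsetSum _ fun p hp => ?_
    have hpm := Finset.mem_range.1 hp
    have hM (l' : List ℕ) (hl' : listWeight l' < listWeight ((m + 1) :: l) := by
      simp only [listWeight_cons]; omega) := hmoment l' hl'
    simpa using ((((tendsto_wishartScale hdn).mul (hM (m :: l))).add
      (hinv.mul (hM ((m - 1) :: l)))).add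
      ((tendsto_wishartScale_mul hdn).mul (hM (p :: (m - 1 - p + 1) :: l)))).add
      (hM (p :: (m - 1 - p) :: l))
  rw [List.map_cons, List.prod_cons, catalanMoment_succ, Finset.sum_mul]
  simp only [mul_assoc]
  have htotal := hsum.add hderiv
  rw [add_zero] at htotal
  refine htotal.congr' ?_
  filter_upwards [eventually_dim_pos hn] with d hd
  rw [traceMoment_succ_cons hd.1 hd.2]

theorem tendsto_traceMoment (hn : Tendsto n atTop atTop)
    (hdn : Tendsto (fun d : ℕ => (d : ℝ) / n d) atTop (nhds 0)) (l : List ℕ) :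
    Tendsto (fun d => traceMoment (n d) d l) atTop (nhds (l.map catalanMoment).prod) := by
  induction hw : listWeight l using Nat.strong_induction_on generalizing l with
  | _ w ih =>
  subst hw
  match l with
  | [] => simp [traceMoment_nil]
  | 0 :: l =>
    rw [List.map_cons, List.prod_cons, catalanMoment_zero, one_mul]
    refine (ih (listWeight l) (by simp [listWeight_cons]) l rfl).congr' ?_
    filter_upwards [eventually_gt_atTop 0] with d hd
    rw [traceMoment_zero_cons hd]
  | (m + 1) :: l =>
    exact tendsto_traceMoment_succ_cons hn hdn m l fun l' hl' => ih _ hl' l' rfl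

lemma map_eval_wishartPoly {κ ι : Type*} [Fintype κ] [DecidableEq ι] (α β : ℝ) (y : κ × ι → ℝ) :
    (wishartPoly κ ι α β).map (MvPolynomial.eval y) = shiftedScatter α β (Function.curry y) := by
  ext a b
  have hone : MvPolynomial.eval y ((1 : Matrix ι ι (MvPolynomial (κ × ι) ℝ)) a b) =
      (1 : Matrix ι ι ℝ) a b := by
    simp only [one_apply]
    split <;> simp
  simp [shiftedScatter, genericSample, Matrix.sum_apply, vecMulVec_apply, MvPolynomial.smul_eval,
    hone]

lemma eval_tracePoly {n d : ℕ} (α β : ℝ) (y : Fin n × Fin d → ℝ) (k : ℕ) :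
    MvPolynomial.eval y (tracePoly n d α β k) =
      (d : ℝ)⁻¹ * (shiftedScatter α β (Function.curry y) ^ k).trace := by
  rw [tracePoly, MvPolynomial.smul_eval, ← map_eval_wishartPoly, ← RingHom.mapMatrix_apply,
    ← map_pow, RingHom.mapMatrix_apply]
  simp [Matrix.trace]

lemma gaussianExpectation_sq_tracePoly_sub (n d k : ℕ) (c : ℝ) :
    gaussianExpectation _ ((tracePoly n d (wishartScale n d) √(n / d) k - MvPolynomial.C c) ^ 2) =
      traceMoment n d [k, k] - 2 * c * traceMoment n d [k] + c ^ 2 := by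
  have hexpand (q : MvPolynomial (Fin n × Fin d) ℝ) :
      (q - MvPolynomial.C c) ^ 2 = q * q - (2 * c) • q + c ^ 2 • 1 := by
    simp only [MvPolynomial.smul_eq_C_mul, map_mul, map_pow, map_ofNat]
    ring
  rw [hexpand, map_add, map_sub, map_smul, map_smul, gaussianExpectation_one]
  simp [traceMoment, traceProd]

/-- Chebyshev's inequality turns the convergence of the first two moments into convergence in
probability. -/
theorem tendsto_measure_trace_shiftedScatter_pow (hn : Tendsto n atTop atTop)
    (hdn : Tendsto (fun d : ℕ => (d : ℝ) / n d) atTop (nhds 0)) (k : ℕ) {η : ℝ} (hη : 0 < η) :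
    Tendsto (fun d => (gaussianSample (Fin (n d)) (Fin d)).real
        {x | η ≤ |(d : ℝ)⁻¹ * (shiftedScatter (wishartScale (n d) d) √(n d / d) x ^ k).trace -
          catalanMoment k|})
      atTop (nhds 0) := by
  have hsq : Tendsto (fun d => (traceMoment (n d) d [k, k] -
      2 * catalanMoment k * traceMoment (n d) d [k] + catalanMoment k ^ 2) / η ^ 2)
      atTop (nhds 0) := by
    have hlim := ((((tendsto_traceMoment hn hdn [k, k]).sub ((tendsto_traceMoment hn hdn
      [k]).const_mul (2 * catalanMoment k))).add_const (catalanMoment k ^ 2)).div_const (η ^ 2))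
    convert hlim using 2
    simp only [List.map_cons, List.map_nil, List.prod_cons, List.prod_nil]
    ring
  refine squeeze_zero (fun d => measureReal_nonneg) (fun d => ?_) hsq
  set q : MvPolynomial (Fin (n d) × Fin d) ℝ :=
    (tracePoly (n d) d (wishartScale (n d) d) √(n d / d) k - MvPolynomial.C (catalanMoment k)) ^ 2
    with hq
  have hcheb := mul_meas_ge_le_integral_of_nonneg (μ := piGaussian (Fin (n d) × Fin d))
    (f := fun y => MvPolynomial.eval y q) (ae_of_all _ fun y => by
      simp only [hq, map_pow, Pi.zero_apply]
      positivity)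
    (integrable_eval_piGaussian q) (η ^ 2)
  rw [show ∫ y, MvPolynomial.eval y q ∂_ = _ from gaussianExpectation_sq_tracePoly_sub ..] at hcheb
  rw [le_div_iff₀ (by positivity), mul_comm]
  refine le_trans (le_of_eq ?_) hcheb
  rw [measureReal_def, ← (measurePreserving_curry_piGaussian _ _).measure_preimage_equiv]
  congr 3
  ext y
  simp only [Set.mem_preimage, Set.mem_ofPred_eq, hq, map_pow, map_sub, eval_tracePoly,
    MvPolynomial.eval_C, MeasurableEquiv.coe_curry, ← sq_abs (_ - _)]
  rw [sq_le_sq₀ hη.le (abs_nonneg _)]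

end Limit

/-! ### Exponential moments of normalized Gaussian quadratic forms -/

lemma gaussianPDFReal_mul_exp_mul_sq (a x : ℝ) :
    gaussianPDFReal 0 1 x * Real.exp (a * x ^ 2) =
      (√(2 * Real.pi))⁻¹ * Real.exp (-(1 / 2 - a) * x ^ 2) := by
  rw [gaussianPDFReal, mul_assoc, ← Real.exp_add]
  simp only [NNReal.coe_one, mul_one, sub_zero]
  ring_nf

lemma integrable_exp_mul_sq_gaussianReal {a : ℝ} (ha : a < 1 / 2) :
    Integrable (fun x : ℝ => Real.exp (a * x ^ 2)) (gaussianReal 0 1) := by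
  rw [gaussianReal_of_var_ne_zero 0 one_ne_zero,
    integrable_withDensity_iff (measurable_gaussianPDF 0 1)
      (ae_of_all _ fun x => gaussianPDF_lt_top)]
  simp only [toReal_gaussianPDF, mul_comm (Real.exp _), gaussianPDFReal_mul_exp_mul_sq]
  exact (integrable_exp_neg_mul_sq (by linarith)).const_mul _

lemma integral_exp_mul_sq_gaussianReal {a : ℝ} (ha : a < 1 / 2) :
    ∫ x : ℝ, Real.exp (a * x ^ 2) ∂(gaussianReal 0 1) = (√(1 - 2 * a))⁻¹ := by
  rw [integral_gaussianReal_eq_integral_smul one_ne_zero]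
  simp only [smul_eq_mul, gaussianPDFReal_mul_exp_mul_sq]
  rw [integral_const_mul, integral_gaussian, ← Real.sqrt_inv, ← Real.sqrt_mul (by positivity),
    ← Real.sqrt_inv]
  congr 1
  field_simp [show 1 - 2 * a ≠ 0 by linarith, show 1 / 2 - a ≠ 0 by linarith]

lemma map_const_mul_gaussianReal {c : ℝ} (hc : 0 < c) :
    (gaussianReal 0 1).map (c * ·) = (gaussianReal 0 1).withDensity fun x =>
      ENNReal.ofReal (c⁻¹ * Real.exp (-((c ^ 2)⁻¹ - 1) / 2 * x ^ 2)) := by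
  have h_var : NNReal.mk (c ^ 2) (sq_nonneg _) * 1 ≠ 0 := by
    simpa [← NNReal.coe_eq_zero] using hc.ne'
  rw [gaussianReal_map_const_mul, gaussianReal_of_var_ne_zero _ h_var,
    gaussianReal_of_var_ne_zero 0 one_ne_zero,
    ← withDensity_mul _ (measurable_gaussianPDF 0 1) (by fun_prop)]
  congr 1
  ext x
  simp only [Pi.mul_apply, gaussianPDF, mul_zero, mul_one]
  rw [← ENNReal.ofReal_mul (gaussianPDFReal_nonneg _ _ _), mul_left_comm,
    gaussianPDFReal_mul_exp_mul_sq, gaussianPDFReal]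
  simp only [NNReal.coe_mk, sub_zero]
  rw [← mul_assoc, Real.sqrt_mul (by positivity), Real.sqrt_sq hc.le, mul_inv, mul_comm c⁻¹]
  congr 3
  field_simp
  ring

lemma pi_withDensity_eq_withDensity_prod {ι : Type*} [Fintype ι] {Ω : ι → Type*}
    [∀ i, MeasurableSpace (Ω i)] (μ : ∀ i, Measure (Ω i)) [∀ i, IsProbabilityMeasure (μ i)]
    {g : ∀ i, Ω i → ENNReal} (hg : ∀ i, Measurable (g i))
    [∀ i, SigmaFinite ((μ i).withDensity (g i))] :
    Measure.pi (fun i => (μ i).withDensity (g i)) =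
      (Measure.pi μ).withDensity fun x => ∏ i, g i (x i) := by
  refine Measure.pi_eq fun s hs => ?_
  have h_indicator : (Set.univ.pi s).indicator (fun x => ∏ i, g i (x i)) =
      fun x => ∏ i, (s i).indicator (g i) (x i) := by
    ext x
    by_cases hx : x ∈ Set.univ.pi s
    · rw [Set.indicator_of_mem hx]
      exact Finset.prod_congr rfl fun i _ => (Set.indicator_of_mem (hx i trivial) _).symm
    · obtain ⟨i, hi⟩ : ∃ i, x i ∉ s i := by simpa using hx
      rw [Set.indicator_of_notMem hx]
      exact (Finset.prod_eq_zero (Finset.mem_univ i) (Set.indicator_of_notMem hi _)).symm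
  rw [withDensity_apply _ (MeasurableSet.univ_pi hs),
    ← lintegral_indicator (MeasurableSet.univ_pi hs), h_indicator,
    lintegral_prod_eq_prod_lintegral_of_indepFun Finset.univ
      (fun i (x : ∀ i, Ω i) => (s i).indicator (g i) (x i))
      (iIndepFun_pi fun i => ((hg i).indicator (hs i)).aemeasurable)
      fun i => ((hg i).indicator (hs i)).comp (measurable_pi_apply i)]
  refine Finset.prod_congr rfl fun i _ => ?_
  rw [withDensity_apply _ (hs i), ← lintegral_indicator (hs i)]
  exact (measurePreserving_eval μ i).lintegral_comp ((hg i).indicator (hs i))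

section PiGaussian

variable {ι : Type*} [Fintype ι]

lemma dotProduct_self_eq_sum_sq (x : ι → ℝ) : x ⬝ᵥ x = ∑ i, x i ^ 2 := by
  simp only [dotProduct, sq]

lemma measurable_dotProduct_self : Measurable fun x : ι → ℝ => x ⬝ᵥ x := by
  simp only [dotProduct_self_eq_sum_sq]
  fun_prop

lemma integrable_exp_mul_dotProduct_self {a : ℝ} (ha : a < 1 / 2) :
    Integrable (fun x : ι → ℝ => Real.exp (a * (x ⬝ᵥ x))) (piGaussian ι) := by
  simp_rw [dotProduct_self_eq_sum_sq, Finset.mul_sum, Real.exp_sum]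
  exact Integrable.fintype_prod (f := fun _ y => Real.exp (a * y ^ 2))
    fun _ => integrable_exp_mul_sq_gaussianReal ha

lemma map_smul_piGaussian {c : ℝ} (hc : 0 < c) :
    (piGaussian ι).map (c • ·) = (piGaussian ι).withDensity fun x =>
      ENNReal.ofReal (c⁻¹ ^ Fintype.card ι * Real.exp (-((c ^ 2)⁻¹ - 1) / 2 * (x ⬝ᵥ x))) := by
  have h_prob : IsProbabilityMeasure ((gaussianReal 0 1).map (c * ·)) :=
    Measure.isProbabilityMeasure_map (by fun_prop)
  have h_map : (piGaussian ι).map (c • ·) =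
      Measure.pi fun _ : ι => (gaussianReal 0 1).map (c * ·) :=
    Measure.pi_map_pi (f := fun (_ : ι) (y : ℝ) => c * y) fun _ => by fun_prop
  rw [h_map]
  rw [map_const_mul_gaussianReal hc] at h_prob ⊢
  rw [pi_withDensity_eq_withDensity_prod _ fun _ => by fun_prop]
  congr 1
  ext x
  rw [← ENNReal.ofReal_prod_of_nonneg fun i _ => by positivity, Finset.prod_mul_distrib,
    Finset.prod_const, Finset.card_univ, ← Real.exp_sum, ← Finset.mul_sum,
    dotProduct_self_eq_sum_sq]

section Homogeneous

variable {f : (ι → ℝ) → ℝ} {C : ℝ}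

lemma integral_exp_neg_mul_dotProduct_self_mul (hf : Measurable f)
    (h_hom : ∀ (c : ℝ) x, 0 < c → f (c • x) = f x) {t : ℝ} (ht : 0 < 1 + 2 * t) :
    ∫ x, Real.exp (-t * (x ⬝ᵥ x)) * f x ∂(piGaussian ι) =
      (√(1 + 2 * t))⁻¹ ^ Fintype.card ι * ∫ x, f x ∂(piGaussian ι) := by
  set c : ℝ := (√(1 + 2 * t))⁻¹ with hc
  have hc_pos : 0 < c := by positivity
  have hc_sq : (c ^ 2)⁻¹ = 1 + 2 * t := by rw [hc, inv_pow, inv_inv, Real.sq_sqrt ht.le]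
  have h_scale : ∫ x, f x ∂(piGaussian ι) =
      ∫ x, c⁻¹ ^ Fintype.card ι * Real.exp (-t * (x ⬝ᵥ x)) * f x ∂(piGaussian ι) := by
    calc ∫ x, f x ∂(piGaussian ι)
        = ∫ x, f (c • x) ∂(piGaussian ι) := by simp_rw [h_hom c _ hc_pos]
      _ = ∫ x, f x ∂((piGaussian ι).map (c • ·)) :=
          (integral_map (by fun_prop) hf.aestronglyMeasurable).symm
      _ = _ := by
          have := measurable_dotProduct_self (ι := ι)
          rw [map_smul_piGaussian hc_pos,
            integral_withDensity_eq_integral_toReal_smul (by fun_prop)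
              (ae_of_all _ fun x => ENNReal.ofReal_lt_top)]
          refine integral_congr_ae (ae_of_all _ fun x => ?_)
          dsimp only
          rw [ENNReal.toReal_ofReal (by positivity), smul_eq_mul, hc_sq]
          ring_nf
  simp_rw [mul_assoc] at h_scale
  rw [h_scale, integral_const_mul, ← mul_assoc, ← mul_pow, mul_inv_cancel₀ hc_pos.ne', one_pow,
    one_mul]

lemma abs_dotProduct_self_mul_exp_mul_le (hfC : ∀ x, |f x| ≤ C) {t : ℝ} (ht : |t| < 1 / 4)
    (x : ι → ℝ) :
    |-(x ⬝ᵥ x) * Real.exp (-t * (x ⬝ᵥ x)) * f x| ≤ 8 * C * Real.exp (3 / 8 * (x ⬝ᵥ x)) := by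
  have hr := dotProduct_self_nonneg_real x
  generalize x ⬝ᵥ x = r at hr
  have h_lin : r ≤ 8 * Real.exp (1 / 8 * r) := by linarith [Real.add_one_le_exp (1 / 8 * r)]
  have h_exp : Real.exp (-t * r) ≤ Real.exp (1 / 4 * r) :=
    Real.exp_le_exp.2 (mul_le_mul_of_nonneg_right (by linarith [neg_abs_le t]) hr)
  calc |-r * Real.exp (-t * r) * f x| = r * Real.exp (-t * r) * |f x| := by
        rw [abs_mul, abs_mul, abs_neg, abs_of_nonneg hr, Real.abs_exp]
    _ ≤ 8 * Real.exp (1 / 8 * r) * Real.exp (1 / 4 * r) * C := by gcongr; exact hfC x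
    _ = 8 * C * Real.exp (3 / 8 * r) := by
        rw [show 3 / 8 * r = 1 / 8 * r + 1 / 4 * r by ring, Real.exp_add]
        ring

lemma hasDerivAt_integral_exp_neg_mul_dotProduct_self_mul (hf : Measurable f)
    (hfC : ∀ x, |f x| ≤ C) :
    Integrable (fun x => (x ⬝ᵥ x) * f x) (piGaussian ι) ∧
      HasDerivAt (fun t : ℝ => ∫ x, Real.exp (-t * (x ⬝ᵥ x)) * f x ∂(piGaussian ι))
        (-∫ x, (x ⬝ᵥ x) * f x ∂(piGaussian ι)) 0 := by
  have := measurable_dotProduct_self (ι := ι)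
  have h_int : Integrable f (piGaussian ι) :=
    Integrable.of_bound hf.aestronglyMeasurable C (ae_of_all _ hfC)
  have h_deriv (x : ι → ℝ) (t : ℝ) : HasDerivAt (fun t => Real.exp (-t * (x ⬝ᵥ x)) * f x)
      (-(x ⬝ᵥ x) * Real.exp (-t * (x ⬝ᵥ x)) * f x) t :=
    ((((hasDerivAt_id t).neg.mul_const (x ⬝ᵥ x)).exp).mul_const (f x)).congr_deriv (by
      simp only [Pi.neg_apply, id_eq]; ring)
  obtain ⟨h_int', h_main⟩ := hasDerivAt_integral_of_dominated_loc_of_deriv_le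
    (μ := piGaussian ι) (x₀ := (0 : ℝ)) (s := Metric.ball 0 (1 / 4))
    (F := fun t x => Real.exp (-t * (x ⬝ᵥ x)) * f x)
    (F' := fun t x => -(x ⬝ᵥ x) * Real.exp (-t * (x ⬝ᵥ x)) * f x)
    (bound := fun x => 8 * C * Real.exp (3 / 8 * (x ⬝ᵥ x)))
    (Metric.ball_mem_nhds _ (by norm_num)) (Eventually.of_forall fun t => by fun_prop)
    (by simpa using h_int) (by fun_prop)
    (ae_of_all _ fun x t ht => abs_dotProduct_self_mul_exp_mul_le hfC (by simpa using ht) x)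
    ((integrable_exp_mul_dotProduct_self (by norm_num)).const_mul _)
    (ae_of_all _ fun x t _ => h_deriv x t)
  simp only [neg_zero, zero_mul, Real.exp_zero, mul_one, neg_mul, integral_neg] at h_int' h_main
  exact ⟨by simpa using h_int'.neg, by simpa only [neg_mul] using h_main⟩

-- The length of a Gaussian vector is independent of its direction. Only the consequence
-- `E[(|x|² - d) f] = 0` is needed; it is the derivative at `t = 0` of the scaling identity.
lemma integral_dotProduct_self_sub_card_mul (hf : Measurable f) (hfC : ∀ x, |f x| ≤ C)
    (h_hom : ∀ (c : ℝ) x, 0 < c → f (c • x) = f x) :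
    ∫ x, (x ⬝ᵥ x - Fintype.card ι) * f x ∂(piGaussian ι) = 0 := by
  have h_int : Integrable f (piGaussian ι) :=
    Integrable.of_bound hf.aestronglyMeasurable C (ae_of_all _ hfC)
  obtain ⟨h_int', h_deriv⟩ := hasDerivAt_integral_exp_neg_mul_dotProduct_self_mul hf hfC
  have h_closed : HasDerivAt
      (fun t : ℝ => (√(1 + 2 * t))⁻¹ ^ Fintype.card ι * ∫ x, f x ∂(piGaussian ι))
      (-(Fintype.card ι : ℝ) * ∫ x, f x ∂(piGaussian ι)) 0 := by
    have h_affine : HasDerivAt (fun t : ℝ => 1 + 2 * t) 2 0 := by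
      simpa using ((hasDerivAt_id (0 : ℝ)).const_mul 2).const_add 1
    exact ((((h_affine.sqrt (by norm_num)).inv (by simp)).pow _).congr_deriv
      (by simp)).mul_const _
  have h_eq : (fun t : ℝ => ∫ x, Real.exp (-t * (x ⬝ᵥ x)) * f x ∂(piGaussian ι)) =ᶠ[nhds 0]
      fun t => (√(1 + 2 * t))⁻¹ ^ Fintype.card ι * ∫ x, f x ∂(piGaussian ι) := by
    filter_upwards [eventually_gt_nhds (show (-1 / 2 : ℝ) < 0 by norm_num)] with t ht
    exact integral_exp_neg_mul_dotProduct_self_mul hf h_hom (by linarith)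
  have h_unique := h_deriv.unique (h_closed.congr_of_eventuallyEq h_eq)
  simp_rw [sub_mul]
  rw [integral_sub h_int' (h_int.const_mul _), integral_const_mul]
  linarith

end Homogeneous

lemma inv_sqrt_one_sub_two_mul_le_exp {a : ℝ} (ha : |a| ≤ 1 / 4) :
    (√(1 - 2 * a))⁻¹ ≤ Real.exp (a + 2 * a ^ 2) := by
  have h_upper : a ≤ 1 / 4 := (abs_le.1 ha).2
  have h_pos : 0 < 1 - 2 * a := by linarith
  set b := 2 * a + 4 * a ^ 2 with hb
  have h_one_le : 1 ≤ (1 - 2 * a) * Real.exp b := by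
    rcases le_total a 0 with h | h
    · have h_poly : 1 ≤ (1 - 2 * a) * (b + 1) := by
        nlinarith [sq_nonneg a, mul_nonneg (neg_nonneg.2 h) (sq_nonneg a)]
      exact h_poly.trans (mul_le_mul_of_nonneg_left (Real.add_one_le_exp b) h_pos.le)
    · have h_poly : 1 ≤ (1 - 2 * a) * (1 + b + b ^ 2 / 2) := by
        nlinarith [mul_nonneg (pow_nonneg h 2) h_pos.le, mul_nonneg (pow_nonneg h 3) h_pos.le,
          mul_nonneg (pow_nonneg h 4) h_pos.le]
      exact h_poly.trans (mul_le_mul_of_nonneg_left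
        (Real.quadratic_le_exp_of_nonneg (by positivity)) h_pos.le)
  have h_sqrt : √(1 - 2 * a) * Real.exp (a + 2 * a ^ 2) = √((1 - 2 * a) * Real.exp b) := by
    rw [Real.sqrt_mul h_pos.le, show b = (a + 2 * a ^ 2) + (a + 2 * a ^ 2) by rw [hb]; ring,
      Real.exp_add (a + 2 * a ^ 2), Real.sqrt_mul_self (Real.exp_pos _).le]
  rw [inv_le_iff_one_le_mul₀' (Real.sqrt_pos.2 h_pos), h_sqrt]
  exact Real.one_le_sqrt.2 h_one_le

section Rotation

variable [DecidableEq ι] {U : Matrix ι ι ℝ}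

lemma measurePreserving_mulVec_piGaussian (hU : U ∈ orthogonalGroup ι ℝ) :
    MeasurePreserving (U *ᵥ ·) (piGaussian ι) (piGaussian ι) := by
  have h_meas : Measurable (U *ᵥ · : (ι → ℝ) → ι → ℝ) :=
    U.mulVecLin.continuous_of_finiteDimensional.measurable
  refine ⟨h_meas, ?_⟩
  let u : EuclideanSpace ℝ ι ≃ₗᵢ[ℝ] EuclideanSpace ℝ ι := Unitary.linearIsometryEquiv
    ⟨toEuclideanCLM (n := ι) (𝕜 := ℝ) U, Unitary.map_mem _ hU⟩
  have h_std := stdGaussian_map u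
  rw [← map_pi_eq_stdGaussian, Measure.map_map (by fun_prop) (by fun_prop)] at h_std
  have h_ofLp := congrArg (Measure.map (WithLp.ofLp : EuclideanSpace ℝ ι → (ι → ℝ))) h_std
  rw [Measure.map_map (by fun_prop) (by fun_prop), Measure.map_map (by fun_prop) (by fun_prop)]
    at h_ofLp
  exact h_ofLp.trans Measure.map_id

lemma trace_conj_diagonal (hU : U ∈ orthogonalGroup ι ℝ) (a : ι → ℝ) :
    (U * diagonal a * Uᵀ).trace = ∑ k, a k := by
  rw [trace_mul_comm, ← Matrix.mul_assoc, (mem_orthogonalGroup_iff' ι ℝ).1 hU, Matrix.one_mul,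
    trace_diagonal]

end Rotation

variable {A : Matrix ι ι ℝ}

theorem integral_exp_quadForm_piGaussian_le (hA : A.IsHermitian) (h : QuadFormBound A (1 / 4)) :
    Integrable (fun x => Real.exp (x ⬝ᵥ A *ᵥ x)) (piGaussian ι) ∧
      ∫ x, Real.exp (x ⬝ᵥ A *ᵥ x) ∂(piGaussian ι) ≤
        Real.exp (A.trace + 2 * (A * A).trace) := by
  classical
  obtain ⟨U, hU, hdiag⟩ := exists_orthogonal_diagonalization hA
  generalize hA.eigenvalues = e at hdiag
  subst hdiag
  have he : ∀ k, |e k| ≤ 1 / 4 := (quadFormBound_conj_diagonal_iff hU).1 h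
  have he_lt (k : ι) : e k < 1 / 2 := by linarith [(abs_le.1 (he k)).2]
  have h_rot : MeasurePreserving (Uᵀ *ᵥ ·) (piGaussian ι) (piGaussian ι) :=
    measurePreserving_mulVec_piGaussian (Unitary.star_mem hU)
  have h_int : Integrable (fun y : ι → ℝ => ∏ k, Real.exp (e k * y k ^ 2)) (piGaussian ι) :=
    Integrable.fintype_prod (f := fun k y => Real.exp (e k * y ^ 2))
      fun k => integrable_exp_mul_sq_gaussianReal (he_lt k)
  simp_rw [dotProduct_conj_diagonal_mulVec, Real.exp_sum]
  refine ⟨h_rot.integrable_comp_of_integrable h_int, ?_⟩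
  calc ∫ x, ∏ k, Real.exp (e k * (Uᵀ *ᵥ x) k ^ 2) ∂(piGaussian ι)
      = ∫ y, ∏ k, Real.exp (e k * y k ^ 2) ∂(piGaussian ι) := by
        rw [← integral_map (f := fun y : ι → ℝ => ∏ k, Real.exp (e k * y k ^ 2))
          h_rot.aemeasurable (by rw [h_rot.map_eq]; exact h_int.aestronglyMeasurable),
          h_rot.map_eq]
    _ = ∏ k, (√(1 - 2 * e k))⁻¹ := by
        rw [integral_fintype_prod_eq_prod (fun k (y : ℝ) => Real.exp (e k * y ^ 2))]
        simp_rw [integral_exp_mul_sq_gaussianReal (he_lt _)]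
    _ ≤ ∏ k, Real.exp (e k + 2 * e k ^ 2) :=
        Finset.prod_le_prod (fun k _ => by positivity) fun k _ =>
          inv_sqrt_one_sub_two_mul_le_exp (he k)
    _ = _ := by
        rw [conj_diagonal_mul_conj_diagonal hU, trace_conj_diagonal hU, trace_conj_diagonal hU,
          ← Real.exp_sum, Finset.sum_add_distrib, Finset.mul_sum]
        simp only [Pi.mul_apply, sq]

/-- The Rayleigh quotient `xᵗAx / xᵗx`; it takes the junk value `0` at `x = 0`. -/
noncomputable def rayleighQuot (A : Matrix ι ι ℝ) (x : ι → ℝ) : ℝ := (x ⬝ᵥ A *ᵥ x) / (x ⬝ᵥ x)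

lemma measurable_rayleighQuot (A : Matrix ι ι ℝ) : Measurable (rayleighQuot A) := by
  unfold rayleighQuot
  simp only [mulVec, dotProduct]
  fun_prop

lemma rayleighQuot_smul_vec (A : Matrix ι ι ℝ) {c : ℝ} (hc : c ≠ 0) (x : ι → ℝ) :
    rayleighQuot A (c • x) = rayleighQuot A x := by
  simp only [rayleighQuot, mulVec_smul, dotProduct_smul, smul_dotProduct, smul_eq_mul]
  rw [mul_div_mul_left _ _ hc, mul_div_mul_left _ _ hc]

lemma QuadFormBound.abs_rayleighQuot_le {c : ℝ} (h : QuadFormBound A c) (hc : 0 ≤ c)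
    (x : ι → ℝ) : |rayleighQuot A x| ≤ c := by
  have h_nonneg := dotProduct_self_nonneg_real x
  rw [rayleighQuot, abs_div, abs_of_nonneg h_nonneg]
  exact div_le_of_le_mul₀ h_nonneg hc (h x)

lemma dotProduct_self_mul_rayleighQuot (A : Matrix ι ι ℝ) (x : ι → ℝ) :
    (x ⬝ᵥ x) * rayleighQuot A x = x ⬝ᵥ A *ᵥ x := by
  by_cases h : x ⬝ᵥ x = 0
  · simp [dotProduct_self_eq_zero.1 h]
  · exact mul_div_cancel₀ _ h

lemma exp_mul_rayleighQuot_le (A : Matrix ι ι ℝ) (t : ℝ) (x : ι → ℝ) :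
    Real.exp (t * rayleighQuot A x) +
        (x ⬝ᵥ x - t) * (Real.exp (t * rayleighQuot A x) * rayleighQuot A x) ≤
      Real.exp (x ⬝ᵥ A *ᵥ x) := by
  rw [← dotProduct_self_mul_rayleighQuot A x]
  generalize rayleighQuot A x = q
  rw [show x ⬝ᵥ x * q = t * q + (x ⬝ᵥ x - t) * q by ring, Real.exp_add]
  nlinarith [mul_le_mul_of_nonneg_left (Real.add_one_le_exp ((x ⬝ᵥ x - t) * q))
    (Real.exp_pos (t * q)).le]

lemma abs_exp_mul_rayleighQuot_le {c : ℝ} (h : QuadFormBound A c) (hc : 0 ≤ c) (t : ℝ)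
    (x : ι → ℝ) : |Real.exp (t * rayleighQuot A x)| ≤ Real.exp (|t| * c) := by
  rw [Real.abs_exp, Real.exp_le_exp]
  calc t * rayleighQuot A x ≤ |t| * |rayleighQuot A x| := by
        rw [← abs_mul]; exact le_abs_self _
    _ ≤ |t| * c := by gcongr; exact h.abs_rayleighQuot_le hc x

lemma integrable_exp_mul_rayleighQuot {c : ℝ} (h : QuadFormBound A c) (hc : 0 ≤ c) (t : ℝ) :
    Integrable (fun x => Real.exp (t * rayleighQuot A x)) (piGaussian ι) :=
  Integrable.of_bound ((measurable_rayleighQuot A).const_mul t).exp.aestronglyMeasurable _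
    (ae_of_all _ (abs_exp_mul_rayleighQuot_le h hc t))

lemma integrable_dotProduct_self_piGaussian :
    Integrable (fun x : ι → ℝ => x ⬝ᵥ x) (piGaussian ι) := by
  simp_rw [dotProduct_self_eq_sum_sq]
  exact integrable_finsetSum _ fun i _ =>
    integrable_comp_eval (μ := fun _ : ι => gaussianReal 0 1) (i := i)
      (integrable_pow_gaussianReal 2 0 1)

-- Replacing `|x|²` by its mean `d` in the exponent only decreases the exponential moment: this is
-- Jensen's inequality conditionally on the direction `x / |x|`.
theorem integral_exp_card_mul_rayleighQuot_le (hA : A.IsHermitian)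
    (h : QuadFormBound A (1 / 4)) :
    ∫ x, Real.exp (Fintype.card ι * rayleighQuot A x) ∂(piGaussian ι) ≤
      Real.exp (A.trace + 2 * (A * A).trace) := by
  set d : ℝ := (Fintype.card ι : ℝ)
  let f : (ι → ℝ) → ℝ := fun x => Real.exp (d * rayleighQuot A x) * rayleighQuot A x
  have hf : Measurable f :=
    ((measurable_rayleighQuot A).const_mul d).exp.mul (measurable_rayleighQuot A)
  have hf_le (x : ι → ℝ) : |f x| ≤ Real.exp (|d| * (1 / 4)) * (1 / 4) := by
    rw [abs_mul]
    exact mul_le_mul (abs_exp_mul_rayleighQuot_le h (by norm_num) d x)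
      (h.abs_rayleighQuot_le (by norm_num) x) (abs_nonneg _) (Real.exp_pos _).le
  have hf_hom (c : ℝ) (x : ι → ℝ) (hc : 0 < c) : f (c • x) = f x := by
    simp only [f, rayleighQuot_smul_vec A hc.ne']
  have hf_int : Integrable (fun x => (x ⬝ᵥ x - d) * f x) (piGaussian ι) :=
    (integrable_dotProduct_self_piGaussian.sub (integrable_const d)).mul_bdd
      hf.aestronglyMeasurable (ae_of_all _ hf_le)
  have h_int := integrable_exp_mul_rayleighQuot h (by norm_num) d
  obtain ⟨h_int', h_quad⟩ := integral_exp_quadForm_piGaussian_le hA h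
  calc ∫ x, Real.exp (d * rayleighQuot A x) ∂(piGaussian ι)
      = ∫ x, Real.exp (d * rayleighQuot A x) + (x ⬝ᵥ x - d) * f x ∂(piGaussian ι) := by
        rw [integral_add h_int hf_int, integral_dotProduct_self_sub_card_mul hf hf_le hf_hom,
          add_zero]
    _ ≤ ∫ x, Real.exp (x ⬝ᵥ A *ᵥ x) ∂(piGaussian ι) :=
        integral_mono (h_int.add hf_int) h_int' (exp_mul_rayleighQuot_le A d)
    _ ≤ Real.exp (A.trace + 2 * (A * A).trace) := h_quad

end PiGaussian

lemma measureReal_pi_sum_ge_le_exp {Ω κ : Type*} [MeasurableSpace Ω] [Fintype κ] {μ : Measure Ω}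
    [IsProbabilityMeasure μ] {h : Ω → ℝ} {B : ℝ} (h_int : Integrable (fun x => Real.exp (h x)) μ)
    (hB : ∫ x, Real.exp (h x) ∂μ ≤ Real.exp B) (s : ℝ) :
    (Measure.pi fun _ : κ => μ).real {x | Fintype.card κ * s ≤ ∑ j, h (x j)} ≤
      Real.exp (Fintype.card κ * (B - s)) := by
  have h_prod_int : Integrable (fun x : κ → Ω => ∏ j, Real.exp (h (x j)))
      (Measure.pi fun _ => μ) :=
    Integrable.fintype_prod (f := fun (_ : κ) y => Real.exp (h y)) fun _ => h_int
  have h_prod : ∫ x : κ → Ω, ∏ j, Real.exp (h (x j)) ∂(Measure.pi fun _ => μ) ≤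
      Real.exp (Fintype.card κ * B) := by
    rw [integral_fintype_prod_eq_prod (fun (_ : κ) y => Real.exp (h y)), Finset.prod_const,
      Finset.card_univ, Real.exp_nat_mul]
    exact pow_le_pow_left₀ (integral_nonneg fun _ => (Real.exp_pos _).le) hB _
  have h_markov := mul_meas_ge_le_integral_of_nonneg
    (ae_of_all _ fun x => Finset.prod_nonneg fun j _ => (Real.exp_pos (h (x j))).le)
    h_prod_int (Real.exp (Fintype.card κ * s))
  simp_rw [← Real.exp_sum, Real.exp_le_exp] at h_markov h_prod
  rw [mul_sub, Real.exp_sub, le_div_iff₀ (Real.exp_pos _), mul_comm]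
  exact h_markov.trans h_prod

section UnitVec

variable {ι : Type*} [Fintype ι]

/-- The normalization `x / ‖x‖` of `x` to Euclidean length one; it takes the junk value `0` at
`x = 0`. -/
noncomputable def unitVec (x : ι → ℝ) : ι → ℝ :=
  (√(x ⬝ᵥ x))⁻¹ • x

lemma unitVec_dotProduct_mulVec_unitVec (A : Matrix ι ι ℝ) (x : ι → ℝ) :
    unitVec x ⬝ᵥ A *ᵥ unitVec x = rayleighQuot A x := by
  simp only [unitVec, mulVec_smul, smul_dotProduct, dotProduct_smul, smul_eq_mul]
  rw [← mul_assoc, ← mul_inv, Real.mul_self_sqrt (dotProduct_self_nonneg_real x), rayleighQuot,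
    inv_mul_eq_div]

lemma unitVec_dotProduct_self (x : ι → ℝ) :
    unitVec x ⬝ᵥ unitVec x = (x ⬝ᵥ x) / (x ⬝ᵥ x) := by
  classical
  simpa only [one_mulVec, rayleighQuot] using unitVec_dotProduct_mulVec_unitVec 1 x

lemma unitVec_dotProduct_self_of_ne_zero {x : ι → ℝ} (hx : x ≠ 0) :
    unitVec x ⬝ᵥ unitVec x = 1 := by
  rw [unitVec_dotProduct_self, div_self (mt dotProduct_self_eq_zero.1 hx)]

lemma unitVec_dotProduct_self_le_one (x : ι → ℝ) : unitVec x ⬝ᵥ unitVec x ≤ 1 := by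
  rw [unitVec_dotProduct_self]
  exact div_self_le_one _

lemma dotProduct_unitVec (x : ι → ℝ) : x ⬝ᵥ unitVec x = √(x ⬝ᵥ x) := by
  rw [unitVec, dotProduct_smul, smul_eq_mul, inv_mul_eq_div, Real.div_sqrt]

lemma sqrt_dotProduct_self_smul_unitVec (x : ι → ℝ) : √(x ⬝ᵥ x) • unitVec x = x := by
  rcases eq_or_ne x 0 with rfl | hx
  · simp [unitVec]
  · have h_pos : 0 < x ⬝ᵥ x :=
      (dotProduct_self_nonneg_real x).lt_of_ne' (mt dotProduct_self_eq_zero.1 hx)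
    exact smul_inv_smul₀ (Real.sqrt_pos.2 h_pos).ne' x

lemma unitVec_smul {c : ℝ} (hc : 0 < c) (x : ι → ℝ) : unitVec (c • x) = unitVec x := by
  simp only [unitVec, smul_dotProduct, dotProduct_smul, smul_eq_mul]
  rw [← mul_assoc, Real.sqrt_mul (mul_self_nonneg c), Real.sqrt_mul_self hc.le, smul_smul,
    _root_.mul_inv_rev, inv_mul_cancel_right₀ hc.ne']

lemma measurable_unitVec_apply (i : ι) : Measurable fun x : ι → ℝ => unitVec x i := by
  simp only [unitVec, Pi.smul_apply, smul_eq_mul]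
  exact (measurable_dotProduct_self.sqrt.inv).mul (measurable_pi_apply i)

lemma abs_unitVec_apply_le_one (x : ι → ℝ) (i : ι) : |unitVec x i| ≤ 1 := by
  rw [← sq_le_one_iff_abs_le_one]
  refine le_trans ?_ (unitVec_dotProduct_self_le_one x)
  rw [dotProduct_self_eq_sum_sq]
  exact Finset.single_le_sum (f := fun i => unitVec x i ^ 2) (fun i _ => sq_nonneg _)
    (Finset.mem_univ i)

end UnitVec

/-! ### Nets -/

section CoveringNumber

variable (E : Type*) [NormedAddCommGroup E] [NormedSpace ℝ E] [FiniteDimensional ℝ E]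

variable {E} in
lemma card_le_of_isSeparated_closedBall {s : Finset E}
    (hs : (s : Set E) ⊆ Metric.closedBall 0 1)
    (h_sep : Metric.IsSeparated (1 / 2 : NNReal) (s : Set E)) :
    s.card ≤ 5 ^ Module.finrank ℝ E := by
  classical
  have h_inj : Function.Injective ((2 : ℝ) • · : E → E) := smul_right_injective E two_ne_zero
  rw [← Finset.card_image_of_injective s h_inj]
  refine Besicovitch.card_le_of_separated _ (Finset.forall_mem_image.2 fun x hx => ?_)
    (Finset.forall_mem_image.2 fun x hx => Finset.forall_mem_image.2 fun y hy hxy => ?_)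
  · rw [norm_smul, Real.norm_two]
    linarith [mem_closedBall_zero_iff.1 (hs hx)]
  · have h_lt : ((1 / 2 : NNReal) : ENNReal) < edist x y := h_sep hx hy (ne_of_apply_ne _ hxy)
    rw [edist_nndist, ENNReal.coe_lt_coe, ← NNReal.coe_lt_coe, coe_nndist, dist_eq_norm] at h_lt
    rw [← smul_sub, norm_smul, Real.norm_two]
    push_cast at h_lt
    linarith

lemma packingNumber_closedBall_le :
    Metric.packingNumber (1 / 2) (Metric.closedBall (0 : E) 1) ≤
      ((5 ^ Module.finrank ℝ E : ℕ) : ℕ∞) := by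
  refine iSup_le fun C => iSup₂_le fun hC_sub hC_sep => ?_
  by_contra! h_lt
  obtain ⟨D, hD_sub, hD_card⟩ := Set.exists_subset_encard_eq (Order.add_one_le_of_lt h_lt)
  have hD_fin : D.Finite := Set.finite_of_encard_eq_coe (k := 5 ^ Module.finrank ℝ E + 1) hD_card
  lift D to Finset E using hD_fin
  have h_le := card_le_of_isSeparated_closedBall (hD_sub.trans hC_sub) (hC_sep.subset hD_sub)
  rw [Set.encard_coe_eq_coe_finsetCard] at hD_card
  exact absurd (Nat.cast_inj.1 hD_card) (by lia)

lemma exists_finset_closedBall_isCover :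
    ∃ N : Finset E, N.card ≤ 5 ^ Module.finrank ℝ E ∧ (∀ y ∈ N, ‖y‖ ≤ 1) ∧
      ∀ x : E, ‖x‖ ≤ 1 → ∃ y ∈ N, ‖x - y‖ ≤ 1 / 2 := by
  have h_card := (Metric.coveringNumber_le_packingNumber (1 / 2) _).trans
    (packingNumber_closedBall_le E)
  obtain ⟨N, hN_sub, hN_fin, hN_cover, hN_card⟩ := Metric.exists_set_encard_eq_coveringNumber
    (ne_top_of_le_ne_top (ENat.natCast_ne_top _) h_card)
  refine ⟨hN_fin.toFinset, ?_, fun y hy => ?_, fun x hx => ?_⟩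
  · rwa [← hN_card, hN_fin.encard_eq_coe_toFinset_card, Nat.cast_le] at h_card
  · exact mem_closedBall_zero_iff.1 (hN_sub (hN_fin.mem_toFinset.1 hy))
  · obtain ⟨y, hy, hxy⟩ := hN_cover (mem_closedBall_zero_iff.2 hx)
    refine ⟨y, hN_fin.mem_toFinset.2 hy, ?_⟩
    have h_le : edist x y ≤ ((1 / 2 : NNReal) : ENNReal) := hxy
    rw [edist_nndist, ENNReal.coe_le_coe, ← NNReal.coe_le_coe, coe_nndist, dist_eq_norm] at h_le
    exact_mod_cast h_le

end CoveringNumber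

section VectorNet

variable {ι : Type*} [Fintype ι] {N : Finset (ι → ℝ)} {t : ℝ}

/-- `N` is a `1/2`-net of the Euclidean unit ball, contained in the ball. The Euclidean distance is
spelled out with `⬝ᵥ` because `ι → ℝ` carries the supremum norm. -/
def IsVectorNet (N : Finset (ι → ℝ)) : Prop :=
  (∀ v ∈ N, v ⬝ᵥ v ≤ 1) ∧ ∀ v, v ⬝ᵥ v ≤ 1 → ∃ w ∈ N, (v - w) ⬝ᵥ (v - w) ≤ (1 / 2) ^ 2

lemma norm_toLp_sq (v : ι → ℝ) : ‖WithLp.toLp 2 v‖ ^ 2 = v ⬝ᵥ v := by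
  rw [EuclideanSpace.norm_sq_eq]
  simp [dotProduct, sq]

variable (ι) in
lemma exists_isVectorNet :
    ∃ N : Finset (ι → ℝ), N.card ≤ 5 ^ Fintype.card ι ∧ IsVectorNet N := by
  classical
  obtain ⟨N, hN_card, hN_le, hN⟩ := exists_finset_closedBall_isCover (EuclideanSpace ℝ ι)
  rw [finrank_euclideanSpace] at hN_card
  refine ⟨N.image WithLp.ofLp, Finset.card_image_le.trans hN_card,
    Finset.forall_mem_image.2 fun y hy => ?_, fun v hv => ?_⟩
  · rw [← norm_toLp_sq]
    exact pow_le_one₀ (norm_nonneg _) (hN_le y hy)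
  · rw [← norm_toLp_sq, sq_le_one_iff₀ (norm_nonneg _)] at hv
    obtain ⟨y, hy, hvy⟩ := hN _ hv
    refine ⟨y.ofLp, Finset.mem_image_of_mem _ hy, ?_⟩
    rw [← norm_toLp_sq, WithLp.toLp_sub]
    exact pow_le_pow_left₀ (norm_nonneg _) hvy 2

lemma abs_dotProduct_le_sqrt_mul_of_dotProduct_self_le (a : ι → ℝ) {v : ι → ℝ} {r : ℝ}
    (hr : 0 ≤ r) (hv : v ⬝ᵥ v ≤ r ^ 2) : |a ⬝ᵥ v| ≤ √(a ⬝ᵥ a) * r := by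
  refine abs_le_of_sq_le_sq ?_ (by positivity)
  rw [mul_pow, Real.sq_sqrt (dotProduct_self_nonneg_real a)]
  exact (dotProduct_sq_le a v).trans
    (mul_le_mul_of_nonneg_left hv (dotProduct_self_nonneg_real a))

namespace IsVectorNet

lemma abs_dotProduct_le (hN : IsVectorNet N) {a : ι → ℝ} (h : ∀ w ∈ N, |a ⬝ᵥ w| ≤ t)
    {v : ι → ℝ} (hv : v ⬝ᵥ v ≤ 1) : |a ⬝ᵥ v| ≤ 2 * t := by
  obtain ⟨w, hw, h_dist⟩ := hN.2 _ (unitVec_dotProduct_self_le_one a)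
  have h_diff := abs_dotProduct_le_sqrt_mul_of_dotProduct_self_le a (by norm_num) h_dist
  rw [dotProduct_sub, dotProduct_unitVec] at h_diff
  have h_le := abs_dotProduct_le_sqrt_mul_of_dotProduct_self_le a zero_le_one
    (hv.trans_eq (one_pow 2).symm)
  linarith [abs_le.1 h_diff, abs_le.1 (h w hw)]

lemma quadFormBound (hN : IsVectorNet N) {A : Matrix ι ι ℝ}
    (h : ∀ v ∈ N, ∀ w ∈ N, |v ⬝ᵥ A *ᵥ w| ≤ t) : QuadFormBound A (4 * t) := by
  have h_right {w : ι → ℝ} (hw : w ⬝ᵥ w ≤ 1) : ∀ v ∈ N, |v ⬝ᵥ A *ᵥ w| ≤ 2 * t := by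
    simp only [dotProduct_mulVec] at h ⊢
    exact fun v hv => hN.abs_dotProduct_le (h v hv) hw
  have h_ball {w : ι → ℝ} (hw : w ⬝ᵥ w ≤ 1) : |w ⬝ᵥ A *ᵥ w| ≤ 4 * t := by
    have h_left := h_right hw
    simp only [dotProduct_comm _ (A *ᵥ w)] at h_left ⊢
    linarith [hN.abs_dotProduct_le h_left hw]
  intro v
  rcases (dotProduct_self_nonneg_real v).eq_or_lt' with hv | hv
  · simp [dotProduct_self_eq_zero.1 hv]
  · have h_unit := h_ball (unitVec_dotProduct_self_le_one v)
    rwa [unitVec_dotProduct_mulVec_unitVec, rayleighQuot, abs_div, abs_of_pos hv,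
      div_le_iff₀ hv] at h_unit

end IsVectorNet

end VectorNet

section MatrixNet

variable {ι : Type*} [Fintype ι] {A : Matrix ι ι ℝ} {c : ℝ}

variable (ι) in
/-- The space of trace-free symmetric matrices. -/
def traceFreeHermitian : Submodule ℝ (Matrix ι ι ℝ) where
  carrier := {E | E.IsHermitian ∧ E.trace = 0}
  add_mem' hE hF := ⟨hE.1.add hF.1, by rw [trace_add, hE.2, hF.2, add_zero]⟩
  zero_mem' := ⟨isHermitian_zero, trace_zero _ _⟩
  smul_mem' s _ hE := ⟨hE.1.smul (IsSelfAdjoint.all s), by rw [trace_smul, hE.2, smul_zero]⟩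

/-- `M` is a `1/2`-net, for the operator norm, of the unit ball of `traceFreeHermitian ι`, contained
in that ball. -/
def IsMatrixNet (M : Finset (Matrix ι ι ℝ)) : Prop :=
  (∀ F ∈ M, F ∈ traceFreeHermitian ι ∧ QuadFormBound F 1) ∧
    ∀ E ∈ traceFreeHermitian ι, QuadFormBound E 1 → ∃ F ∈ M, QuadFormBound (E - F) (1 / 2)

open scoped Matrix.Norms.L2Operator

lemma quadFormBound_of_norm_le [DecidableEq ι] (h : ‖A‖ ≤ c) : QuadFormBound A c := by
  intro v
  calc |v ⬝ᵥ A *ᵥ v| = |inner ℝ (WithLp.toLp 2 (A *ᵥ v)) (WithLp.toLp 2 v)| := by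
        simp [PiLp.inner_apply, dotProduct]
    _ ≤ ‖WithLp.toLp 2 (A *ᵥ v)‖ * ‖WithLp.toLp 2 v‖ := abs_real_inner_le_norm _ _
    _ ≤ c * ‖WithLp.toLp 2 v‖ * ‖WithLp.toLp 2 v‖ := by
        gcongr
        exact (l2_opNorm_mulVec A (WithLp.toLp 2 v)).trans
          (mul_le_mul_of_nonneg_right h (norm_nonneg _))
    _ = c * (v ⬝ᵥ v) := by rw [← norm_toLp_sq, mul_assoc, sq]

lemma QuadFormBound.norm_le [DecidableEq ι] (h : QuadFormBound A c) (hA : A.IsHermitian)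
    (hc : 0 ≤ c) : ‖A‖ ≤ c := by
  rw [l2_opNorm_def]
  refine ContinuousLinearMap.opNorm_le_bound _ hc fun x => abs_le_of_sq_le_sq' ?_
    (by positivity) |>.2
  have h_sq := h.dotProduct_mulVec_self_le hA x.ofLp
  rwa [← norm_toLp_sq, ← norm_toLp_sq, ← mul_pow] at h_sq

variable (ι) in
lemma exists_isMatrixNet :
    ∃ M : Finset (Matrix ι ι ℝ), M.card ≤ 5 ^ (Fintype.card ι ^ 2) ∧ IsMatrixNet M := by
  classical
  obtain ⟨M, hM_card, hM_le, hM⟩ := exists_finset_closedBall_isCover (traceFreeHermitian ι)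
  have h_rank : Module.finrank ℝ (traceFreeHermitian ι) ≤ Fintype.card ι ^ 2 := by
    refine (Submodule.finrank_le _).trans_eq ?_
    rw [Module.finrank_matrix, Module.finrank_self, mul_one, sq]
  refine ⟨M.image Subtype.val,
    Finset.card_image_le.trans (hM_card.trans (Nat.pow_le_pow_right (by norm_num) h_rank)),
    Finset.forall_mem_image.2 fun F hF => ⟨F.2, quadFormBound_of_norm_le (hM_le F hF)⟩,
    fun E hE hE_le => ?_⟩
  obtain ⟨F, hF, h⟩ := hM ⟨E, hE⟩ (hE_le.norm_le hE.1 zero_le_one)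
  exact ⟨F, Finset.mem_image_of_mem _ hF, quadFormBound_of_norm_le h⟩

end MatrixNet

section NetBounds

variable {n d : ℕ} {u : Fin n → Fin d → ℝ} {E : Matrix (Fin d) (Fin d) ℝ} {C K ε e e₁ e₂ t : ℝ}

/-- The mean of `|uⱼᵗ E uⱼ|` over the sample, a seminorm in `E`. -/
noncomputable def meanAbsQuadForm (u : Fin n → Fin d → ℝ) (E : Matrix (Fin d) (Fin d) ℝ) : ℝ :=
  (n : ℝ)⁻¹ * ∑ j, |u j ⬝ᵥ E *ᵥ u j|

/-- The mean excess of `d (uⱼ ⬝ w)²` over the level `K`. -/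
noncomputable def meanExcess (K : ℝ) (u : Fin n → Fin d → ℝ) (w : Fin d → ℝ) : ℝ :=
  (n : ℝ)⁻¹ * ∑ j, max (d * (u j ⬝ᵥ w) ^ 2 - K) 0

lemma QuadFormBound.meanAbsQuadForm_le (hE : QuadFormBound E C) (hC : 0 ≤ C)
    (hu : ∀ j, u j ⬝ᵥ u j = 1) : meanAbsQuadForm u E ≤ C := by
  have h_sum : ∑ j, |u j ⬝ᵥ E *ᵥ u j| ≤ n * C := by
    simpa using Finset.sum_le_card_nsmul Finset.univ (fun j => |u j ⬝ᵥ E *ᵥ u j|) C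
      fun j _ => by simpa only [hu j, mul_one] using hE (u j)
  exact inv_mul_le_of_le_mul₀ n.cast_nonneg hC h_sum

lemma meanAbsQuadForm_le_add_sub (u : Fin n → Fin d → ℝ) (E F : Matrix (Fin d) (Fin d) ℝ) :
    meanAbsQuadForm u E ≤ meanAbsQuadForm u F + meanAbsQuadForm u (E - F) := by
  rw [meanAbsQuadForm, meanAbsQuadForm, meanAbsQuadForm, ← mul_add, ← Finset.sum_add_distrib]
  gcongr with j
  rw [sub_mulVec, dotProduct_sub]
  linarith [abs_sub_abs_le_abs_sub (u j ⬝ᵥ E *ᵥ u j) (u j ⬝ᵥ F *ᵥ u j)]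

lemma meanAbsQuadForm_smul (u : Fin n → Fin d → ℝ) (s : ℝ) (E : Matrix (Fin d) (Fin d) ℝ) :
    meanAbsQuadForm u (s • E) = |s| * meanAbsQuadForm u E := by
  simp only [meanAbsQuadForm, smul_mulVec, dotProduct_smul, smul_eq_mul, abs_mul,
    ← Finset.mul_sum]
  ring

namespace IsMatrixNet

variable {M : Finset (Matrix (Fin d) (Fin d) ℝ)}

lemma meanAbsQuadForm_le_add_half (hM : IsMatrixNet M) (h : ∀ F ∈ M, meanAbsQuadForm u F ≤ e)
    (hC : ∀ E ∈ traceFreeHermitian (Fin d), QuadFormBound E 1 → meanAbsQuadForm u E ≤ C)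
    (hE : E ∈ traceFreeHermitian (Fin d)) (hE_le : QuadFormBound E 1) :
    meanAbsQuadForm u E ≤ e + C / 2 := by
  obtain ⟨F, hF, hEF⟩ := hM.2 E hE hE_le
  have h_diff := hC ((2 : ℝ) • (E - F))
    (Submodule.smul_mem _ _ (Submodule.sub_mem _ hE (hM.1 F hF).1))
    (by simpa using hEF.smul 2)
  rw [meanAbsQuadForm_smul, abs_two] at h_diff
  linarith [meanAbsQuadForm_le_add_sub u E F, h F hF]

lemma meanAbsQuadForm_le (hM : IsMatrixNet M) (hu : ∀ j, u j ⬝ᵥ u j = 1)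
    (h : ∀ F ∈ M, meanAbsQuadForm u F ≤ e) (hE : E ∈ traceFreeHermitian (Fin d))
    (hE_le : QuadFormBound E 1) : meanAbsQuadForm u E ≤ 2 * e := by
  let S : Set ℝ := meanAbsQuadForm u '' {E | E ∈ traceFreeHermitian (Fin d) ∧ QuadFormBound E 1}
  have hS_bdd : BddAbove S :=
    ⟨1, Set.forall_mem_image.2 fun E hE => hE.2.meanAbsQuadForm_le zero_le_one hu⟩
  have h_le_sSup (E : Matrix (Fin d) (Fin d) ℝ) (hE : E ∈ traceFreeHermitian (Fin d))
      (hE_le : QuadFormBound E 1) : meanAbsQuadForm u E ≤ sSup S :=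
    le_csSup hS_bdd (Set.mem_image_of_mem _ ⟨hE, hE_le⟩)
  have h_sSup_le : sSup S ≤ e + sSup S / 2 :=
    csSup_le ⟨_, Set.mem_image_of_mem _ ⟨hE, hE_le⟩⟩ <| Set.forall_mem_image.2 fun E hE =>
      hM.meanAbsQuadForm_le_add_half h h_le_sSup hE.1 hE.2
  linarith [h_le_sSup E hE hE_le]

end IsMatrixNet

lemma dotProduct_weightedScatter_mulVec_self_le_truncation {c : Fin n → ℝ} (hc_nonneg : 0 ≤ c)
    (hc_le : c ≤ 1) (K : ℝ) (w : Fin d → ℝ) :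
    w ⬝ᵥ weightedScatter c u *ᵥ w ≤ K * ((n : ℝ)⁻¹ * ∑ j, c j) + meanExcess K u w := by
  have h_split (j : Fin n) :
      c j * (d * (u j ⬝ᵥ w) ^ 2) ≤ K * c j + max (d * (u j ⬝ᵥ w) ^ 2 - K) 0 := by
    have h_max := le_max_left (d * (u j ⬝ᵥ w) ^ 2 - K) 0
    have h_nonneg := le_max_right (d * (u j ⬝ᵥ w) ^ 2 - K) 0
    nlinarith [mul_le_mul_of_nonneg_left h_max (hc_nonneg j),
      mul_le_mul_of_nonneg_right (hc_le j) h_nonneg, Pi.one_apply (M := fun _ => ℝ) j]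
  calc w ⬝ᵥ weightedScatter c u *ᵥ w = (n : ℝ)⁻¹ * ∑ j, c j * (d * (u j ⬝ᵥ w) ^ 2) := by
        rw [dotProduct_weightedScatter_mulVec_self, Finset.mul_sum, Finset.mul_sum]
        exact Finset.sum_congr rfl fun j _ => by ring
    _ ≤ (n : ℝ)⁻¹ * ∑ j, (K * c j + max (d * (u j ⬝ᵥ w) ^ 2 - K) 0) := by
        gcongr with j
        exact h_split j
    _ = K * ((n : ℝ)⁻¹ * ∑ j, c j) + meanExcess K u w := by
        rw [meanExcess, Finset.sum_add_distrib, ← Finset.mul_sum]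
        ring

lemma abs_dotProduct_weightedScatter_mulVec_le {c : Fin n → ℝ} (hc : 0 ≤ c) (v w : Fin d → ℝ) :
    |v ⬝ᵥ weightedScatter c u *ᵥ w| ≤
      (v ⬝ᵥ weightedScatter c u *ᵥ v + w ⬝ᵥ weightedScatter c u *ᵥ w) / 2 := by
  simp only [dotProduct_weightedScatter_mulVec]
  rw [abs_mul, abs_of_nonneg (by positivity), ← mul_add, ← Finset.sum_add_distrib, mul_div_assoc,
    Finset.sum_div]
  gcongr
  refine (Finset.abs_sum_le_sum_abs _ _).trans (Finset.sum_le_sum fun j _ => ?_)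
  have h_amgm := two_mul_le_add_sq |u j ⬝ᵥ v| |u j ⬝ᵥ w|
  rw [sq_abs, sq_abs] at h_amgm
  rw [abs_mul, abs_mul, abs_of_nonneg (hc j)]
  linarith [mul_le_mul_of_nonneg_left h_amgm (hc j)]

lemma IsVectorNet.quadFormBound_weightedScatter {N : Finset (Fin d → ℝ)} (hN : IsVectorNet N)
    {c : Fin n → ℝ} (hc : 0 ≤ c) (h : ∀ w ∈ N, w ⬝ᵥ weightedScatter c u *ᵥ w ≤ t) :
    QuadFormBound (weightedScatter c u) (4 * t) :=
  hN.quadFormBound fun v hv w hw => by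
    linarith [abs_dotProduct_weightedScatter_mulVec_le (u := u) hc v w, h v hv, h w hw]

lemma scatterContracts_of_unit (hu : ∀ j, u j ⬝ᵥ u j = 1)
    (h : ∀ E ∈ traceFreeHermitian (Fin d), QuadFormBound E 1 →
      QuadFormBound (weightedScatter |fun j => u j ⬝ᵥ E *ᵥ u j| u) ε) : ScatterContracts u ε := by
  intro E δ hE hE_tr hE_le
  rcases le_or_gt δ 0 with hδ | hδ
  · have h_zero : |fun j => u j ⬝ᵥ E *ᵥ u j| = 0 := funext fun j => by
      have h_le := hE_le (u j)
      rw [hu j, mul_one] at h_le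
      exact le_antisymm (h_le.trans hδ) (abs_nonneg _)
    intro v
    have hv : δ * (v ⬝ᵥ v) = 0 :=
      le_antisymm (mul_nonpos_of_nonpos_of_nonneg hδ (dotProduct_self_nonneg_real v))
        ((abs_nonneg _).trans (hE_le v))
    rw [h_zero, mul_assoc, hv]
    simp [weightedScatter]
  · have h_unit := h (δ⁻¹ • E) (Submodule.smul_mem _ _ ⟨hE, hE_tr⟩)
      (by simpa [abs_of_pos hδ, hδ.ne'] using hE_le.smul δ⁻¹)
    have h_smul : |fun j => u j ⬝ᵥ E *ᵥ u j| = δ • |fun j => u j ⬝ᵥ (δ⁻¹ • E) *ᵥ u j| := by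
      funext j
      simp [smul_mulVec, abs_mul, abs_of_pos hδ, hδ.ne']
    rw [h_smul, weightedScatter_smul, mul_comm]
    simpa only [abs_of_pos hδ] using h_unit.smul δ

/-- Where `d (uⱼ ⬝ w)² ≤ K` the mean of `|uⱼᵗ E uⱼ|` is gained, elsewhere `|uⱼᵗ E uⱼ| ≤ 1`. -/
lemma scatterContracts_of_nets {N : Finset (Fin d → ℝ)} (hN : IsVectorNet N)
    {M : Finset (Matrix (Fin d) (Fin d) ℝ)} (hM : IsMatrixNet M) (hu : ∀ j, u j ⬝ᵥ u j = 1)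
    (hK : 0 ≤ K) (h₁ : ∀ F ∈ M, meanAbsQuadForm u F ≤ e₁) (h₂ : ∀ w ∈ N, meanExcess K u w ≤ e₂) :
    ScatterContracts u (4 * (2 * K * e₁ + e₂)) := by
  refine scatterContracts_of_unit hu fun E hE hE_le =>
    hN.quadFormBound_weightedScatter (abs_nonneg _) fun w hw => ?_
  have h_trunc := dotProduct_weightedScatter_mulVec_self_le_truncation (u := u)
    (abs_nonneg fun j => u j ⬝ᵥ E *ᵥ u j)
    (fun j => by simpa [hu j] using hE_le (u j)) K w
  have h_mean := mul_le_mul_of_nonneg_left (hM.meanAbsQuadForm_le hu h₁ hE hE_le) hK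
  simp only [Pi.abs_apply] at h_trunc
  rw [meanAbsQuadForm] at h_mean
  linarith [h₂ w hw]

end NetBounds

/-! ### Tail bounds for the sample directions -/

section SymVecMulVec

variable {ι : Type*} (v w : ι → ℝ)

/-- The symmetrized rank-one matrix `(v wᵗ + w vᵗ) / 2`, with quadratic form `(x ⬝ v) (x ⬝ w)`. -/
noncomputable def symVecMulVec : Matrix ι ι ℝ :=
  (2⁻¹ : ℝ) • (vecMulVec v w + vecMulVec w v)

lemma isHermitian_symVecMulVec : (symVecMulVec v w).IsHermitian := by
  ext i k
  simp only [symVecMulVec, conjTranspose_apply, Matrix.smul_apply, Matrix.add_apply,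
    vecMulVec_apply, star_trivial, smul_eq_mul]
  ring

variable [Fintype ι]

lemma dotProduct_symVecMulVec_mulVec (x : ι → ℝ) :
    x ⬝ᵥ symVecMulVec v w *ᵥ x = (x ⬝ᵥ v) * (x ⬝ᵥ w) := by
  simp only [symVecMulVec, smul_mulVec, add_mulVec, vecMulVec_mulVec, op_smul_eq_smul,
    dotProduct_smul, dotProduct_add, smul_eq_mul, dotProduct_comm v x, dotProduct_comm w x]
  ring

lemma trace_symVecMulVec : (symVecMulVec v w).trace = v ⬝ᵥ w := by
  simp only [symVecMulVec, trace_smul, trace_add, trace_vecMulVec, dotProduct_comm w v, smul_eq_mul]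
  ring

variable {v w}

lemma quadFormBound_symVecMulVec (hv : v ⬝ᵥ v ≤ 1) (hw : w ⬝ᵥ w ≤ 1) :
    QuadFormBound (symVecMulVec v w) 1 := by
  intro x
  have hxv := abs_dotProduct_le_sqrt_mul_of_dotProduct_self_le x zero_le_one
    (hv.trans_eq (one_pow 2).symm)
  have hxw := abs_dotProduct_le_sqrt_mul_of_dotProduct_self_le x zero_le_one
    (hw.trans_eq (one_pow 2).symm)
  rw [mul_one] at hxv hxw
  calc |x ⬝ᵥ symVecMulVec v w *ᵥ x| = |x ⬝ᵥ v| * |x ⬝ᵥ w| := by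
        rw [dotProduct_symVecMulVec_mulVec, abs_mul]
    _ ≤ √(x ⬝ᵥ x) * √(x ⬝ᵥ x) := mul_le_mul hxv hxw (abs_nonneg _) (Real.sqrt_nonneg _)
    _ = 1 * (x ⬝ᵥ x) := by rw [Real.mul_self_sqrt (dotProduct_self_nonneg_real x), one_mul]

lemma trace_symVecMulVec_mul_self_le_one (hv : v ⬝ᵥ v ≤ 1) (hw : w ⬝ᵥ w ≤ 1) :
    (symVecMulVec v w * symVecMulVec v w).trace ≤ 1 := by
  have h_trace : (symVecMulVec v w * symVecMulVec v w).trace =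
      ((v ⬝ᵥ w) ^ 2 + (v ⬝ᵥ v) * (w ⬝ᵥ w)) / 2 := by
    simp only [symVecMulVec, smul_mul_smul_comm, add_mul, mul_add, vecMulVec_mul_vecMulVec,
      trace_smul, trace_add, trace_vecMulVec, dotProduct_smul, smul_eq_mul, dotProduct_comm w v]
    ring
  have h_mul := mul_le_one₀ hv (dotProduct_self_nonneg_real w) hw
  linarith [dotProduct_sq_le v w]

end SymVecMulVec

section RayleighTails

variable {κ ι : Type*} [Fintype κ] [Fintype ι] {A : Matrix ι ι ℝ} {s t e : ℝ}

lemma rayleighQuot_smul (s : ℝ) (A : Matrix ι ι ℝ) (x : ι → ℝ) :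
    rayleighQuot (s • A) x = s * rayleighQuot A x := by
  simp only [rayleighQuot, smul_mulVec, dotProduct_smul, smul_eq_mul, mul_div_assoc]

lemma integral_exp_mul_rayleighQuot_le (hA : A.IsHermitian) (h : QuadFormBound A 1)
    (hs : |s| ≤ 1 / 4) :
    ∫ x, Real.exp (Fintype.card ι * s * rayleighQuot A x) ∂(piGaussian ι) ≤
      Real.exp (s * A.trace + 2 * (s ^ 2 * (A * A).trace)) := by
  have h_mgf := integral_exp_card_mul_rayleighQuot_le (hA.smul (IsSelfAdjoint.all s))
    ((h.smul s).mono (by rwa [mul_one]))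
  simpa only [rayleighQuot_smul, ← mul_assoc, trace_smul, smul_mul_smul_comm, smul_eq_mul,
    ← sq] using h_mgf

lemma measureReal_sum_rayleighQuot_ge_le (hA : A.IsHermitian) (h : QuadFormBound A 1)
    (hA_sq : (A * A).trace ≤ 1) (ht : 0 ≤ t) (ht_le : t ≤ 1) :
    (gaussianSample κ ι).real
        {x | Fintype.card κ * (A.trace + t) ≤ ∑ j, Fintype.card ι * rayleighQuot A (x j)} ≤
      Real.exp (-(Fintype.card κ * t ^ 2 / 8)) := by
  have h_mgf : ∫ x, Real.exp (Fintype.card ι * (t / 4) * rayleighQuot A x) ∂(piGaussian ι) ≤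
      Real.exp (t / 4 * A.trace + t ^ 2 / 8) := by
    refine (integral_exp_mul_rayleighQuot_le hA h (by rw [abs_of_nonneg] <;> linarith)).trans
      (Real.exp_le_exp.2 ?_)
    linarith [mul_le_mul_of_nonneg_left hA_sq (sq_nonneg (t / 4))]
  have h_chernoff := measureReal_pi_sum_ge_le_exp (κ := κ)
    (integrable_exp_mul_rayleighQuot h zero_le_one _) h_mgf (t / 4 * (A.trace + t))
  rw [show (Fintype.card κ : ℝ) * (t / 4 * A.trace + t ^ 2 / 8 - t / 4 * (A.trace + t)) =
    -(Fintype.card κ * t ^ 2 / 8) by ring] at h_chernoff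
  refine (measureReal_mono fun x hx => ?_).trans h_chernoff
  calc (Fintype.card κ : ℝ) * (t / 4 * (A.trace + t))
      = t / 4 * (Fintype.card κ * (A.trace + t)) := by ring
    _ ≤ t / 4 * ∑ j, Fintype.card ι * rayleighQuot A (x j) := by
        gcongr
        exact hx
    _ = ∑ j, Fintype.card ι * (t / 4) * rayleighQuot A (x j) := by
        rw [Finset.mul_sum]
        exact Finset.sum_congr rfl fun j _ => by ring

lemma measureReal_abs_sum_rayleighQuot_sub_trace_ge_le (hA : A.IsHermitian)
    (h : QuadFormBound A 1) (hA_sq : (A * A).trace ≤ 1) (ht : 0 ≤ t) (ht_le : t ≤ 1) :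
    (gaussianSample κ ι).real {x | Fintype.card κ * t ≤
        |∑ j, Fintype.card ι * rayleighQuot A (x j) - Fintype.card κ * A.trace|} ≤
      2 * Real.exp (-(Fintype.card κ * t ^ 2 / 8)) := by
  have h_upper := measureReal_sum_rayleighQuot_ge_le (κ := κ) hA h hA_sq ht ht_le
  have h_lower := measureReal_sum_rayleighQuot_ge_le (κ := κ) (A := -A) hA.neg
    (by simpa using h.smul (-1)) (by rwa [neg_mul_neg]) ht ht_le
  have h_neg (x : ι → ℝ) : rayleighQuot (-A) x = -rayleighQuot A x := by
    simpa using rayleighQuot_smul (-1) A x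
  simp only [trace_neg, h_neg, mul_neg, Finset.sum_neg_distrib] at h_lower
  calc _ ≤ (gaussianSample κ ι).real
        ({x | Fintype.card κ * (A.trace + t) ≤ ∑ j, Fintype.card ι * rayleighQuot A (x j)} ∪
          {x | Fintype.card κ * (-A.trace + t) ≤
            -∑ j, Fintype.card ι * rayleighQuot A (x j)}) := by
        refine measureReal_mono fun x hx => ?_
        rw [Set.mem_ofPred_eq, le_abs] at hx
        rw [Set.mem_union, Set.mem_ofPred_eq, Set.mem_ofPred_eq]
        exact hx.imp (fun hx => by linarith) fun hx => by linarith
    _ ≤ _ := (measureReal_union_le _ _).trans (by linarith)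

lemma exp_three_div_eight_le_two : Real.exp (3 / 8) ≤ 2 := by
  refine (abs_le_of_sq_le_sq' ?_ zero_le_two).2
  rw [← Real.exp_nat_mul]
  have h_le : Real.exp ((2 : ℕ) * (3 / 8)) ≤ Real.exp 1 := Real.exp_le_exp.2 (by norm_num)
  linarith [Real.exp_one_lt_d9]

lemma exp_excess_div_four_le (a K : ℝ) :
    Real.exp (max (a - K) 0 / 4) ≤ 1 + Real.exp (-K / 4) * Real.exp (a / 4) := by
  rw [← Real.exp_add]
  rcases max_cases (a - K) 0 with ⟨h_max, -⟩ | ⟨h_max, -⟩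
  · rw [h_max, show (a - K) / 4 = -K / 4 + a / 4 by ring]
    linarith
  · rw [h_max, zero_div, Real.exp_zero]
    linarith [Real.exp_pos (-K / 4 + a / 4)]

lemma integral_exp_excess_rayleighQuot_le (hA : A.IsHermitian) (h : QuadFormBound A 1)
    (hA_tr : A.trace ≤ 1) (hA_sq : (A * A).trace ≤ 1) (K : ℝ) :
    Integrable (fun x => Real.exp (max (Fintype.card ι * rayleighQuot A x - K) 0 / 4))
        (piGaussian ι) ∧
      ∫ x, Real.exp (max (Fintype.card ι * rayleighQuot A x - K) 0 / 4) ∂(piGaussian ι) ≤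
        Real.exp (2 * Real.exp (-K / 4)) := by
  have h_div (x : ι → ℝ) :
      Fintype.card ι * rayleighQuot A x / 4 = Fintype.card ι * (1 / 4) * rayleighQuot A x := by
    ring
  have h_int : Integrable (fun x => Real.exp (Fintype.card ι * rayleighQuot A x / 4))
      (piGaussian ι) := by
    simpa only [h_div] using integrable_exp_mul_rayleighQuot h zero_le_one _
  have h_mgf : ∫ x, Real.exp (Fintype.card ι * rayleighQuot A x / 4) ∂(piGaussian ι) ≤ 2 := by
    simp only [h_div]
    exact (integral_exp_mul_rayleighQuot_le hA h (by norm_num)).trans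
      ((Real.exp_le_exp.2 (by linarith)).trans exp_three_div_eight_le_two)
  have h_dom := (integrable_const (μ := piGaussian ι) (1 : ℝ)).add
    (h_int.const_mul (Real.exp (-K / 4)))
  have h_meas : Measurable fun x => max (Fintype.card ι * rayleighQuot A x - K) 0 / 4 :=
    ((((measurable_rayleighQuot A).const_mul _).sub_const K).max measurable_const).div_const 4
  have h_exp_int := h_dom.mono' h_meas.exp.aestronglyMeasurable (ae_of_all _ fun x => by
    rw [Real.norm_eq_abs, Real.abs_exp]
    exact exp_excess_div_four_le _ K)
  refine ⟨h_exp_int, ?_⟩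
  calc ∫ x, Real.exp (max (Fintype.card ι * rayleighQuot A x - K) 0 / 4) ∂(piGaussian ι)
      ≤ ∫ x, 1 + Real.exp (-K / 4) * Real.exp (Fintype.card ι * rayleighQuot A x / 4)
          ∂(piGaussian ι) := integral_mono h_exp_int h_dom fun x => exp_excess_div_four_le _ K
    _ ≤ 2 * Real.exp (-K / 4) + 1 := by
        rw [integral_add (integrable_const _) (h_int.const_mul _), integral_const_mul,
          integral_const, probReal_univ, one_smul]
        linarith [mul_le_mul_of_nonneg_left h_mgf (Real.exp_pos (-K / 4)).le]
    _ ≤ Real.exp (2 * Real.exp (-K / 4)) := Real.add_one_le_exp _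

lemma measureReal_sum_excess_rayleighQuot_ge_le (hA : A.IsHermitian) (h : QuadFormBound A 1)
    (hA_tr : A.trace ≤ 1) (hA_sq : (A * A).trace ≤ 1) (K e : ℝ) :
    (gaussianSample κ ι).real
        {x | Fintype.card κ * e ≤ ∑ j, max (Fintype.card ι * rayleighQuot A (x j) - K) 0} ≤
      Real.exp (Fintype.card κ * (2 * Real.exp (-K / 4) - e / 4)) := by
  obtain ⟨h_int, h_le⟩ := integral_exp_excess_rayleighQuot_le hA h hA_tr hA_sq K
  refine (measureReal_mono fun x hx => ?_).trans
    (measureReal_pi_sum_ge_le_exp (κ := κ) h_int h_le (e / 4))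
  rw [Set.mem_ofPred_eq] at hx ⊢
  rw [← Finset.sum_div]
  linarith

lemma QuadFormBound.trace_mul_self_le {c : ℝ} (h : QuadFormBound A c) (hA : A.IsHermitian) :
    (A * A).trace ≤ c ^ 2 * Fintype.card ι := by
  classical
  have h_diag (k : ι) : (A * A) k k ≤ c ^ 2 := by
    have h_row : A k = A.col k := funext (hA.apply · k)
    have h_le := h.dotProduct_mulVec_self_le hA (Pi.single k 1)
    rw [mulVec_single_one, single_one_dotProduct, Pi.single_eq_same, mul_one] at h_le
    rw [Matrix.mul_apply', h_row]
    exact h_le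
  calc (A * A).trace ≤ Fintype.card ι • c ^ 2 :=
        Finset.sum_le_card_nsmul Finset.univ _ _ fun k _ => h_diag k
    _ = c ^ 2 * Fintype.card ι := by rw [nsmul_eq_mul, mul_comm]

lemma integral_exp_abs_rayleighQuot_le (hA : A ∈ traceFreeHermitian ι) (h : QuadFormBound A 1)
    (hs : |s| ≤ 1 / 4) :
    Integrable (fun x => Real.exp |Fintype.card ι * s * rayleighQuot A x|) (piGaussian ι) ∧
      ∫ x, Real.exp |Fintype.card ι * s * rayleighQuot A x| ∂(piGaussian ι) ≤
        Real.exp (Real.log 2 + 2 * s ^ 2 * Fintype.card ι) := by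
  have h_int (r : ℝ) : Integrable (fun x => Real.exp (Fintype.card ι * r * rayleighQuot A x))
      (piGaussian ι) := integrable_exp_mul_rayleighQuot h zero_le_one _
  have h_mgf {r : ℝ} (hr : |r| = |s|) :
      ∫ x, Real.exp (Fintype.card ι * r * rayleighQuot A x) ∂(piGaussian ι) ≤
        Real.exp (2 * s ^ 2 * Fintype.card ι) := by
    refine (integral_exp_mul_rayleighQuot_le hA.1 h (hr.trans_le hs)).trans
      (Real.exp_le_exp.2 ?_)
    rw [hA.2, mul_zero, zero_add, (sq_eq_sq_iff_abs_eq_abs r s).2 hr, mul_assoc]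
    gcongr
    simpa using h.trace_mul_self_le hA.1
  have h_exp_abs (x : ι → ℝ) : Real.exp |Fintype.card ι * s * rayleighQuot A x| ≤
      Real.exp (Fintype.card ι * s * rayleighQuot A x) +
        Real.exp (Fintype.card ι * -s * rayleighQuot A x) := by
    rw [mul_neg, neg_mul]
    rcases abs_choice (Fintype.card ι * s * rayleighQuot A x) with h_abs | h_abs <;> rw [h_abs] <;>
      linarith [Real.exp_pos (Fintype.card ι * s * rayleighQuot A x),
        Real.exp_pos (-(Fintype.card ι * s * rayleighQuot A x))]
  have h_dom := (h_int s).add (h_int (-s))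
  have h_exp_int := h_dom.mono'
    ((measurable_rayleighQuot A).const_mul _).abs.exp.aestronglyMeasurable
    (ae_of_all _ fun x => by
      rw [Real.norm_eq_abs, Real.abs_exp]
      exact h_exp_abs x)
  refine ⟨h_exp_int, (integral_mono h_exp_int h_dom h_exp_abs).trans ?_⟩
  rw [Pi.add_def, integral_add (h_int s) (h_int (-s)), Real.exp_add, Real.exp_log two_pos, two_mul]
  exact add_le_add (h_mgf rfl) (h_mgf (abs_neg s))

lemma measureReal_sum_abs_rayleighQuot_ge_le (hA : A ∈ traceFreeHermitian ι)
    (h : QuadFormBound A 1) (he : 0 ≤ e) (he_le : e ≤ 1) :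
    (gaussianSample κ ι).real {x | Fintype.card κ * e ≤ ∑ j, |rayleighQuot A (x j)|} ≤
      Real.exp (Fintype.card κ * (Real.log 2 - Fintype.card ι * e ^ 2 / 8)) := by
  obtain ⟨h_int, h_le⟩ := integral_exp_abs_rayleighQuot_le (s := e / 4) hA h
    (by rw [abs_of_nonneg] <;> linarith)
  have h_chernoff := measureReal_pi_sum_ge_le_exp (κ := κ) h_int h_le
    (Fintype.card ι * (e / 4) * e)
  rw [show Real.log 2 + 2 * (e / 4) ^ 2 * Fintype.card ι - Fintype.card ι * (e / 4) * e =
    Real.log 2 - Fintype.card ι * e ^ 2 / 8 by ring] at h_chernoff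
  refine (measureReal_mono fun x hx => ?_).trans h_chernoff
  have h_scale : 0 ≤ (Fintype.card ι : ℝ) * (e / 4) := by positivity
  simp only [Set.mem_ofPred_eq, abs_mul _ (rayleighQuot A _), abs_of_nonneg h_scale,
    ← Finset.mul_sum] at hx ⊢
  linarith [mul_le_mul_of_nonneg_left hx h_scale]

end RayleighTails

section NetTails

lemma measureReal_exists_mem_le {Ω α : Type*} [MeasurableSpace Ω] (μ : Measure Ω)
    {s : Finset α} {p : α → Ω → Prop} {B : ℝ}
    (h : ∀ a ∈ s, μ.real {x | p a x} ≤ B) : μ.real {x | ∃ a ∈ s, p a x} ≤ s.card * B := by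
  have h_union : {x | ∃ a ∈ s, p a x} = ⋃ a ∈ s, {x | p a x} := by
    ext x
    simp only [Set.mem_ofPred_eq, Set.mem_iUnion, exists_prop]
  rw [h_union, ← nsmul_eq_mul]
  exact (measureReal_biUnion_finset_le s _).trans (Finset.sum_le_card_nsmul s _ B h)

lemma five_pow_le_exp (k : ℕ) : (5 : ℝ) ^ k ≤ Real.exp (2 * k) := by
  have h_five : (5 : ℝ) ≤ Real.exp 1 ^ 2 := by nlinarith [Real.exp_one_gt_d9]
  calc (5 : ℝ) ^ k ≤ (Real.exp 1 ^ 2) ^ k := by gcongr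
    _ = Real.exp (2 * k) := by
        rw [← pow_mul, ← Real.exp_nat_mul, mul_one, Nat.cast_mul, Nat.cast_ofNat]

lemma rayleighQuot_symVecMulVec {ι : Type*} [Fintype ι] (v w x : ι → ℝ) :
    rayleighQuot (symVecMulVec v w) x = (unitVec x ⬝ᵥ v) * (unitVec x ⬝ᵥ w) := by
  rw [← unitVec_dotProduct_mulVec_unitVec, dotProduct_symVecMulVec_mulVec]

variable {n d : ℕ} {K e t : ℝ}

lemma dotProduct_weightedScatter_unitVec_sub_one_mulVec (hn : 0 < n) (x : Fin n → Fin d → ℝ)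
    (v w : Fin d → ℝ) :
    v ⬝ᵥ (weightedScatter 1 (unitVec ∘ x) - 1) *ᵥ w =
      (n : ℝ)⁻¹ * (∑ j, d * rayleighQuot (symVecMulVec v w) (x j) - n * (v ⬝ᵥ w)) := by
  have hn' : (n : ℝ) ≠ 0 := by exact_mod_cast hn.ne'
  simp only [sub_mulVec, one_mulVec, dotProduct_sub, dotProduct_weightedScatter_mulVec,
    rayleighQuot_symVecMulVec, Function.comp_apply, Pi.one_apply, one_mul, ← Finset.mul_sum]
  field_simp

lemma measureReal_not_quadFormBound_weightedScatter_le (hn : 0 < n) (ht : 0 ≤ t) (ht_le : t ≤ 1) :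
    (gaussianSample (Fin n) (Fin d)).real
        {x | ¬ QuadFormBound (weightedScatter 1 (unitVec ∘ x) - 1) (4 * t)} ≤
      2 * Real.exp (4 * d - n * t ^ 2 / 8) := by
  obtain ⟨N, hN_card, hN⟩ := exists_isVectorNet (Fin d)
  have hn' : (0 : ℝ) < n := by exact_mod_cast hn
  let bad (p : (Fin d → ℝ) × (Fin d → ℝ)) (x : Fin n → Fin d → ℝ) : Prop :=
    n * t ≤ |∑ j, d * rayleighQuot (symVecMulVec p.1 p.2) (x j) - n * (p.1 ⬝ᵥ p.2)|
  have h_bad : ∀ p ∈ N ×ˢ N, (gaussianSample (Fin n) (Fin d)).real {x | bad p x} ≤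
      2 * Real.exp (-(n * t ^ 2 / 8)) := by
    rintro ⟨v, w⟩ hp
    obtain ⟨hv, hw⟩ := Finset.mem_product.1 hp
    simpa only [Fintype.card_fin, trace_symVecMulVec] using
      measureReal_abs_sum_rayleighQuot_sub_trace_ge_le (κ := Fin n) (isHermitian_symVecMulVec v w)
        (quadFormBound_symVecMulVec (hN.1 v hv) (hN.1 w hw))
        (trace_symVecMulVec_mul_self_le_one (hN.1 v hv) (hN.1 w hw)) ht ht_le
  have h_card : ((N ×ˢ N).card : ℝ) ≤ Real.exp (2 * d) * Real.exp (2 * d) := by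
    rw [Fintype.card_fin] at hN_card
    have hN_exp : (N.card : ℝ) ≤ Real.exp (2 * d) :=
      le_trans (by exact_mod_cast hN_card) (five_pow_le_exp d)
    rw [Finset.card_product, Nat.cast_mul]
    gcongr
  calc _ ≤ (gaussianSample (Fin n) (Fin d)).real {x | ∃ p ∈ N ×ˢ N, bad p x} := by
        refine measureReal_mono fun x hx => ?_
        rw [Set.mem_ofPred_eq] at hx ⊢
        contrapose! hx
        refine hN.quadFormBound fun v hv w hw => ?_
        rw [dotProduct_weightedScatter_unitVec_sub_one_mulVec hn, abs_mul,
          abs_of_pos (inv_pos.2 hn')]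
        exact inv_mul_le_of_le_mul₀ hn'.le ht
          (not_le.1 (hx (v, w) (Finset.mk_mem_product hv hw))).le
    _ ≤ (N ×ˢ N).card * (2 * Real.exp (-(n * t ^ 2 / 8))) := measureReal_exists_mem_le _ h_bad
    _ ≤ Real.exp (2 * d) * Real.exp (2 * d) * (2 * Real.exp (-(n * t ^ 2 / 8))) := by gcongr
    _ = 2 * Real.exp (4 * d - n * t ^ 2 / 8) := by
        rw [mul_left_comm, ← Real.exp_add, ← Real.exp_add]
        ring_nf

lemma IsVectorNet.measureReal_exists_meanExcess_gt_le {N : Finset (Fin d → ℝ)}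
    (hN : IsVectorNet N) (hn : 0 < n) (K e : ℝ) :
    (gaussianSample (Fin n) (Fin d)).real {x | ∃ w ∈ N, e < meanExcess K (unitVec ∘ x) w} ≤
      N.card * Real.exp (n * (2 * Real.exp (-K / 4) - e / 4)) := by
  refine measureReal_exists_mem_le _ fun w hw => ?_
  have hw_le := hN.1 w hw
  have h_tail := measureReal_sum_excess_rayleighQuot_ge_le (κ := Fin n)
    (isHermitian_symVecMulVec w w) (quadFormBound_symVecMulVec hw_le hw_le)
    (by rwa [trace_symVecMulVec]) (trace_symVecMulVec_mul_self_le_one hw_le hw_le) K e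
  simp only [Fintype.card_fin, rayleighQuot_symVecMulVec, ← sq] at h_tail
  refine (measureReal_mono fun x hx => ?_).trans h_tail
  rw [Set.mem_ofPred_eq, meanExcess, lt_inv_mul_iff₀ (by exact_mod_cast hn)] at hx
  exact hx.le

lemma IsMatrixNet.measureReal_exists_meanAbsQuadForm_gt_le
    {M : Finset (Matrix (Fin d) (Fin d) ℝ)} (hM : IsMatrixNet M) (hn : 0 < n) (he : 0 ≤ e)
    (he_le : e ≤ 1) :
    (gaussianSample (Fin n) (Fin d)).real {x | ∃ F ∈ M, e < meanAbsQuadForm (unitVec ∘ x) F} ≤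
      M.card * Real.exp (n * (Real.log 2 - d * e ^ 2 / 8)) := by
  refine measureReal_exists_mem_le _ fun F hF => ?_
  obtain ⟨hF_mem, hF_bound⟩ := hM.1 F hF
  have h_tail := measureReal_sum_abs_rayleighQuot_ge_le (κ := Fin n) hF_mem hF_bound he he_le
  simp only [Fintype.card_fin, ← unitVec_dotProduct_mulVec_unitVec] at h_tail
  refine (measureReal_mono fun x hx => ?_).trans h_tail
  rw [Set.mem_ofPred_eq, meanAbsQuadForm, lt_inv_mul_iff₀ (by exact_mod_cast hn)] at hx
  exact hx.le

end NetTails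

/-! ### Events of probability tending to one -/

section WithHighProbability

variable {Ω : ℕ → Type*} [∀ d, MeasurableSpace (Ω d)] {μ : ∀ d, Measure (Ω d)}
  {p q : ∀ d, Ω d → Prop}

/-- The property `p d` fails with `μ d`-probability tending to zero as `d → ∞`. -/
def WithHighProbability (μ : ∀ d, Measure (Ω d)) (p : ∀ d, Ω d → Prop) : Prop :=
  Tendsto (fun d => (μ d).real {x | ¬ p d x}) atTop (nhds 0)

namespace WithHighProbability

lemma of_le {B : ℕ → ℝ} (hB : Tendsto B atTop (nhds 0))
    (h : ∀ᶠ d in atTop, (μ d).real {x | ¬ p d x} ≤ B d) : WithHighProbability μ p :=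
  squeeze_zero' (Eventually.of_forall fun _ => measureReal_nonneg) h hB

variable [∀ d, IsFiniteMeasure (μ d)]

lemma mono (hp : WithHighProbability μ p) (h : ∀ᶠ d in atTop, ∀ x, p d x → q d x) :
    WithHighProbability μ q :=
  of_le hp (h.mono fun _ hd => measureReal_mono fun x => mt (hd x))

lemma and (hp : WithHighProbability μ p) (hq : WithHighProbability μ q) :
    WithHighProbability μ fun d x => p d x ∧ q d x := by
  refine of_le (by simpa only [add_zero] using hp.add hq) (Eventually.of_forall fun d => ?_)
  refine (measureReal_mono fun x hx => ?_).trans (measureReal_union_le _ _)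
  exact not_and_or.1 hx

lemma forall_mem {α : Type*} (s : Finset α) {p : α → ∀ d, Ω d → Prop}
    (h : ∀ a ∈ s, WithHighProbability μ (p a)) :
    WithHighProbability μ fun d x => ∀ a ∈ s, p a d x := by
  have h_sum := tendsto_finsetSum s h
  rw [Finset.sum_const_zero] at h_sum
  refine of_le h_sum (Eventually.of_forall fun d => ?_)
  refine (measureReal_mono (fun x hx => ?_) (measure_ne_top _ _)).trans
    (measureReal_biUnion_finset_le s _)
  simpa only [Set.mem_ofPred_eq, not_forall, Set.mem_iUnion] using hx

end WithHighProbability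

end WithHighProbability

section SampleDirections

variable {n : ℕ → ℕ} {a b e ε : ℝ}

lemma tendsto_exp_neg_mul_natCast (hb : 0 < b) :
    Tendsto (fun d : ℕ => Real.exp (-(b * d))) atTop (nhds 0) :=
  Real.tendsto_exp_neg_atTop_nhds_zero.comp (tendsto_natCast_atTop_atTop.const_mul_atTop hb)

lemma tendsto_sqrt_natCast_div (hdn : Tendsto (fun d : ℕ => (d : ℝ) / n d) atTop (nhds 0)) :
    Tendsto (fun d : ℕ => √((d : ℝ) / n d)) atTop (nhds 0) := by
  simpa only [Real.sqrt_zero] using hdn.sqrt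

lemma eventually_natCast_le_mul (hn : Tendsto n atTop atTop)
    (hdn : Tendsto (fun d : ℕ => (d : ℝ) / n d) atTop (nhds 0)) (ha : 0 < a) :
    ∀ᶠ d : ℕ in atTop, (d : ℝ) ≤ a * n d := by
  filter_upwards [hn.eventually_gt_atTop 0, hdn.eventually_le_const ha] with d hn_pos h_le
  exact (div_le_iff₀ (by exact_mod_cast hn_pos)).1 h_le

lemma ae_gaussianSample_ne_zero {κ ι : Type*} [Fintype κ] [Fintype ι] [Nonempty ι] :
    ∀ᵐ x ∂(gaussianSample κ ι), ∀ j, x j ≠ 0 := by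
  have := nullSingletonClass_gaussianReal (μ := 0) one_ne_zero
  have h_null : (piGaussian ι) {0} = 0 := by
    rw [piGaussian, Measure.pi_singleton]
    exact Finset.prod_eq_zero (Finset.mem_univ (Classical.arbitrary ι)) (measure_singleton _)
  have h_ae : ∀ᵐ y ∂(piGaussian ι), y ≠ 0 := measure_eq_zero_iff_ae_notMem.1 h_null
  exact ae_all_iff.2 fun j =>
    (measurePreserving_eval (fun _ => piGaussian ι) j).quasiMeasurePreserving.ae h_ae

lemma withHighProbability_ne_zero (n : ℕ → ℕ) :
    WithHighProbability (fun d => gaussianSample (Fin (n d)) (Fin d)) fun _ x => ∀ j, x j ≠ 0 := by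
  refine WithHighProbability.of_le tendsto_const_nhds ?_
  filter_upwards [eventually_gt_atTop 0] with d hd
  have := Fin.pos_iff_nonempty.1 hd
  exact ((measureReal_eq_zero_iff (measure_ne_top _ _)).2
    (ae_iff.1 ae_gaussianSample_ne_zero)).le

lemma withHighProbability_quadFormBound_weightedScatter (hn : Tendsto n atTop atTop)
    (hdn : Tendsto (fun d : ℕ => (d : ℝ) / n d) atTop (nhds 0)) :
    WithHighProbability (fun d => gaussianSample (Fin (n d)) (Fin d)) fun d x =>
      QuadFormBound (weightedScatter 1 (unitVec ∘ x) - 1) (24 * √(d / n d)) := by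
  have h_rate := (tendsto_exp_neg_mul_natCast (b := 1 / 2) (by norm_num)).const_mul 2
  rw [mul_zero] at h_rate
  refine WithHighProbability.of_le h_rate ?_
  filter_upwards [hn.eventually_gt_atTop 0,
    (tendsto_sqrt_natCast_div hdn).eventually_le_const (show (0 : ℝ) < 1 / 6 by norm_num)]
    with d hn_pos h_sqrt
  have h_tail := measureReal_not_quadFormBound_weightedScatter_le (d := d) hn_pos
    (t := 6 * √(d / n d)) (by positivity) (by linarith)
  have h_exponent : 4 * (d : ℝ) - n d * (6 * √(d / n d)) ^ 2 / 8 = -(1 / 2 * d) := by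
    have hn' : (n d : ℝ) ≠ 0 := by exact_mod_cast hn_pos.ne'
    rw [mul_pow, Real.sq_sqrt (by positivity)]
    field_simp
    ring
  rw [h_exponent, ← mul_assoc, show (4 * 6 : ℝ) = 24 by norm_num] at h_tail
  exact h_tail

lemma withHighProbability_meanExcess_le (hn : Tendsto n atTop atTop)
    (hdn : Tendsto (fun d : ℕ => (d : ℝ) / n d) atTop (nhds 0)) {N : ∀ d, Finset (Fin d → ℝ)}
    (hN : ∀ d, IsVectorNet (N d)) (hN_card : ∀ d, (N d).card ≤ 5 ^ d) (K : ℝ) :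
    WithHighProbability (fun d => gaussianSample (Fin (n d)) (Fin d)) fun d x =>
      ∀ w ∈ N d, meanExcess K (unitVec ∘ x) w ≤ 16 * Real.exp (-K / 4) := by
  refine WithHighProbability.of_le (tendsto_exp_neg_mul_natCast two_pos) ?_
  filter_upwards [hn.eventually_gt_atTop 0,
    eventually_natCast_le_mul hn hdn (a := Real.exp (-K / 4) / 2) (by positivity)]
    with d hn_pos hd_le
  have h_card : ((N d).card : ℝ) ≤ Real.exp (2 * d) :=
    le_trans (by exact_mod_cast hN_card d) (five_pow_le_exp d)
  push Not
  calc _ ≤ (N d).card *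
        Real.exp (n d * (2 * Real.exp (-K / 4) - 16 * Real.exp (-K / 4) / 4)) :=
        (hN d).measureReal_exists_meanExcess_gt_le hn_pos K _
    _ ≤ Real.exp (2 * d) *
        Real.exp (n d * (2 * Real.exp (-K / 4) - 16 * Real.exp (-K / 4) / 4)) := by gcongr
    _ ≤ Real.exp (-(2 * d)) := by
        rw [← Real.exp_add, Real.exp_le_exp]
        linarith

lemma withHighProbability_meanAbsQuadForm_le (hn : Tendsto n atTop atTop)
    (hdn : Tendsto (fun d : ℕ => (d : ℝ) / n d) atTop (nhds 0))
    {M : ∀ d, Finset (Matrix (Fin d) (Fin d) ℝ)} (hM : ∀ d, IsMatrixNet (M d))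
    (hM_card : ∀ d, (M d).card ≤ 5 ^ d ^ 2) (he : 0 < e) (he_le : e ≤ 1) :
    WithHighProbability (fun d => gaussianSample (Fin (n d)) (Fin d)) fun d x =>
      ∀ F ∈ M d, meanAbsQuadForm (unitVec ∘ x) F ≤ e := by
  set b := e ^ 2 / 8
  have hb : 0 < b := by positivity
  refine WithHighProbability.of_le (tendsto_exp_neg_mul_natCast (half_pos hb)) ?_
  filter_upwards [hn.eventually_gt_atTop 0, eventually_natCast_le_mul hn hdn (a := b / 8)
    (by positivity), tendsto_natCast_atTop_atTop.eventually_ge_atTop (4 / b)]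
    with d hn_pos hd_le hd_ge
  have hn_one : (1 : ℝ) ≤ n d := by exact_mod_cast hn_pos
  have h_card : ((M d).card : ℝ) ≤ Real.exp (2 * (d ^ 2 : ℕ)) :=
    le_trans (by exact_mod_cast hM_card d) (five_pow_le_exp _)
  push Not
  calc _ ≤ (M d).card * Real.exp (n d * (Real.log 2 - d * e ^ 2 / 8)) :=
        (hM d).measureReal_exists_meanAbsQuadForm_gt_le hn_pos he.le he_le
    _ ≤ Real.exp (2 * (d ^ 2 : ℕ)) * Real.exp (n d * (Real.log 2 - d * e ^ 2 / 8)) := by gcongr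
    _ ≤ Real.exp (-(b / 2 * d)) := by
        rw [← Real.exp_add, Real.exp_le_exp, Nat.cast_pow]
        have hb_eq : (d : ℝ) * e ^ 2 / 8 = d * b := mul_div_assoc _ _ _
        have h_net : (d : ℝ) ^ 2 ≤ b / 8 * n d * d := by
          rw [sq]
          exact mul_le_mul_of_nonneg_right hd_le d.cast_nonneg
        have h_log : (n d : ℝ) * Real.log 2 ≤ n d * (d * b / 4) := by
          refine mul_le_mul_of_nonneg_left ?_ (n d).cast_nonneg
          linarith [(div_le_iff₀ hb).1 hd_ge, Real.log_two_lt_d9]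
        have h_rate : b * d ≤ b * d * n d := le_mul_of_one_le_right (by positivity) hn_one
        rw [hb_eq]
        linarith

lemma exists_contraction_parameters (hε : 0 < ε) :
    ∃ K e : ℝ, 0 ≤ K ∧ 0 < e ∧ e ≤ 1 ∧ 4 * (2 * K * e + 16 * Real.exp (-K / 4)) = ε := by
  have h_exp : Tendsto (fun K : ℝ => Real.exp (-K / 4)) atTop (nhds 0) := by
    simpa only [neg_div, Function.comp_def, id] using
      Real.tendsto_exp_neg_atTop_nhds_zero.comp (tendsto_id.atTop_div_const four_pos)
  obtain ⟨K, hK_exp, hK⟩ := ((h_exp.eventually_lt_const (show 0 < ε / 64 by positivity)).and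
    (eventually_ge_atTop ε)).exists
  have hK_pos : 0 < K := hε.trans_le hK
  refine ⟨K, (ε / 4 - 16 * Real.exp (-K / 4)) / (2 * K), hK_pos.le,
    div_pos (by linarith) (by positivity), ?_, ?_⟩
  · rw [div_le_one (by positivity)]
    linarith [Real.exp_pos (-K / 4)]
  · rw [mul_div_cancel₀ _ (by positivity)]
    ring

lemma withHighProbability_scatterContracts (hn : Tendsto n atTop atTop)
    (hdn : Tendsto (fun d : ℕ => (d : ℝ) / n d) atTop (nhds 0)) (hε : 0 < ε) :
    WithHighProbability (fun d => gaussianSample (Fin (n d)) (Fin d)) fun _ x =>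
      ScatterContracts (unitVec ∘ x) ε := by
  obtain ⟨K, e, hK, he, he_le, rfl⟩ := exists_contraction_parameters hε
  choose N hN_card hN using fun d => exists_isVectorNet (Fin d)
  choose M hM_card hM using fun d => exists_isMatrixNet (Fin d)
  simp only [Fintype.card_fin] at hN_card hM_card
  refine ((withHighProbability_ne_zero n).and
    ((withHighProbability_meanAbsQuadForm_le hn hdn hM hM_card he he_le).and
    (withHighProbability_meanExcess_le hn hdn hN hN_card K))).mono
    (Eventually.of_forall fun d x => ?_)
  rintro ⟨hx, h_abs, h_excess⟩
  exact scatterContracts_of_nets (hN d) (hM d)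
    (fun j => unitVec_dotProduct_self_of_ne_zero (hx j)) hK h_abs h_excess

end SampleDirections

/-! ### Comparison of traces of powers in the Frobenius norm -/

lemma pow_sub_pow_eq_sum {R : Type*} [Ring R] (a b : R) (m : ℕ) :
    a ^ m - b ^ m = ∑ i ∈ Finset.range m, a ^ i * (a - b) * b ^ (m - 1 - i) := by
  induction m with
  | zero => simp
  | succ m ih =>
    have h_succ (i : ℕ) : a ^ (i + 1) * (a - b) * b ^ (m + 1 - 1 - (i + 1)) =
        a * (a ^ i * (a - b) * b ^ (m - 1 - i)) := by
      rw [pow_succ', show m + 1 - 1 - (i + 1) = m - 1 - i by lia]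
      simp only [mul_assoc]
    rw [Finset.sum_range_succ', Finset.sum_congr rfl fun i _ => h_succ i, ← Finset.mul_sum, ← ih,
      pow_zero, one_mul, Nat.add_sub_cancel, Nat.sub_zero, pow_succ', pow_succ']
    noncomm_ring

section Frobenius

open scoped Matrix.Norms.Frobenius

variable {ι : Type*} [Fintype ι] {A S W : Matrix ι ι ℝ} {b c : ℝ}

lemma frobenius_norm_sq (A : Matrix ι ι ℝ) : ‖A‖ ^ 2 = ∑ i, ∑ k, A i k ^ 2 := by
  simp only [frobenius_norm_def, ← Real.sqrt_eq_rpow, Real.rpow_ofNat, Real.norm_eq_abs, sq_abs]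
  exact Real.sq_sqrt (by positivity)

lemma frobenius_norm_sq_eq_trace (A : Matrix ι ι ℝ) : ‖A‖ ^ 2 = (Aᵀ * A).trace := by
  simp only [frobenius_norm_sq, Matrix.trace, diag_apply, mul_apply, transpose_apply, ← sq]
  exact Finset.sum_comm

lemma abs_trace_mul_le (A B : Matrix ι ι ℝ) : |(A * B).trace| ≤ ‖A‖ * ‖B‖ := by
  refine abs_le_of_sq_le_sq ?_ (by positivity)
  have h_cs := Finset.sum_mul_sq_le_sq_mul_sq Finset.univ (fun p : ι × ι => A p.1 p.2)
    fun p => B p.2 p.1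
  simp only [Fintype.sum_prod_type] at h_cs
  rw [mul_pow, frobenius_norm_sq, frobenius_norm_sq B,
    Finset.sum_comm (γ := ι) (f := fun i k => B i k ^ 2)]
  exact h_cs

namespace QuadFormBound

lemma frobenius_norm_le (hA : A.IsHermitian) (h : QuadFormBound A c) (hc : 0 ≤ c) :
    ‖A‖ ≤ c * √(Fintype.card ι) := by
  refine le_of_sq_le_sq ?_ (by positivity)
  rw [mul_pow, Real.sq_sqrt (by positivity), frobenius_norm_sq_eq_trace,
    ← conjTranspose_eq_transpose_of_trivial, hA.eq]
  exact h.trace_mul_self_le hA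

lemma frobenius_norm_mul_le (hS : S.IsHermitian) (h : QuadFormBound S c) (hc : 0 ≤ c)
    (A : Matrix ι ι ℝ) : ‖S * A‖ ≤ c * ‖A‖ := by
  refine le_of_sq_le_sq ?_ (by positivity)
  have h_cols (B : Matrix ι ι ℝ) : ‖B‖ ^ 2 = ∑ k, B.col k ⬝ᵥ B.col k := by
    simp only [frobenius_norm_sq, dotProduct, col_apply, ← sq]
    exact Finset.sum_comm
  rw [mul_pow, h_cols, h_cols, Finset.mul_sum]
  exact Finset.sum_le_sum fun k _ => h.dotProduct_mulVec_self_le hS (A.col k)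

lemma frobenius_norm_pow_mul_le [DecidableEq ι] (hS : S.IsHermitian) (h : QuadFormBound S c)
    (hc : 0 ≤ c) (A : Matrix ι ι ℝ) (m : ℕ) : ‖S ^ m * A‖ ≤ c ^ m * ‖A‖ := by
  induction m with
  | zero => simp
  | succ m ih =>
    rw [pow_succ', pow_succ', mul_assoc, mul_assoc]
    exact (h.frobenius_norm_mul_le hS hc _).trans (mul_le_mul_of_nonneg_left ih hc)

lemma abs_trace_pow_sub_trace_pow_le [DecidableEq ι] (hS : S.IsHermitian) (h : QuadFormBound S c)
    (hc : 0 ≤ c) {m : ℕ} (hW : ∀ k < m, ‖W ^ k‖ ≤ b) :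
    |(S ^ m).trace - (W ^ m).trace| ≤ (∑ i ∈ Finset.range m, c ^ i) * ‖S - W‖ * b := by
  rw [← trace_sub, pow_sub_pow_eq_sum, trace_sum, Finset.sum_mul, Finset.sum_mul]
  refine (Finset.abs_sum_le_sum_abs _ _).trans (Finset.sum_le_sum fun i hi => ?_)
  rw [Finset.mem_range] at hi
  exact (abs_trace_mul_le _ _).trans (mul_le_mul (h.frobenius_norm_pow_mul_le hS hc _ i)
    (hW _ (by lia)) (norm_nonneg _) (by positivity))

lemma abs_normalized_trace_pow_sub_le [DecidableEq ι] [Nonempty ι] (hS : S.IsHermitian)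
    (h : QuadFormBound S c) (hc : 0 ≤ c) (hb : 0 ≤ b) {κ : ℝ} {m : ℕ}
    (hSW : ‖S - W‖ ≤ κ * √(Fintype.card ι)) (hW : ∀ k < m, ‖W ^ k‖ ≤ b * √(Fintype.card ι)) :
    |(Fintype.card ι : ℝ)⁻¹ * (S ^ m).trace - (Fintype.card ι : ℝ)⁻¹ * (W ^ m).trace| ≤
      (∑ i ∈ Finset.range m, c ^ i) * κ * b := by
  have h_card : (0 : ℝ) < Fintype.card ι := by exact_mod_cast Fintype.card_pos
  rw [← mul_sub, abs_mul, abs_of_pos (inv_pos.2 h_card), inv_mul_le_iff₀ h_card]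
  calc |(S ^ m).trace - (W ^ m).trace|
      ≤ (∑ i ∈ Finset.range m, c ^ i) * ‖S - W‖ * (b * √(Fintype.card ι)) :=
        h.abs_trace_pow_sub_trace_pow_le hS hc hW
    _ ≤ (∑ i ∈ Finset.range m, c ^ i) * (κ * √(Fintype.card ι)) * (b * √(Fintype.card ι)) := by
        gcongr
    _ = Fintype.card ι * ((∑ i ∈ Finset.range m, c ^ i) * κ * b) := by
        linear_combination
          (∑ i ∈ Finset.range m, c ^ i) * κ * b * Real.mul_self_sqrt h_card.le

end QuadFormBound

end Frobenius

/-! ### Replacing Gaussian vectors by their directions -/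

section CenteredSums

variable {Ω κ : Type*} [MeasurableSpace Ω] [Fintype κ] {μ : Measure Ω} [IsProbabilityMeasure μ]
  {f : Ω → ℝ}

lemma memLp_sum_pi (hf : MemLp f 2 μ) :
    MemLp (fun x : κ → Ω => ∑ j, f (x j)) 2 (Measure.pi fun _ => μ) :=
  memLp_finsetSum _ fun j _ => hf.comp_measurePreserving (measurePreserving_eval (fun _ => μ) j)

lemma integral_sum_sq_pi (hf : MemLp f 2 μ) (hf_mean : ∫ x, f x ∂μ = 0) :
    ∫ x : κ → Ω, (∑ j, f (x j)) ^ 2 ∂(Measure.pi fun _ => μ) =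
      Fintype.card κ * ∫ x, f x ^ 2 ∂μ := by
  have h_var := variance_sum_pi (μ := fun _ : κ => μ) (X := fun _ => f) fun _ => hf
  have h_mean : ∫ x : κ → Ω, ∑ j, f (x j) ∂(Measure.pi fun _ => μ) = 0 := by
    rw [integral_finsetSum _ fun j _ => integrable_comp_eval (hf.integrable one_le_two)]
    refine Finset.sum_eq_zero fun j _ => ?_
    rw [integral_comp_eval (μ := fun _ : κ => μ) hf.aestronglyMeasurable, hf_mean]
  rw [show (∑ j : κ, fun x : κ → Ω => f (x j)) = fun x => ∑ j, f (x j) by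
      funext x; exact Finset.sum_apply _ _ _,
    variance_of_integral_eq_zero (memLp_sum_pi hf).aemeasurable h_mean,
    variance_of_integral_eq_zero hf.aemeasurable hf_mean] at h_var
  rw [h_var, Finset.sum_const, Finset.card_univ, nsmul_eq_mul]

end CenteredSums

section SquaredNorm

lemma integral_sq_gaussianReal : ∫ y, y ^ 2 ∂(gaussianReal 0 1) = 1 := by
  simp [integral_pow_succ_gaussianReal 1]

lemma memLp_sq_sub_one_gaussianReal : MemLp (fun y : ℝ => y ^ 2 - 1) 2 (gaussianReal 0 1) := by
  rw [memLp_two_iff_integrable_sq (by fun_prop)]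
  refine (((integrable_pow_gaussianReal 4 0 1).sub
    ((integrable_pow_gaussianReal 2 0 1).const_mul 2)).add (integrable_const 1)).congr
    (ae_of_all _ fun y => ?_)
  simp only [Pi.add_apply, Pi.sub_apply]
  ring

lemma integral_sq_sub_one_gaussianReal : ∫ y, (y ^ 2 - 1) ∂(gaussianReal 0 1) = 0 := by
  rw [integral_sub (integrable_pow_gaussianReal 2 0 1) (integrable_const _),
    integral_sq_gaussianReal]
  simp

lemma integral_sq_sub_one_sq_gaussianReal : ∫ y, (y ^ 2 - 1) ^ 2 ∂(gaussianReal 0 1) = 2 := by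
  have h_fourth : ∫ y, y ^ 4 ∂(gaussianReal 0 1) = 3 := by
    rw [integral_pow_succ_gaussianReal 3, integral_sq_gaussianReal]
    norm_num
  have h_sq := (integrable_pow_gaussianReal 2 0 1).const_mul 2
  have h_diff : Integrable (fun y : ℝ => y ^ 4 - 2 * y ^ 2) (gaussianReal 0 1) :=
    (integrable_pow_gaussianReal 4 0 1).sub h_sq
  calc ∫ y, (y ^ 2 - 1) ^ 2 ∂(gaussianReal 0 1)
      = ∫ y, (y ^ 4 - 2 * y ^ 2 + 1) ∂(gaussianReal 0 1) := by
        exact integral_congr_ae (ae_of_all _ fun y => by ring)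
    _ = 3 - 2 * 1 + 1 := by
        rw [integral_add h_diff (integrable_const _),
          integral_sub (integrable_pow_gaussianReal 4 0 1) h_sq, integral_const_mul, h_fourth,
          integral_sq_gaussianReal]
        simp
    _ = 2 := by norm_num

variable (ι : Type*) [Fintype ι]

lemma dotProduct_self_sub_card (x : ι → ℝ) :
    x ⬝ᵥ x - Fintype.card ι = ∑ i, (x i ^ 2 - 1) := by
  simp [dotProduct_self_eq_sum_sq]

lemma memLp_dotProduct_self_sub_card :
    MemLp (fun x : ι → ℝ => x ⬝ᵥ x - Fintype.card ι) 2 (piGaussian ι) := by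
  simp_rw [dotProduct_self_sub_card]
  exact memLp_sum_pi memLp_sq_sub_one_gaussianReal

lemma integral_dotProduct_self_sub_card_sq :
    ∫ x, (x ⬝ᵥ x - Fintype.card ι) ^ 2 ∂(piGaussian ι) = Fintype.card ι * 2 := by
  simp_rw [dotProduct_self_sub_card]
  rw [integral_sum_sq_pi memLp_sq_sub_one_gaussianReal integral_sq_sub_one_gaussianReal,
    integral_sq_sub_one_sq_gaussianReal]

end SquaredNorm

section RadialFluctuation

open scoped Matrix.Norms.Frobenius

variable {ι : Type*} [Fintype ι]

/-- The difference `y yᵗ - |ι| u uᵗ`, for `u = y / ‖y‖`, between the scatter of a vector and that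
of its direction rescaled to the typical length `√|ι|`. -/
noncomputable def radialFluctuation (y : ι → ℝ) : Matrix ι ι ℝ :=
  (y ⬝ᵥ y - Fintype.card ι) • vecMulVec (unitVec y) (unitVec y)

lemma vecMulVec_self_eq_smul_unitVec (y : ι → ℝ) :
    vecMulVec y y = (y ⬝ᵥ y) • vecMulVec (unitVec y) (unitVec y) := by
  conv_lhs => rw [← sqrt_dotProduct_self_smul_unitVec y]
  rw [smul_vecMulVec, vecMulVec_smul, smul_smul,
    Real.mul_self_sqrt (dotProduct_self_nonneg_real y)]

lemma measurable_unitVec_apply_mul (i k : ι) :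
    Measurable fun y : ι → ℝ => unitVec y i * unitVec y k :=
  (measurable_unitVec_apply i).mul (measurable_unitVec_apply k)

lemma abs_unitVec_apply_mul_le_one (y : ι → ℝ) (i k : ι) : |unitVec y i * unitVec y k| ≤ 1 := by
  rw [abs_mul]
  exact mul_le_one₀ (abs_unitVec_apply_le_one y i) (abs_nonneg _) (abs_unitVec_apply_le_one y k)

lemma memLp_radialFluctuation_apply (i k : ι) :
    MemLp (fun y => radialFluctuation y i k) 2 (piGaussian ι) := by
  refine (memLp_dotProduct_self_sub_card ι).mono
    ((measurable_dotProduct_self.sub_const _).mul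
      (measurable_unitVec_apply_mul i k)).aestronglyMeasurable (ae_of_all _ fun y => ?_)
  rw [radialFluctuation, Matrix.smul_apply, vecMulVec_apply, smul_eq_mul, norm_mul]
  exact mul_le_of_le_one_right (norm_nonneg _) (abs_unitVec_apply_mul_le_one y i k)

lemma integral_radialFluctuation_apply (i k : ι) :
    ∫ y, radialFluctuation y i k ∂(piGaussian ι) = 0 :=
  integral_dotProduct_self_sub_card_mul (measurable_unitVec_apply_mul i k)
    (fun y => abs_unitVec_apply_mul_le_one y i k) fun c y hc => by rw [unitVec_smul hc]

lemma frobenius_norm_sq_radialFluctuation_le (y : ι → ℝ) :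
    ‖radialFluctuation y‖ ^ 2 ≤ (y ⬝ᵥ y - Fintype.card ι) ^ 2 := by
  have h_unit : ‖vecMulVec (unitVec y) (unitVec y)‖ ^ 2 ≤ 1 := by
    rw [frobenius_norm_sq_eq_trace, transpose_vecMulVec, vecMulVec_mul_vecMulVec, trace_vecMulVec,
      dotProduct_smul, smul_eq_mul]
    exact mul_le_one₀ (unitVec_dotProduct_self_le_one y) (dotProduct_self_nonneg_real _)
      (unitVec_dotProduct_self_le_one y)
  rw [radialFluctuation, norm_smul, mul_pow, Real.norm_eq_abs, sq_abs]
  exact mul_le_of_le_one_right (sq_nonneg _) h_unit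

variable {κ : Type*} [Fintype κ]

lemma frobenius_norm_sq_sum_radialFluctuation (x : κ → ι → ℝ) :
    ‖∑ j, radialFluctuation (x j)‖ ^ 2 = ∑ i, ∑ k, (∑ j, radialFluctuation (x j) i k) ^ 2 := by
  simp_rw [frobenius_norm_sq, Matrix.sum_apply]

lemma integrable_sum_radialFluctuation_apply_sq (i k : ι) :
    Integrable (fun x => (∑ j, radialFluctuation (x j) i k) ^ 2) (gaussianSample κ ι) :=
  (memLp_sum_pi (memLp_radialFluctuation_apply i k)).integrable_sq

lemma integrable_frobenius_norm_sq_sum_radialFluctuation :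
    Integrable (fun x => ‖∑ j, radialFluctuation (x j)‖ ^ 2) (gaussianSample κ ι) := by
  simp_rw [frobenius_norm_sq_sum_radialFluctuation]
  exact integrable_finsetSum _ fun i _ => integrable_finsetSum _ fun k _ =>
    integrable_sum_radialFluctuation_apply_sq i k

lemma integral_frobenius_norm_sq_sum_radialFluctuation_le :
    ∫ x, ‖∑ j, radialFluctuation (x j)‖ ^ 2 ∂(gaussianSample κ ι) ≤
      Fintype.card κ * (Fintype.card ι * 2) := by
  have h_int (i k : ι) : Integrable (fun y => radialFluctuation y i k ^ 2) (piGaussian ι) :=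
    (memLp_radialFluctuation_apply i k).integrable_sq
  have h_int_sum (i : ι) : Integrable (fun y => ∑ k, radialFluctuation y i k ^ 2) (piGaussian ι) :=
    integrable_finsetSum _ fun k _ => h_int i k
  calc ∫ x, ‖∑ j, radialFluctuation (x j)‖ ^ 2 ∂(gaussianSample κ ι)
      = ∑ i, ∑ k, ∫ x, (∑ j, radialFluctuation (x j) i k) ^ 2 ∂(gaussianSample κ ι) := by
        simp_rw [frobenius_norm_sq_sum_radialFluctuation]
        rw [integral_finsetSum _ fun i _ => integrable_finsetSum _ fun k _ =>
          integrable_sum_radialFluctuation_apply_sq i k]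
        exact Finset.sum_congr rfl fun i _ => integral_finsetSum _ fun k _ =>
          integrable_sum_radialFluctuation_apply_sq i k
    _ = Fintype.card κ * ∫ y, ‖radialFluctuation y‖ ^ 2 ∂(piGaussian ι) := by
        simp_rw [integral_sum_sq_pi (memLp_radialFluctuation_apply _ _)
          (integral_radialFluctuation_apply _ _), frobenius_norm_sq, ← Finset.mul_sum]
        rw [integral_finsetSum _ fun i _ => h_int_sum i]
        simp_rw [integral_finsetSum _ fun k _ => h_int _ k]
    _ ≤ Fintype.card κ * (Fintype.card ι * 2) := by
        rw [← integral_dotProduct_self_sub_card_sq]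
        refine mul_le_mul_of_nonneg_left (integral_mono_of_nonneg (ae_of_all _ fun y => sq_nonneg _)
          (memLp_dotProduct_self_sub_card ι).integrable_sq
          (ae_of_all _ frobenius_norm_sq_radialFluctuation_le)) (Nat.cast_nonneg _)

lemma measureReal_le_frobenius_norm_sq_sum_radialFluctuation_le {c : ℝ} (hc : 0 < c) :
    (gaussianSample κ ι).real {x | c ≤ ‖∑ j, radialFluctuation (x j)‖ ^ 2} ≤
      Fintype.card κ * (Fintype.card ι * 2) / c := by
  rw [le_div_iff₀' hc]
  exact (mul_meas_ge_le_integral_of_nonneg (ae_of_all _ fun x => sq_nonneg _)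
    integrable_frobenius_norm_sq_sum_radialFluctuation c).trans
    integral_frobenius_norm_sq_sum_radialFluctuation_le

/-- The rescaled deviation from the identity, which for Tyler's estimator `T` of `n` observations is
the matrix `T* = √(n/d) (T - I)`. -/
noncomputable abbrev scaledDeviation {d : ℕ} (n : ℕ) (A : Matrix (Fin d) (Fin d) ℝ) :
    Matrix (Fin d) (Fin d) ℝ :=
  √(n / d) • (A - 1)

lemma shiftedScatter_sub_scaledDeviation_unitVec {n d : ℕ} (hn : 0 < n) (x : Fin n → Fin d → ℝ) :
    shiftedScatter (wishartScale n d) √(n / d) x -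
        scaledDeviation n (weightedScatter 1 (unitVec ∘ x)) =
      wishartScale n d • ∑ j, radialFluctuation (x j) := by
  have hn' : (n : ℝ) ≠ 0 := by positivity
  have h_coeff : √(n / d) * (d / n) = wishartScale n d * d := by
    rw [← wishartScale_mul_left hn]
    field_simp
  simp_rw [shiftedScatter, weightedScatter, radialFluctuation, sub_smul, Finset.sum_sub_distrib,
    ← vecMulVec_self_eq_smul_unitVec, smul_sub, smul_smul, h_coeff, Pi.one_apply, one_smul,
    ← Finset.smul_sum, smul_smul, Fintype.card_fin, Function.comp_apply]
  abel

theorem withHighProbability_frobenius_norm_shiftedScatter_sub_le {n : ℕ → ℕ}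
    (hn : Tendsto n atTop atTop) {η : ℝ} (hη : 0 < η) :
    WithHighProbability (fun d => gaussianSample (Fin (n d)) (Fin d)) fun d x =>
      ‖shiftedScatter (wishartScale (n d) d) √(n d / d) x -
        scaledDeviation (n d) (weightedScatter 1 (unitVec ∘ x))‖ ≤ η * √d := by
  refine .of_le (tendsto_const_div_atTop_nhds_zero_nat (2 / η ^ 2)) ?_
  filter_upwards [hn.eventually_gt_atTop 0, eventually_gt_atTop 0] with d hnd hd
  have hd' : (0 : ℝ) < d := by exact_mod_cast hd
  have h_scale : wishartScale (n d) d ^ 2 = 1 / (n d * d) := by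
    rw [wishartScale, div_pow, Real.sq_sqrt (by positivity), one_pow]
  have h_le := measureReal_le_frobenius_norm_sq_sum_radialFluctuation_le (κ := Fin (n d))
    (ι := Fin d) (c := η ^ 2 * n d * d ^ 2) (by positivity)
  rw [Fintype.card_fin, Fintype.card_fin] at h_le
  refine (measureReal_mono (fun x hx => ?_) (measure_ne_top _ _)).trans (h_le.trans_eq ?_)
  · rw [Set.mem_ofPred_eq, not_le, shiftedScatter_sub_scaledDeviation_unitVec hnd] at hx
    have h_sq := pow_lt_pow_left₀ hx (by positivity) two_ne_zero
    rw [norm_smul, mul_pow, mul_pow, Real.sq_sqrt hd'.le, Real.norm_eq_abs, sq_abs, h_scale,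
      one_div_mul_eq_div, lt_div_iff₀ (by positivity)] at h_sq
    rw [Set.mem_ofPred_eq]
    linarith
  · field_simp

end RadialFluctuation

/-! ### Moments of the semicircle law -/

section Semicircle

lemma integral_pow_mul_semicircleDensity_eq_div (m : ℕ) :
    ∫ x, x ^ m * semicircleDensity x =
      (∫ x in (-2 : ℝ)..2, x ^ m * √(4 - x ^ 2)) / (2 * Real.pi) := by
  rw [intervalIntegral.integral_of_le (by norm_num), ← integral_Icc_eq_integral_Ioc,
    ← integral_div, ← integral_indicator measurableSet_Icc]
  refine integral_congr_ae (ae_of_all _ fun x => ?_)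
  simp only [semicircleDensity, Set.indicator_apply]
  split_ifs <;> ring

lemma integral_sqrt_four_sub_sq : ∫ x in (-2 : ℝ)..2, √(4 - x ^ 2) = 2 * Real.pi := by
  have h_scale (x : ℝ) : √(4 - (2 * x) ^ 2) = 2 * √(1 - x ^ 2) := by
    rw [show 4 - (2 * x) ^ 2 = 2 ^ 2 * (1 - x ^ 2) by ring, Real.sqrt_mul (by norm_num),
      Real.sqrt_sq (by norm_num)]
  have h_subst := intervalIntegral.smul_integral_comp_mul_left (a := -1) (b := 1)
    (fun x : ℝ => √(4 - x ^ 2)) 2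
  simp only [h_scale, intervalIntegral.integral_const_mul, integral_sqrt_one_sub_sq] at h_subst
  norm_num at h_subst
  linarith

lemma integral_pow_mul_sqrt_of_odd {m : ℕ} (hm : Odd m) :
    ∫ x in (-2 : ℝ)..2, x ^ m * √(4 - x ^ 2) = 0 := by
  have h_neg := intervalIntegral.integral_comp_neg (a := -2) (b := 2)
    fun x : ℝ => x ^ m * √(4 - x ^ 2)
  simp only [hm.neg_pow, neg_sq, neg_mul, intervalIntegral.integral_neg, neg_neg] at h_neg
  linarith

lemma hasDerivAt_pow_mul_four_sub_sq_mul_sqrt (k : ℕ) {x : ℝ} (hx : x ∈ Set.Ioo (-2 : ℝ) 2) :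
    HasDerivAt (fun x : ℝ => x ^ (k + 1) * ((4 - x ^ 2) * √(4 - x ^ 2)))
      (4 * (k + 1) * (x ^ k * √(4 - x ^ 2)) - (k + 4) * (x ^ (k + 2) * √(4 - x ^ 2))) x := by
  have h_pos : 0 < 4 - x ^ 2 := by nlinarith [hx.1, hx.2]
  have h_sq : √(4 - x ^ 2) ^ 2 = 4 - x ^ 2 := Real.sq_sqrt h_pos.le
  have h_inner : HasDerivAt (fun x : ℝ => 4 - x ^ 2) (-(2 * x)) x := by
    simpa using (hasDerivAt_pow 2 x).const_sub 4
  refine ((hasDerivAt_pow (k + 1) x).mul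
    (h_inner.mul (h_inner.sqrt h_pos.ne'))).congr_deriv ?_
  have h_cancel : (4 - x ^ 2) * (-(2 * x) / (2 * √(4 - x ^ 2))) = -x * √(4 - x ^ 2) := by
    have := Real.sqrt_pos.2 h_pos
    field_simp
    rw [h_sq]
  simp only [Pi.mul_apply, h_cancel, add_tsub_cancel_right]
  push_cast
  ring

lemma add_four_mul_integral_pow_add_two_mul_sqrt (k : ℕ) :
    (k + 4 : ℝ) * ∫ x in (-2 : ℝ)..2, x ^ (k + 2) * √(4 - x ^ 2) =
      4 * (k + 1) * ∫ x in (-2 : ℝ)..2, x ^ k * √(4 - x ^ 2) := by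
  have h_ftc := intervalIntegral.integral_eq_sub_of_hasDerivAt_of_le (a := -2) (b := 2)
    (by norm_num) (by fun_prop) (fun x hx => hasDerivAt_pow_mul_four_sub_sq_mul_sqrt k hx)
    (Continuous.intervalIntegrable (by fun_prop) _ _)
  rw [intervalIntegral.integral_sub (Continuous.intervalIntegrable (by fun_prop) _ _)
      (Continuous.intervalIntegrable (by fun_prop) _ _),
    intervalIntegral.integral_const_mul, intervalIntegral.integral_const_mul] at h_ftc
  norm_num at h_ftc
  linarith

lemma add_two_mul_catalan_succ (k : ℕ) :
    (k + 2) * catalan (k + 1) = 2 * (2 * k + 1) * catalan k := by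
  refine Nat.eq_of_mul_eq_mul_left k.succ_pos ?_
  have h_binom := Nat.succ_mul_centralBinom_succ k
  rw [← succ_mul_catalan_eq_centralBinom, ← succ_mul_catalan_eq_centralBinom] at h_binom
  linarith

lemma integral_pow_two_mul_mul_sqrt (k : ℕ) :
    ∫ x in (-2 : ℝ)..2, x ^ (2 * k) * √(4 - x ^ 2) = 2 * Real.pi * catalan k := by
  induction k with
  | zero => simp [integral_sqrt_four_sub_sq]
  | succ k ih =>
    have h_rec := add_four_mul_integral_pow_add_two_mul_sqrt (2 * k)
    have h_catalan : ((k : ℝ) + 2) * catalan (k + 1) = 2 * (2 * k + 1) * catalan k := by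
      exact_mod_cast add_two_mul_catalan_succ k
    rw [ih] at h_rec
    push_cast at h_rec
    have h_pos : (0 : ℝ) < 2 * (k + 2) := by positivity
    refine mul_left_cancel₀ h_pos.ne' ?_
    rw [mul_add_one 2 k]
    linear_combination h_rec - 4 * Real.pi * h_catalan

theorem integral_pow_mul_semicircleDensity (m : ℕ) :
    ∫ x, x ^ m * semicircleDensity x = catalanMoment m := by
  rw [integral_pow_mul_semicircleDensity_eq_div]
  rcases m.even_or_odd' with ⟨k, rfl | rfl⟩
  · rw [integral_pow_two_mul_mul_sqrt, catalanMoment_two_mul]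
    field_simp
  · rw [integral_pow_mul_sqrt_of_odd ⟨k, rfl⟩, catalanMoment_of_odd ⟨k, rfl⟩, zero_div]

end Semicircle

/-! ### Tyler's estimator of a Gaussian sample -/

section TylerUnit

variable {n d : ℕ} {x u : Fin n → Fin d → ℝ} {T : Matrix (Fin d) (Fin d) ℝ} {ε K : ℝ}

lemma sqrt_div_mul_sqrt_div (hn : 0 < n) (hd : 0 < d) : √((n : ℝ) / d) * √((d : ℝ) / n) = 1 := by
  rw [← Real.sqrt_mul (by positivity), div_mul_div_cancel₀ (by positivity),
    div_self (by positivity), Real.sqrt_one]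

namespace IsTyler

lemma smul (hT : IsTyler x T) {c : Fin n → ℝ} (hc : ∀ j, c j ≠ 0) :
    IsTyler (fun j => c j • x j) T := by
  refine ⟨hT.1, hT.2.1, hT.2.2.trans ?_⟩
  congr 1
  refine Finset.sum_congr rfl fun j _ => ?_
  have := hc j
  rw [mulVec_smul, smul_dotProduct, dotProduct_smul, smul_vecMulVec, vecMulVec_smul, smul_smul,
    smul_smul, smul_eq_mul, smul_eq_mul]
  congr 1
  field_simp

lemma unitVec_comp (hT : IsTyler x T) (hx : ∀ j, x j ≠ 0) : IsTyler (unitVec ∘ x) T :=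
  hT.smul fun j => inv_ne_zero (Real.sqrt_ne_zero'.2
    ((dotProduct_self_nonneg_real (x j)).lt_of_ne' fun h => hx j (dotProduct_self_eq_zero.1 h)))

lemma quadFormBound_scaledDeviation (hu : ∀ j, u j ⬝ᵥ u j = 1) (hT : IsTyler u T) (hn : 0 < n)
    (hd : 0 < d) (hsmall : K * √(d / n) + 2 * ε ≤ 1 / 2) (hε : 0 ≤ ε) (hK : 0 ≤ K)
    (hS : QuadFormBound (weightedScatter 1 u - 1) (K * √(d / n))) (hL : ScatterContracts u ε) :
    QuadFormBound (scaledDeviation n T) (2 * K) := by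
  refine ((hT.quadFormBound_sub_one hu hsmall hε (by positivity) hS hL).smul _).mono (le_of_eq ?_)
  rw [abs_of_nonneg (Real.sqrt_nonneg _)]
  linear_combination 2 * K * sqrt_div_mul_sqrt_div hn hd

lemma quadFormBound_scaledDeviation_sub (hu : ∀ j, u j ⬝ᵥ u j = 1) (hT : IsTyler u T)
    (hn : 0 < n) (hd : 0 < d) (hsmall : K * √(d / n) + 2 * ε ≤ 1 / 2) (hε : 0 ≤ ε) (hK : 0 ≤ K)
    (hS : QuadFormBound (weightedScatter 1 u - 1) (K * √(d / n))) (hL : ScatterContracts u ε) :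
    QuadFormBound (scaledDeviation n T - scaledDeviation n (weightedScatter 1 u))
      (2 * K * ε + 8 * K ^ 2 * √(d / n)) := by
  rw [← smul_sub, sub_sub_sub_cancel_right]
  refine ((hT.quadFormBound_sub_weightedScatter hu hsmall hε (by positivity) hS hL).smul _).mono
    (le_of_eq ?_)
  rw [abs_of_nonneg (Real.sqrt_nonneg _)]
  linear_combination (2 * K * ε + 8 * K ^ 2 * √(d / n)) * sqrt_div_mul_sqrt_div hn hd

end IsTyler

end TylerUnit

section TylerGaussian

open scoped Matrix.Norms.Frobenius

variable {n : ℕ → ℕ} {κ : ℝ}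

lemma withHighProbability_quadFormBound_tyler (hn : Tendsto n atTop atTop)
    (hdn : Tendsto (fun d : ℕ => (d : ℝ) / n d) atTop (nhds 0)) (hκ : 0 < κ) :
    WithHighProbability (fun d => gaussianSample (Fin (n d)) (Fin d)) fun d x =>
      ∀ T, IsTyler x T → QuadFormBound (scaledDeviation (n d) T) 48 ∧
        QuadFormBound (scaledDeviation (n d) T -
          scaledDeviation (n d) (weightedScatter 1 (unitVec ∘ x))) κ := by
  set ε := min (κ / 96) (1 / 8)
  have hε : 0 < ε := by positivity
  refine ((withHighProbability_ne_zero n).and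
    ((withHighProbability_quadFormBound_weightedScatter hn hdn).and
      (withHighProbability_scatterContracts hn hdn hε))).mono ?_
  filter_upwards [eventually_dim_pos hn,
    (tendsto_sqrt_natCast_div hdn).eventually_le_const (show 0 < κ / 9216 by positivity),
    (tendsto_sqrt_natCast_div hdn).eventually_le_const (show (0 : ℝ) < 1 / 96 by norm_num)]
    with d ⟨hn_pos, hd_pos⟩ h_ratio_κ h_ratio x ⟨hx, hS, hL⟩ T hT
  have hε_κ : ε ≤ κ / 96 := min_le_left _ _
  have hε_le : ε ≤ 1 / 8 := min_le_right _ _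
  have hu (j) := unitVec_dotProduct_self_of_ne_zero (hx j)
  have hTu := hT.unitVec_comp hx
  have hsmall : 24 * √((d : ℝ) / n d) + 2 * ε ≤ 1 / 2 := by linarith
  constructor
  · exact (hTu.quadFormBound_scaledDeviation hu hn_pos hd_pos hsmall hε.le (by norm_num) hS
      hL).mono (by norm_num)
  · exact (hTu.quadFormBound_scaledDeviation_sub hu hn_pos hd_pos hsmall hε.le (by norm_num) hS
      hL).mono (by linarith)

lemma withHighProbability_frobenius_norm_tyler_sub_shiftedScatter_le (hn : Tendsto n atTop atTop)
    (hdn : Tendsto (fun d : ℕ => (d : ℝ) / n d) atTop (nhds 0)) (hκ : 0 < κ) :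
    WithHighProbability (fun d => gaussianSample (Fin (n d)) (Fin d)) fun d x =>
      ∀ T, IsTyler x T → QuadFormBound (scaledDeviation (n d) T) 48 ∧
        ‖scaledDeviation (n d) T - shiftedScatter (wishartScale (n d) d) √(n d / d) x‖ ≤
          κ * √d := by
  refine ((withHighProbability_quadFormBound_tyler hn hdn (half_pos hκ)).and
    (withHighProbability_frobenius_norm_shiftedScatter_sub_le hn (half_pos hκ))).mono
    (Eventually.of_forall fun d x ⟨h_tyler, h_radial⟩ T hT => ?_)
  obtain ⟨h_bound, h_first_order⟩ := h_tyler T hT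
  have h_herm : (scaledDeviation (n d) T -
      scaledDeviation (n d) (weightedScatter 1 (unitVec ∘ x))).IsHermitian := by
    rw [← smul_sub, sub_sub_sub_cancel_right]
    exact (hT.1.isHermitian.sub (weightedScatter_isHermitian _ _)).smul (.all _)
  have h_norm := h_first_order.frobenius_norm_le h_herm (half_pos hκ).le
  rw [Fintype.card_fin] at h_norm
  refine ⟨h_bound, ?_⟩
  calc _ ≤ _ := norm_sub_le_norm_sub_add_norm_sub _
        (scaledDeviation (n d) (weightedScatter 1 (unitVec ∘ x))) _
    _ ≤ κ / 2 * √d + κ / 2 * √d := add_le_add h_norm (by rwa [norm_sub_rev])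
    _ = κ * √d := by ring

lemma withHighProbability_frobenius_norm_shiftedScatter_pow_le (hn : Tendsto n atTop atTop)
    (hdn : Tendsto (fun d : ℕ => (d : ℝ) / n d) atTop (nhds 0)) (k : ℕ) :
    WithHighProbability (fun d => gaussianSample (Fin (n d)) (Fin d)) fun d x =>
      ‖shiftedScatter (wishartScale (n d) d) √(n d / d) x ^ k‖ ≤
        √(catalanMoment (2 * k) + 1) * √d := by
  refine WithHighProbability.of_le
    (tendsto_measure_trace_shiftedScatter_pow hn hdn (2 * k) one_pos) ?_
  filter_upwards [eventually_gt_atTop 0] with d hd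
  have hd' : (0 : ℝ) < d := by exact_mod_cast hd
  refine measureReal_mono (fun x hx => ?_) (measure_ne_top _ _)
  rw [Set.mem_ofPred_eq, not_le] at hx
  have h_sq := pow_lt_pow_left₀ hx (by positivity) two_ne_zero
  have h_moment : 0 ≤ catalanMoment (2 * k) := by
    rw [catalanMoment_two_mul]
    positivity
  rw [mul_pow, Real.sq_sqrt (by positivity), Real.sq_sqrt hd'.le, frobenius_norm_sq_eq_trace,
    transpose_shiftedScatter_pow, ← pow_add, ← two_mul, ← lt_inv_mul_iff₀' hd'] at h_sq
  rw [Set.mem_ofPred_eq]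
  exact (le_sub_iff_add_le'.2 h_sq.le).trans (le_abs_self _)

lemma withHighProbability_abs_trace_shiftedScatter_pow_sub_le (hn : Tendsto n atTop atTop)
    (hdn : Tendsto (fun d : ℕ => (d : ℝ) / n d) atTop (nhds 0)) (m : ℕ) {ε : ℝ} (hε : 0 < ε) :
    WithHighProbability (fun d => gaussianSample (Fin (n d)) (Fin d)) fun d x =>
      |(d : ℝ)⁻¹ * (shiftedScatter (wishartScale (n d) d) √(n d / d) x ^ m).trace -
        catalanMoment m| ≤ ε :=
  .of_le (tendsto_measure_trace_shiftedScatter_pow hn hdn m hε) (Eventually.of_forall fun _ =>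
    measureReal_mono (fun _ hx => (not_le.1 hx).le) (measure_ne_top _ _))

lemma exists_withHighProbability_frobenius_norm_shiftedScatter_pow_le (hn : Tendsto n atTop atTop)
    (hdn : Tendsto (fun d : ℕ => (d : ℝ) / n d) atTop (nhds 0)) (m : ℕ) :
    ∃ b, 0 ≤ b ∧ WithHighProbability (fun d => gaussianSample (Fin (n d)) (Fin d)) fun d x =>
      ∀ k < m, ‖shiftedScatter (wishartScale (n d) d) √(n d / d) x ^ k‖ ≤ b * √d := by
  refine ⟨∑ k ∈ Finset.range m, √(catalanMoment (2 * k) + 1), by positivity,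
    (WithHighProbability.forall_mem (Finset.range m) fun k _ =>
      withHighProbability_frobenius_norm_shiftedScatter_pow_le hn hdn k).mono
      (Eventually.of_forall fun d x h_pow k hk => ?_)⟩
  rw [← Finset.mem_range] at hk
  refine (h_pow k hk).trans (mul_le_mul_of_nonneg_right ?_ (Real.sqrt_nonneg _))
  exact Finset.single_le_sum (f := fun k => √(catalanMoment (2 * k) + 1))
    (fun _ _ => Real.sqrt_nonneg _) hk

theorem withHighProbability_abs_trace_pow_tyler_sub_le (hn : Tendsto n atTop atTop)
    (hdn : Tendsto (fun d : ℕ => (d : ℝ) / n d) atTop (nhds 0)) (m : ℕ) {ε : ℝ} (hε : 0 < ε) :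
    WithHighProbability (fun d => gaussianSample (Fin (n d)) (Fin d)) fun d x =>
      ∀ T, IsTyler x T →
        |(d : ℝ)⁻¹ * (scaledDeviation (n d) T ^ m).trace - catalanMoment m| ≤ ε := by
  obtain ⟨b, hb, h_pow⟩ :=
    exists_withHighProbability_frobenius_norm_shiftedScatter_pow_le hn hdn m
  set C : ℝ := (∑ i ∈ Finset.range m, 48 ^ i) * b
  have hC : 0 ≤ C := by positivity
  refine (h_pow.and ((withHighProbability_frobenius_norm_tyler_sub_shiftedScatter_le hn hdn
      (κ := ε / 2 / (C + 1)) (by positivity)).and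
    (withHighProbability_abs_trace_shiftedScatter_pow_sub_le hn hdn m (half_pos hε)))).mono ?_
  filter_upwards [eventually_gt_atTop 0] with d hd x ⟨h_pow, h_tyler, h_wishart⟩ T hT
  have := Fin.pos_iff_nonempty.1 hd
  obtain ⟨h_bound, h_close⟩ := h_tyler T hT
  have h_compare : |(d : ℝ)⁻¹ * (scaledDeviation (n d) T ^ m).trace -
      (d : ℝ)⁻¹ * (shiftedScatter (wishartScale (n d) d) √(n d / d) x ^ m).trace| ≤ ε / 2 := by
    have h_le := h_bound.abs_normalized_trace_pow_sub_le (hT.isHermitian_sub_one.smul (.all _))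
      (by norm_num) hb (by rwa [Fintype.card_fin]) (by rwa [Fintype.card_fin])
    rw [Fintype.card_fin] at h_le
    calc _ ≤ _ := h_le
      _ = ε / 2 * (C / (C + 1)) := by ring
      _ ≤ ε / 2 := mul_le_of_le_one_right (half_pos hε).le
          ((div_le_one (by positivity)).2 (by linarith))
  linarith [abs_sub_le ((d : ℝ)⁻¹ * (scaledDeviation (n d) T ^ m).trace)
    ((d : ℝ)⁻¹ * (shiftedScatter (wishartScale (n d) d) √(n d / d) x ^ m).trace)
    (catalanMoment m)]

end TylerGaussian

section Transfer

variable {Ω : ℕ → Type*} [∀ d, MeasurableSpace (Ω d)] {μ : ∀ d, Measure (Ω d)}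
  [∀ d, IsFiniteMeasure (μ d)] {p : ∀ d, Ω d → Prop} {Ω₀ : Type*} [MeasurableSpace Ω₀]
  {P : Measure Ω₀}

lemma WithHighProbability.tendsto_measure_of_map_eq (hp : WithHighProbability μ p)
    {Y : ∀ d, Ω₀ → Ω d} (hY : ∀ d, AEMeasurable (Y d) P) (h_law : ∀ d, P.map (Y d) = μ d)
    {s : ℕ → Set Ω₀} (hs : ∀ d, ∀ᵐ ω ∂P, p d (Y d ω) → ω ∉ s d) :
    Tendsto (fun d => P (s d)) atTop (nhds 0) := by
  have h_lim := ENNReal.tendsto_ofReal hp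
  rw [ENNReal.ofReal_zero] at h_lim
  refine tendsto_of_tendsto_of_tendsto_of_le_of_le tendsto_const_nhds h_lim (fun _ => zero_le)
    fun d => ?_
  dsimp only
  rw [ofReal_measureReal, ← h_law]
  exact (measure_mono_ae ((hs d).mono fun ω h hω hpω => h hpω hω)).trans
    (Measure.le_map_apply (hY d) _)

lemma map_eq_gaussianSample {κ ι : Type*} [Fintype κ] [Fintype ι] [IsProbabilityMeasure P]
    {X : κ → Ω₀ → ι → ℝ} (hmeas : ∀ j, Measurable (X j)) (hindep : iIndepFun X P)
    (hgauss : ∀ j, P.map (X j) = piGaussian ι) :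
    P.map (fun ω j => X j ω) = gaussianSample κ ι := by
  rw [(iIndepFun_iff_map_fun_eq_pi_map fun j => (hmeas j).aemeasurable).1 hindep]
  simp only [hgauss]

end Transfer

/-- **Moment convergence for Tyler's M-estimator:** for an i.i.d. standard normal sample
`N_d(0, I)` with `n(d) → ∞` and `d/n(d) → 0`, and `T*_d = √(n(d)/d)·(T_d − I)`, for
every fixed integer `m ≥ 1` the normalized trace `(1/d)·tr((T*_d)^m)` converges in
probability to the `m`-th moment `∫ x^m dw(x)` of the semicircle law; moreover this
moment equals the Catalan number `C_{m/2}` for even `m` and `0` for odd `m`. -/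
theorem trace_pow_tylerStar_tendsto_semicircle_moment
    {Ωs : Type*} [MeasurableSpace Ωs] (P : Measure Ωs) [IsProbabilityMeasure P]
    (n : ℕ → ℕ) (hn : Tendsto n atTop atTop)
    (hdn : Tendsto (fun d : ℕ => (d : ℝ) / (n d : ℝ)) atTop (nhds 0))
    (X : ∀ d : ℕ, Fin (n d) → Ωs → Fin d → ℝ)
    (hmeas : ∀ d j, Measurable (X d j))
    (hindep : ∀ d, iIndepFun (X d) P)
    (hgauss : ∀ d j,
      Measure.map (X d j) P = Measure.pi fun _ : Fin d => gaussianReal 0 1)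
    (T : ∀ d : ℕ, Ωs → Matrix (Fin d) (Fin d) ℝ)
    (hT : ∀ d, ∀ᵐ ω ∂P, IsTyler (fun j => X d j ω) (T d ω))
    (m : ℕ) (hm : 1 ≤ m) :
    (∀ ε > (0 : ℝ),
      Tendsto (fun d : ℕ =>
          P {ω | |(1 / (d : ℝ)) * ((Real.sqrt ((n d : ℝ) / d) • (T d ω - 1)) ^ m).trace -
                 ∫ x : ℝ, x ^ m * semicircleDensity x| > ε})
        atTop (nhds 0)) ∧
    (∫ x : ℝ, x ^ m * semicircleDensity x) =
      if Even m then (catalan (m / 2) : ℝ) else 0 := by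
  rw [integral_pow_mul_semicircleDensity]
  refine ⟨fun ε hε => ?_, rfl⟩
  refine (withHighProbability_abs_trace_pow_tyler_sub_le hn hdn m hε).tendsto_measure_of_map_eq
    (fun d => (measurable_pi_lambda _ fun j => hmeas d j).aemeasurable)
    (fun d => map_eq_gaussianSample (hmeas d) (hindep d) (hgauss d)) fun d => ?_
  filter_upwards [hT d] with ω hTω h_close
  rw [gt_iff_lt, not_lt, one_div]
  exact h_close _ hTω
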